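/- Let R be a commutative Noetherian ring of finite Krull dimension d, B = R[X_1,…,X_m,Y_1^{±1},…,Y_n^{±1}], f ∈ R[Y] a monic polynomial, and A = B[Y, f^{-1}]. Then every finitely generated projective A-module P of constant rank r can be generated by r + d elements. -/

import Mathlib

noncomputable section

section YmonoidDef
open MvPolynomial

/-- The submonoid of the polynomial ring `R[X_1,…,X_m,Y_1,…,Y_n]` generated by the
`Y`-variables; inverting it produces the Laurent polynomial ring
`B = R[X_1,…,X_m,Y_1^{±1},…,Y_n^{±1}]`. -/
def Ymonoid (R : Type*) [CommRing R] (m n : ℕ) :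
    Submonoid (MvPolynomial (Fin m ⊕ Fin n) R) :=
  Submonoid.closure (Set.range fun j : Fin n => (X (Sum.inr j) : MvPolynomial (Fin m ⊕ Fin n) R))

end YmonoidDef

section PartOne
open MvPolynomial

noncomputable section

theorem gp_step {A : Type*} [CommRing A] [IsNoetherianRing A] (x v : A) (J : Ideal A) (i0 : ℕ)
    (h0 : ∀ p : Ideal A, p.IsPrime → J ≤ p → x ∉ p → (i0 : ℕ∞) ≤ p.height) :
    ∃ c : A, ∀ p : Ideal A, p.IsPrime → J ≤ p → v + x * c ∈ p → x ∉ p →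
      ((i0 + 1 : ℕ) : ℕ∞) ≤ p.height := by
  classical
  have hfin : J.minimalPrimes.Finite := Ideal.finite_minimalPrimes_of_isNoetherianRing A J
  let S := hfin.toFinset.filter (fun p => x ∉ p)
  let S1 := S.filter (fun p => v ∈ p)
  let S2 := S.filter (fun p => v ∉ p)
  have hSmem : ∀ p, p ∈ S ↔ p ∈ J.minimalPrimes ∧ x ∉ p := by
    intro p; simp [S]
  obtain ⟨c, hc2, hc1⟩ : ∃ c : A, (∀ p ∈ S2, c ∈ p) ∧ (∀ p ∈ S1, c ∉ p) := by
    by_contra hcon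
    push Not at hcon
    have hsub : ((S2.inf id : Ideal A) : Set A) ⊆ ⋃ p ∈ (S1 : Set (Ideal A)), (p : Set A) := by
      intro c hc
      obtain ⟨p, hp, hcp⟩ := hcon c (fun p hp => (Finset.inf_le hp : S2.inf id ≤ id p) hc)
      simp only [Set.mem_iUnion]
      exact ⟨p, hp, hcp⟩
    rw [Ideal.subset_union_prime (f := fun p => p) ⊥ ⊥] at hsub
    · obtain ⟨p, hp, hle⟩ := hsub
      have hpS : p ∈ S := (Finset.mem_filter.1 hp).1
      have hpp : p.IsPrime := ((hSmem p).1 hpS).1.1.1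
      obtain ⟨q, hq, hqp⟩ := (Ideal.IsPrime.inf_le' hpp).1 hle
      have hqS : q ∈ S := (Finset.mem_filter.1 hq).1
      have : p ≤ q := ((hSmem p).1 hpS).1.2 ((hSmem q).1 hqS).1.1 hqp
      have e : p = q := le_antisymm this hqp
      subst e
      exact (Finset.mem_filter.1 hq).2 (Finset.mem_filter.1 hp).2
    · intro p hp _ _
      exact ((hSmem p).1 (Finset.mem_filter.1 hp).1).1.1.1
  refine ⟨c, fun p hp hJp hvp hxp => ?_⟩
  obtain ⟨q, hq, hqp⟩ := Ideal.exists_minimalPrimes_le hJp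
  have hxq : x ∉ q := fun h => hxp (hqp h)
  have hqS : q ∈ S := (hSmem q).2 ⟨hq, hxq⟩
  have hqprime : q.IsPrime := hq.1.1
  have hne : v + x * c ∉ q := by
    intro hmem
    by_cases hv : v ∈ q
    · have h1 : c ∉ q := hc1 q (Finset.mem_filter.2 ⟨hqS, hv⟩)
      have h2 : x * c ∈ q := by simpa using q.sub_mem hmem hv
      rcases hqprime.mem_or_mem h2 with h | h
      · exact hxq h
      · exact h1 h
    · have h1 : c ∈ q := hc2 q (Finset.mem_filter.2 ⟨hqS, hv⟩)
      exact hv (by simpa using q.sub_mem hmem (q.mul_mem_left x h1))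
  have hlt : q < p := lt_of_le_of_ne hqp (fun e => hne (e ▸ hvp))
  have h1 := h0 q hqprime hq.1.2 hxq
  have h2 : q.height + 1 ≤ p.height := Ideal.height_add_one_le_of_lt_of_isPrime hlt
  calc ((i0 + 1 : ℕ) : ℕ∞) = (i0 : ℕ∞) + 1 := by push_cast; rfl
    _ ≤ q.height + 1 := by gcongr
    _ ≤ _ := h2

theorem gp {A : Type*} [CommRing A] [IsNoetherianRing A] (x : A) (i0 : ℕ) (k : ℕ) :
    ∀ (v : Fin k → A) (J : Ideal A),
    (∀ p : Ideal A, p.IsPrime → J ≤ p → x ∉ p → (i0 : ℕ∞) ≤ p.height) →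
    ∃ c : Fin k → A, ∀ p : Ideal A, p.IsPrime → J ≤ p → (∀ i, v i + x * c i ∈ p) → x ∉ p →
      ((i0 + k : ℕ) : ℕ∞) ≤ p.height := by
  induction k with
  | zero =>
    intro v J h
    exact ⟨Fin.elim0, fun p hp hJ _ hx => by simpa using h p hp hJ hx⟩
  | succ k ih =>
    intro v J h
    obtain ⟨c, hc⟩ := ih (fun i => v i.castSucc) J h
    obtain ⟨c', hc'⟩ := gp_step x (v (Fin.last k))
      (J ⊔ Ideal.span (Set.range fun i => v i.castSucc + x * c i)) (i0 + k) (by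
        intro p hp hJ hx
        refine hc p hp (le_sup_left.trans hJ) (fun i => ?_) hx
        exact hJ (Ideal.mem_sup_right (Ideal.subset_span ⟨i, rfl⟩)))
    refine ⟨Fin.snoc c c', fun p hp hJ hv hx => ?_⟩
    refine hc' p hp (sup_le hJ ?_) ?_ hx
    · rw [Ideal.span_le]
      rintro _ ⟨i, rfl⟩
      simpa using hv i.castSucc
    · simpa using hv (Fin.last k)

attribute [local instance] Polynomial.algebra Polynomial.isLocalization in
theorem height_le_succ_under {R : Type*} [CommRing R] [IsNoetherianRing R]
    (P : Ideal (Polynomial R)) [P.IsPrime] : P.height ≤ (P.under R).height + 1 := by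
  set p := P.under R with hp
  have : p.IsPrime := by rw [hp]; infer_instance
  have hlo : P.LiesOver p := ⟨rfl⟩
  let Rₚ := Localization.AtPrime p
  set p' : Ideal Rₚ := p.map (algebraMap R Rₚ) with p'_def
  have : p'.IsMaximal := by
    rw [p'_def, Localization.AtPrime.map_eq_maximalIdeal]
    exact IsLocalRing.maximalIdeal.isMaximal Rₚ
  let P' : Ideal (Polynomial Rₚ) := P.map (algebraMap (Polynomial R) (Polynomial Rₚ))
  have disj : Disjoint (p.primeCompl.map Polynomial.C : Set (Polynomial R)) P := by
    refine Set.disjoint_left.mpr fun a ⟨b, hb⟩ ha ↦ hb.1 ?_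
    rwa [SetLike.mem_coe, Ideal.LiesOver.over (P := P) (p := p), Ideal.mem_comap,
      Polynomial.algebraMap_eq, hb.2]
  have hP'prime : P'.IsPrime :=
    IsLocalization.isPrime_of_isPrime_disjoint (p.primeCompl.map Polynomial.C) _ P ‹_› disj
  obtain ⟨M', hM', hle⟩ := Ideal.exists_le_maximal P' hP'prime.ne_top
  have hlo' : M'.LiesOver p' := by
    refine ⟨?_⟩
    refine Ideal.IsMaximal.eq_of_le inferInstance ?_ ?_
    · exact Ideal.IsPrime.ne_top inferInstance
    · rw [p'_def, Ideal.map_le_iff_le_comap]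
      intro r hr
      have h1 : Polynomial.C r ∈ P := by
        have : r ∈ P.under R := hr
        simpa [Ideal.under_def] using this
      have h2 := hle (Ideal.mem_map_of_mem (algebraMap (Polynomial R) (Polynomial Rₚ)) h1)
      simp only [Ideal.mem_comap, Ideal.under_def]
      simpa [Polynomial.algebraMap_def] using h2
  have eq1 : p.height = p'.height := by
    rw [IsLocalization.height_map_of_disjoint p.primeCompl]
    exact Disjoint.symm <| Set.disjoint_left.mpr fun _ a b ↦ b a
  have eq2 : P.height = P'.height := by
    rw [IsLocalization.height_map_of_disjoint (Submonoid.map Polynomial.C <| p.primeCompl) _ disj]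
  rw [eq1, eq2, ← Polynomial.height_eq_height_add_one p' M']
  exact Ideal.height_mono hle

theorem height_of_le_map_under {R : Type*} [CommRing R] [IsNoetherianRing R]
    (P : Ideal (Polynomial R)) [P.IsPrime] (h : P ≤ (P.under R).map Polynomial.C) :
    P.height ≤ (P.under R).height := by
  set p := P.under R with hp
  have : p.IsPrime := by rw [hp]; infer_instance
  have hlo : P.LiesOver p := ⟨rfl⟩
  rw [Ideal.height_eq_height_add_of_liesOver_of_hasGoingDown p P]
  have : P.map (Ideal.Quotient.mk (p.map (algebraMap R (Polynomial R)))) = ⊥ := by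
    rw [Ideal.map_eq_bot_iff_le_ker, Ideal.mk_ker]
    exact h
  have hpr : (p.map (algebraMap R (Polynomial R))).IsPrime :=
    Ideal.isPrime_map_C_of_isPrime (P := p)
  rw [this, Ideal.height_bot]
  simp

/-- one step of the construction of the multiplicative set of generalized monic polynomials -/
def SigStep {Q : Type*} [CommRing Q] (S : Submonoid Q) : Submonoid (Polynomial Q) where
  carrier := {h | ∃ M : ℕ, h.natDegree ≤ M ∧ h.coeff M ∈ S}
  one_mem' := ⟨0, by simp, by simp [S.one_mem]⟩
  mul_mem' := by
    rintro a b ⟨M, hM, hM'⟩ ⟨N, hN, hN'⟩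
    refine ⟨M + N, (Polynomial.natDegree_mul_le).trans (by omega), ?_⟩
    rw [Polynomial.coeff_mul_add_eq_of_natDegree_le hM hN]
    exact S.mul_mem hM' hN'

theorem sigStep_height {Q : Type*} [CommRing Q] [IsNoetherianRing Q] (S : Submonoid Q) (d : ℕ)
    (h : ∀ p : Ideal Q, p.IsPrime → Disjoint (S : Set Q) p → p.height ≤ d)
    (P : Ideal (Polynomial Q)) (hP : P.IsPrime)
    (hd : Disjoint (SigStep S : Set (Polynomial Q)) P) : P.height ≤ d := by
  classical
  set p := P.under Q with hp
  have hpp : p.IsPrime := by rw [hp]; infer_instance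
  have hmem : ∀ r, r ∈ p ↔ Polynomial.C r ∈ P := by
    intro r; simp [hp, Ideal.under_def]
  have hdp : Disjoint (S : Set Q) p := by
    refine Set.disjoint_left.2 fun a ha hap => ?_
    exact (Set.disjoint_left.1 hd : ∀ ⦃a⦄, _) (a := Polynomial.C a) ⟨0, by simp, by simpa using ha⟩
      ((hmem a).1 hap)
  have h1 := h p hpp hdp
  by_cases hle : P ≤ p.map Polynomial.C
  · exact (height_of_le_map_under P hle).trans h1
  · have h2 := height_le_succ_under P
    rw [← hp] at h2
    -- leading coefficients
    obtain ⟨g, hgP, hg⟩ : ∃ g ∈ P, g.leadingCoeff ∉ p := by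
      by_contra hcon
      push Not at hcon
      apply hle
      have key : ∀ n : ℕ, ∀ g ∈ P, g.natDegree ≤ n → g ∈ p.map Polynomial.C := by
        intro n
        induction n with
        | zero =>
          intro g hg hn
          have := hcon g hg
          rw [Polynomial.eq_C_of_natDegree_le_zero hn] at this ⊢
          rw [Polynomial.leadingCoeff_C] at this
          exact Ideal.mem_map_of_mem _ this
        | succ n ih =>
          intro g hg hn
          have h3 := hcon g hg
          have h4 : Polynomial.C g.leadingCoeff * Polynomial.X ^ g.natDegree
              ∈ p.map Polynomial.C := Ideal.mul_mem_right _ _ (Ideal.mem_map_of_mem _ h3)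
          have h5 : Polynomial.C g.leadingCoeff * Polynomial.X ^ g.natDegree ∈ P :=
            Ideal.mul_mem_right _ _ ((hmem _).1 h3)
          have h6 : g.eraseLead ∈ p.map Polynomial.C := by
            apply ih
            · rw [← Polynomial.self_sub_monomial_natDegree_leadingCoeff]
              rw [← Polynomial.C_mul_X_pow_eq_monomial]
              exact P.sub_mem hg h5
            · have := Polynomial.eraseLead_natDegree_le g
              omega
          rw [← Polynomial.eraseLead_add_C_mul_X_pow g]
          exact Ideal.add_mem _ h6 h4
      intro g hg
      exact key _ g hg le_rfl
    have hLd : Disjoint (S : Set Q) (P.leadingCoeff : Set Q) := by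
      refine Set.disjoint_left.2 fun a ha haL => ?_
      obtain ⟨g, hg, hga⟩ := (Ideal.mem_leadingCoeff P a).1 haL
      exact (Set.disjoint_left.1 hd : ∀ ⦃a⦄, _) (a := g) ⟨g.natDegree, le_rfl, by
        rw [Polynomial.coeff_natDegree, hga]; exact ha⟩ hg
    obtain ⟨q, hq, hLq, hqd⟩ := Ideal.exists_le_prime_disjoint P.leadingCoeff S hLd.symm
    have hpq : p < q := by
      refine lt_of_le_of_ne ?_ ?_
      · intro r hr
        exact hLq ((Ideal.mem_leadingCoeff P r).2 ⟨Polynomial.C r, (hmem r).1 hr, by simp⟩)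
      · intro e
        apply hg
        rw [e]
        exact hLq ((Ideal.mem_leadingCoeff P _).2 ⟨g, hgP, rfl⟩)
    have h3 := Ideal.height_add_one_le_of_lt_of_isPrime hpq
    exact h2.trans (h3.trans (h q hq hqd.symm))

/-- generalized monic polynomials -/
def Sig (R : Type*) [CommRing R] : (k : ℕ) → Submonoid (MvPolynomial (Fin k) R)
  | 0 => ⊥
  | k + 1 => (SigStep (Sig R k)).comap (finSuccEquiv R k).toRingEquiv.toMonoidHom

theorem mem_Sig_succ {R : Type*} [CommRing R] {k : ℕ} {h : MvPolynomial (Fin (k+1)) R} :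
    h ∈ Sig R (k+1) ↔ ∃ M : ℕ, (finSuccEquiv R k h).natDegree ≤ M ∧
      (finSuccEquiv R k h).coeff M ∈ Sig R k := Iff.rfl

theorem sig_height {R : Type*} [CommRing R] [IsNoetherianRing R] (d : ℕ)
    (hR : ringKrullDim R ≤ d) (k : ℕ) : ∀ p : Ideal (MvPolynomial (Fin k) R), p.IsPrime →
      Disjoint (Sig R k : Set (MvPolynomial (Fin k) R)) p → p.height ≤ d := by
  induction k with
  | zero =>
    intro p hp _
    have h1 : (p.height : WithBot ℕ∞) ≤ _ := Ideal.height_le_ringKrullDim_of_isPrime (I := p)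
    rw [MvPolynomial.ringKrullDim_of_isNoetherianRing] at h1
    have h2 : (p.height : WithBot ℕ∞) ≤ (d : WithBot ℕ∞) := by
      refine h1.trans ?_
      simpa using hR
    exact_mod_cast h2
  | succ k ih =>
    intro p hp hd
    let e := (finSuccEquiv R k).toRingEquiv
    have := sigStep_height (Sig R k) d ih (p.comap e.symm) (hp.comap _) (by
      refine Set.disjoint_left.2 fun a ha hap => ?_
      refine (Set.disjoint_left.1 hd : ∀ ⦃a⦄, _) (a := e.symm a) ?_ hap
      show e (e.symm a) ∈ SigStep (Sig R k)
      rw [RingEquiv.apply_symm_apply]; exact ha)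
    rwa [RingEquiv.height_comap] at this

theorem height_le_comap_of_isIntegral {Q A : Type*} [CommRing Q] [CommRing A] (i : Q →+* A)
    (hi : i.IsIntegral) (P : Ideal A) [P.IsPrime] : P.height ≤ (P.comap i).height := by
  let _ := i.toAlgebra
  have hinteg : Algebra.IsIntegral Q A := ⟨hi⟩
  have h1 := PrimeSpectrum.height_eq_orderHeight (⟨P, ‹_›⟩ : PrimeSpectrum A)
  have h2 := PrimeSpectrum.height_eq_orderHeight
    (PrimeSpectrum.comap i ⟨P, ‹_›⟩ : PrimeSpectrum Q)
  simp only [PrimeSpectrum.comap_asIdeal] at h1 h2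
  rw [h1, h2]
  apply Order.height_le_height_apply_of_strictMono
  intro x y hxy
  have := x.isPrime
  exact Ideal.IsIntegral.comap_lt_comap (R := Q) hxy

/-- An ideal all whose primes have height bigger than `d` meets the generalized monics. -/
theorem exists_sig_mem {R A : Type*} [CommRing R] [IsNoetherianRing R] [CommRing A] (d : ℕ)
    (hR : ringKrullDim R ≤ d) (k : ℕ) (i : MvPolynomial (Fin k) R →+* A) (hi : i.IsIntegral)
    (J : Ideal A)
    (hJ : ∀ p : Ideal A, p.IsPrime → J ≤ p → ((d + 1 : ℕ) : ℕ∞) ≤ p.height) :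
    ∃ h ∈ Sig R k, i h ∈ J := by
  by_contra hcon
  push Not at hcon
  obtain ⟨q, hq, hJq, hqd⟩ := Ideal.exists_le_prime_disjoint J ((Sig R k).map i.toMonoidHom) (by
    refine Set.disjoint_left.2 ?_
    rintro a haJ ⟨h, hh, rfl⟩
    exact hcon h hh haJ)
  have h1 := hJ q hq hJq
  have h2 := height_le_comap_of_isIntegral i hi q
  have h3 := sig_height d hR k (q.comap i) (hq.comap i) (by
    refine Set.disjoint_left.2 fun a ha haq => ?_
    exact Set.disjoint_left.1 hqd haq ⟨a, ha, rfl⟩)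
  have h4 : ((d + 1 : ℕ) : ℕ∞) ≤ (d : ℕ∞) := h1.trans (h2.trans h3)
  rw [Nat.cast_le] at h4
  omega

end
end PartOne

noncomputable section

/-- two column vectors in the same orbit of the general linear group -/
def REq {ι S : Type*} [Fintype ι] [DecidableEq ι] [CommRing S] (v w : ι → S) : Prop :=
  ∃ G : Matrix ι ι S, IsUnit G ∧ G.mulVec v = w

section REq
variable {ι S T : Type*} [Fintype ι] [DecidableEq ι] [CommRing S] [CommRing T]

theorem REq.refl (v : ι → S) : REq v v := ⟨1, isUnit_one, by simp⟩

theorem REq.trans {u v w : ι → S} (h : REq u v) (h' : REq v w) : REq u w := by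
  obtain ⟨G, hG, rfl⟩ := h
  obtain ⟨H, hH, rfl⟩ := h'
  exact ⟨H * G, hH.mul hG, by simp [Matrix.mulVec_mulVec]⟩

theorem REq.symm {u v : ι → S} (h : REq u v) : REq v u := by
  obtain ⟨G, hG, rfl⟩ := h
  obtain ⟨U, rfl⟩ := hG
  exact ⟨(↑U⁻¹ : Matrix ι ι S), Units.isUnit _, by simp [Matrix.mulVec_mulVec]⟩

theorem REq.map (φ : S →+* T) {u v : ι → S} (h : REq u v) :
    REq (fun i => φ (u i)) (fun i => φ (v i)) := by
  obtain ⟨G, hG, rfl⟩ := h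
  refine ⟨φ.mapMatrix G, hG.map _, ?_⟩
  ext i
  rw [RingHom.map_mulVec]
  rfl

theorem REq.of_linearEquiv (e : (ι → S) ≃ₗ[S] (ι → S)) (v : ι → S) : REq v (e v) := by
  refine ⟨LinearMap.toMatrix' e.toLinearMap, ?_, ?_⟩
  · refine IsUnit.of_mul_eq_one (LinearMap.toMatrix' e.symm.toLinearMap) ?_
    rw [← LinearMap.toMatrix'_comp]
    simp
  · rw [LinearMap.toMatrix'_mulVec]
    rfl

theorem REq.pair (i j : ι) (hij : i ≠ j) (a b c d : S) (hdet : a * d - b * c = 1) (p q : ι → S)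
    (v w : ι → S) (hi : w i = a * v i + b * v j) (hj : w j = c * v i + d * v j)
    (hk : ∀ k, k ≠ i → k ≠ j → w k = v k + p k * v i + q k * v j) : REq v w := by
  let F : (ι → S) →ₗ[S] (ι → S) :=
    { toFun := fun v k => if k = i then a * v i + b * v j else if k = j then c * v i + d * v j
        else v k + p k * v i + q k * v j
      map_add' := by
        intro x y; ext k; simp only [Pi.add_apply]; split_ifs <;> ring
      map_smul' := by
        intro r x; ext k; simp only [Pi.smul_apply, smul_eq_mul, RingHom.id_apply]
        split_ifs <;> ring }
  let G : (ι → S) →ₗ[S] (ι → S) :=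
    { toFun := fun v k => if k = i then d * v i - b * v j else if k = j then - c * v i + a * v j
        else v k - p k * (d * v i - b * v j) - q k * (- c * v i + a * v j)
      map_add' := by
        intro x y; ext k; simp only [Pi.add_apply]; split_ifs <;> ring
      map_smul' := by
        intro r x; ext k; simp only [Pi.smul_apply, smul_eq_mul, RingHom.id_apply]
        split_ifs <;> ring }
  have hji := hij.symm
  let e : (ι → S) ≃ₗ[S] (ι → S) := LinearEquiv.ofLinearMap F G
    (by
      ext1 v0
      apply LinearMap.ext_ring
      ext k
      simp only [F, G, LinearMap.coe_comp, LinearMap.coe_mk, AddHom.coe_mk, Function.comp_apply,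
        if_true, hji, if_false, LinearMap.id_coe, id_eq]
      split_ifs with h1 h2
      · subst h1; linear_combination ((LinearMap.single S (fun _ => S) v0) 1 k) * hdet
      · subst h2; linear_combination ((LinearMap.single S (fun _ => S) v0) 1 k) * hdet
      · ring)
    (by
      ext1 v0
      apply LinearMap.ext_ring
      ext k
      simp only [F, G, LinearMap.coe_comp, LinearMap.coe_mk, AddHom.coe_mk, Function.comp_apply,
        if_true, hji, if_false, LinearMap.id_coe, id_eq]
      split_ifs with h1 h2
      · subst h1; linear_combination ((LinearMap.single S (fun _ => S) v0) 1 k) * hdet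
      · subst h2; linear_combination ((LinearMap.single S (fun _ => S) v0) 1 k) * hdet
      · linear_combination (- p k * (LinearMap.single S (fun _ => S) v0) 1 i
          - q k * (LinearMap.single S (fun _ => S) v0) 1 j) * hdet)
  have : e v = w := by
    ext k
    show (if k = i then a * v i + b * v j else if k = j then c * v i + d * v j
        else v k + p k * v i + q k * v j) = w k
    split_ifs with h1 h2
    · rw [h1, hi]
    · rw [h2, hj]
    · rw [hk k h1 h2]
  rw [← this]
  exact REq.of_linearEquiv e v

/-- add multiples of the entry `i` to the other entries -/
theorem REq.add_mul_left (i : ι) (p : ι → S) (v w : ι → S) (hi : w i = v i)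
    (hk : ∀ k, k ≠ i → w k = v k + p k * v i) : REq v w := by
  by_cases h : ∃ j, i ≠ j
  · obtain ⟨j, hij⟩ := h
    refine REq.pair i j hij 1 0 (p j) 1 (by ring) p 0 v w (by rw [hi]; ring)
      (by rw [hk j hij.symm]; ring) ?_
    intro k hki _
    rw [hk k hki]; simp
  · push Not at h
    have : v = w := by
      ext k; rw [← h k, hi]
    rw [this]; exact REq.refl _

/-- change the entry `j` by a combination of the other entries -/
theorem REq.add_sum (j : ι) (c : ι → S) (hc : c j = 0) (v w : ι → S)
    (hj : w j = v j + ∑ k, c k * v k) (hk : ∀ k, k ≠ j → w k = v k) : REq v w := by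
  let F : S → (ι → S) →ₗ[S] (ι → S) := fun ε =>
    LinearMap.id + (LinearMap.single S (fun _ => S) j).comp (ε • Fintype.linearCombination S c)
  have hF : ∀ ε u k, F ε u k = u k + (if k = j then ε * ∑ k, c k * u k else 0) := by
    intro ε u k
    simp only [F, LinearMap.add_apply, LinearMap.id_apply, LinearMap.comp_apply, Pi.add_apply,
      LinearMap.smul_apply, Fintype.linearCombination_apply, LinearMap.coe_single, smul_eq_mul]
    rw [Pi.single_apply]
    simp [mul_comm]
  have hsum : ∀ ε u, ∑ k, c k * F ε u k = ∑ k, c k * u k := by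
    intro ε u
    refine Finset.sum_congr rfl fun k _ => ?_
    rw [hF]
    split_ifs with h
    · subst h; rw [hc]; ring
    · ring
  have hcomp : ∀ ε ε' u, ε + ε' = 0 → F ε (F ε' u) = u := by
    intro ε ε' u h
    ext k
    rw [hF, hF, hsum]
    split_ifs
    · linear_combination (∑ k, c k * u k) * h
    · ring
  let e : (ι → S) ≃ₗ[S] (ι → S) := LinearEquiv.ofLinearMap (F 1) (F (-1))
    (LinearMap.ext fun u => hcomp _ _ u (by ring)) (LinearMap.ext fun u => hcomp _ _ u (by ring))
  have : e v = w := by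
    ext k
    show F 1 v k = w k
    rw [hF]
    split_ifs with h
    · rw [h, hj]; ring
    · rw [hk k h]; ring
  rw [← this]
  exact REq.of_linearEquiv e v

/-- scaling the entries by units -/
theorem REq.units_mul (u : ι → Sˣ) (v w : ι → S) (h : ∀ i, w i = u i * v i) : REq v w := by
  refine ⟨Matrix.diagonal fun i => (u i : S), ?_, ?_⟩
  · refine IsUnit.of_mul_eq_one (Matrix.diagonal fun i => ((u i)⁻¹ : Sˣ).val) ?_
    simp
  · ext i; simp [Matrix.mulVec_diagonal, h]

end REq

section HL
variable {ι D S : Type*} [Fintype ι] [DecidableEq ι] [CommRing D] [CommRing S] [Algebra D S]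

open Polynomial in
theorem taylorOne (p : D[X]) : ∃ P1 : D[X][X], aeval (C X + X : D[X][X]) p = C p + X * P1 := by
  have h : (X : D[X][X]) ∣ aeval (C X + X : D[X][X]) p - C p := by
    rw [X_dvd_iff, coeff_sub, coeff_C_zero, coeff_zero_eq_aeval_zero]
    have : aeval (0 : D[X]) (aeval (C X + X : D[X][X]) p) = p := by
      have h2 : ∀ q : D[X], ((aeval (0 : D[X]) : D[X][X] →ₐ[D[X]] D[X]).restrictScalars D)
          (aeval (C X + X : D[X][X]) q) = q := by
        intro q
        rw [← Polynomial.aeval_algHom_apply]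
        simp
      exact h2 p
    rw [this, sub_self]
  obtain ⟨P1, hP1⟩ := h
  exact ⟨P1, by rw [← hP1]; ring⟩

open Polynomial in
theorem sl2_taylor (f1 f2 α β : D[X]) (b : D) (hb : α * f1 + β * f2 = C b) (x z : S) :
    ∃ a' b' c' d' : S, a' * d' - b' * c' = 1 ∧
      aeval (x + algebraMap D S b * z) f1 = a' * aeval x f1 + b' * aeval x f2 ∧
      aeval (x + algebraMap D S b * z) f2 = c' * aeval x f1 + d' * aeval x f2 := by
  obtain ⟨F1, hF1⟩ := taylorOne f1
  obtain ⟨F2, hF2⟩ := taylorOne f2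
  obtain ⟨A1, hA1⟩ := taylorOne α
  obtain ⟨B1, hB1⟩ := taylorOne β
  -- generic identity
  have hgen : (C α * F1 + A1 * C f1 + C β * F2 + B1 * C f2) + X * (A1 * F1 + B1 * F2)
      = (0 : D[X][X]) := by
    have h1 := congrArg (aeval (C X + X : D[X][X])) hb
    have h2 : (C α * C f1 + C β * C f2 : D[X][X]) = C (C b) := by
      rw [← C_mul, ← C_mul, ← C_add, hb]
    rw [map_add, map_mul, map_mul, hF1, hF2, hA1, hB1, aeval_C] at h1
    have h3 : algebraMap D D[X][X] b = C (C b) := rfl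
    rw [h3] at h1
    have h4 : X * ((C α * F1 + A1 * C f1 + C β * F2 + B1 * C f2) + X * (A1 * F1 + B1 * F2))
      = (X : D[X][X]) * 0 := by
      linear_combination h1 - h2
    exact (isRegular_X (R := D[X])).left h4
  -- specialise
  let φ0 : D[X][X] →+* S := Polynomial.eval₂RingHom (aeval x : D[X] →ₐ[D] S).toRingHom
    (algebraMap D S b * z)
  let φ : D[X][X] →ₐ[D] S := { φ0 with
    commutes' := fun r => by
      show φ0 (C (C r)) = _
      simp [φ0] }
  have hφC : ∀ p : D[X], φ (C p) = aeval x p := by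
    intro p; show φ0 _ = _; simp [φ0]
  have hφX : φ X = algebraMap D S b * z := by show φ0 _ = _; simp [φ0]
  have hφe : ∀ p : D[X], φ (aeval (C X + X : D[X][X]) p) = aeval (x + algebraMap D S b * z) p := by
    intro p
    rw [← Polynomial.aeval_algHom_apply, map_add, hφC, hφX, aeval_X]
  have e1 := congrArg φ hF1
  have e2 := congrArg φ hF2
  have e3 := congrArg φ hgen
  have e4 : aeval x α * aeval x f1 + aeval x β * aeval x f2 = algebraMap D S b := by
    rw [← map_mul, ← map_mul, ← map_add, hb, aeval_C]
  rw [hφe] at e1 e2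
  simp only [map_add, map_mul, hφC, hφX, map_zero] at e1 e2 e3
  set bb := algebraMap D S b
  set f1' := aeval x f1
  set f2' := aeval x f2
  set α' := aeval x α
  set β' := aeval x β
  refine ⟨1 + z * (φ F1 * α' + φ B1 * f2'), z * (φ F1 * β' - φ B1 * f1'),
    z * (φ F2 * α' - φ A1 * f2'), 1 + z * (φ F2 * β' + φ A1 * f1'), ?_, ?_, ?_⟩
  · linear_combination z * e3 + z * z * (φ A1 * φ F1 + φ B1 * φ F2) * e4
  · rw [e1, ← e4]; ring
  · rw [e2, ← e4]; ring

open Polynomial in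
theorem REq.comp_of_mem (v : ι → D[X]) (i j : ι) (hij : i ≠ j) (α β : D[X]) (b : D)
    (hb : α * v i + β * v j = C b) (x z : S) :
    REq (fun k => aeval x (v k)) (fun k => aeval (x + algebraMap D S b * z) (v k)) := by
  obtain ⟨a', b', c', d', hdet, h1, h2⟩ := sl2_taylor (v i) (v j) α β b hb x z
  have hk : ∀ k, ∃ y : S, aeval (x + algebraMap D S b * z) (v k)
      = aeval x (v k) + algebraMap D S b * y := by
    intro k
    have h := Polynomial.sub_dvd_eval_sub (x + algebraMap D S b * z) x
      ((v k).map (algebraMap D S))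
    obtain ⟨y, hy⟩ := h
    refine ⟨z * y, ?_⟩
    rw [eval_map_algebraMap, eval_map_algebraMap] at hy
    linear_combination hy
  choose y hy using hk
  have e4 : aeval x α * aeval x (v i) + aeval x β * aeval x (v j) = algebraMap D S b := by
    rw [← map_mul, ← map_mul, ← map_add, hb, aeval_C]
  refine REq.pair i j hij a' b' c' d' hdet (fun k => y k * aeval x α) (fun k => y k * aeval x β)
    _ _ h1 h2 ?_
  intro k _ _
  rw [hy k, ← e4]
  ring

open Polynomial in
theorem exists_coprime_add_mul {K : Type*} [Field K] (f b c : K[X]) (hf : f ≠ 0)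
    (h : ∃ x y z, x * f + y * b + z * c = 1) : ∃ g, IsCoprime f (b + g * c) := by
  classical
  obtain ⟨x, y, z, hxyz⟩ := h
  let F := (UniqueFactorizationMonoid.normalizedFactors f).filter (fun p => ¬ p ∣ b)
  refine ⟨F.prod, ?_⟩
  refine isCoprime_of_prime_dvd (fun h => hf h.1) ?_
  intro p hp hpf hpb
  by_cases hb : p ∣ b
  · have h1 : p ∣ F.prod * c := (dvd_add_right hb).1 hpb
    rcases hp.dvd_or_dvd h1 with h2 | h2
    · obtain ⟨q, hq, hpq⟩ := hp.exists_mem_multiset_dvd h2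
      have hq' := (Multiset.mem_filter.1 hq)
      have hqi := UniqueFactorizationMonoid.irreducible_of_normalized_factor q hq'.1
      have : Associated p q := hp.irreducible.associated_of_dvd hqi hpq
      exact hq'.2 (this.symm.dvd.trans hb)
    · apply hp.not_isUnit
      apply isUnit_of_dvd_one
      rw [← hxyz]
      exact dvd_add (dvd_add (hpf.mul_left _) (hb.mul_left _)) (h2.mul_left _)
  · obtain ⟨q, hq, hpq⟩ :=
      UniqueFactorizationMonoid.exists_mem_normalizedFactors_of_dvd hf hp.irreducible hpf
    have hqF : q ∈ F := Multiset.mem_filter.2 ⟨hq, fun h => hb (hpq.dvd.trans h)⟩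
    have : p ∣ F.prod := hpq.dvd.trans (Multiset.dvd_prod hqF)
    exact hb ((dvd_add_left (this.mul_right c)).1 hpb)

open Polynomial in
theorem horrocks [Nontrivial ι] (v : ι → D[X]) (M : ℕ) (hdeg : ∀ i, (v i).natDegree ≤ M)
    (hlead : ∃ c : ι → D, ∑ i, c i * (v i).coeff M = 1) (hun : ∃ w : ι → D[X], ∑ i, w i * v i = 1)
    (x z : S) : REq (fun k => aeval x (v k)) (fun k => aeval (x + z) (v k)) := by
  classical
  let I : Ideal D :=
    { carrier := {b | ∀ x z : S, REq (fun k => aeval x (v k))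
        (fun k => aeval (x + algebraMap D S b * z) (v k))}
      add_mem' := by
        intro a b ha hb x z
        have := (ha x z).trans (hb (x + algebraMap D S a * z) z)
        rw [map_add, add_mul, ← add_assoc]
        exact this
      zero_mem' := by
        intro x z
        simp only [map_zero, zero_mul, add_zero]
        exact REq.refl _
      smul_mem' := by
        intro c b hb x z
        have := hb x (algebraMap D S c * z)
        rw [smul_eq_mul, map_mul, mul_comm (algebraMap D S c), mul_assoc]
        exact this }
  have hI : I = ⊤ := by
    by_contra hne
    obtain ⟨m, hm, hIm⟩ := Ideal.exists_le_maximal I hne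
    obtain ⟨c, hc⟩ := hlead
    obtain ⟨w, hw⟩ := hun
    obtain ⟨i, hi⟩ : ∃ i, (v i).coeff M ∉ m := by
      by_contra hcon
      push Not at hcon
      apply hm.ne_top
      rw [Ideal.eq_top_iff_one, ← hc]
      exact Ideal.sum_mem _ fun i _ => m.mul_mem_left _ (hcon i)
    obtain ⟨j, hji⟩ := exists_ne i
    letI : Field (D ⧸ m) := Ideal.Quotient.field m
    let π : D →+* D ⧸ m := Ideal.Quotient.mk m
    have hcoef : ((v i).map π).coeff M ≠ 0 := by
      rw [coeff_map]
      intro h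
      exact hi (Ideal.Quotient.eq_zero_iff_mem.1 h)
    have hfne : (v i).map π ≠ 0 := by
      intro h; rw [h] at hcoef; simp at hcoef
    let s : Finset ι := (Finset.univ.erase i).erase j
    have hsplit : ∀ g : ι → D[X], ∑ k, g k = g i + (g j + ∑ k ∈ s, g k) := by
      intro g
      rw [← Finset.add_sum_erase _ _ (Finset.mem_univ i),
        ← Finset.add_sum_erase _ _ (Finset.mem_erase.2 ⟨hji, Finset.mem_univ j⟩)]
    obtain ⟨g, hg⟩ := exists_coprime_add_mul ((v i).map π) ((v j).map π)
      ((∑ k ∈ s, w k * v k).map π) hfne ⟨(w i).map π, (w j).map π, 1, by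
        have := congrArg (Polynomial.map π) hw
        rw [hsplit] at this
        simp only [Polynomial.map_add, Polynomial.map_mul, Polynomial.map_one] at this
        linear_combination this⟩
    obtain ⟨G, rfl⟩ := Polynomial.map_surjective π Ideal.Quotient.mk_surjective g
    let v' : ι → D[X] := Function.update v j (v j + G * ∑ k ∈ s, w k * v k)
    have hv'i : v' i = v i := Function.update_of_ne hji.symm _ _
    have hv'j : v' j = v j + G * ∑ k ∈ s, w k * v k := Function.update_self _ _ _
    have hvv' : REq v v' := by
      refine REq.add_sum j (fun k => if k ∈ s then G * w k else 0) (by simp [s]) _ _ ?_ ?_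
      · rw [hv'j]
        simp only [ite_mul, zero_mul, Finset.sum_ite_mem, Finset.univ_inter, Finset.mul_sum,
          mul_assoc]
      · intro k hk
        exact Function.update_of_ne hk _ _
    let N := (v' j).natDegree
    obtain ⟨p, q, -, -, hpq⟩ := exists_mul_add_mul_eq_C_resultant (m := M) (n := N + 1) (v i) (v' j) (hdeg i)
      (Nat.le_succ _) (Or.inr (Nat.succ_ne_zero _))
    set b := resultant (v i) (v' j) M (N + 1) with hb
    have hbI : b ∈ I := by
      intro x z
      have h1 : ∀ x : S, REq (fun k => aeval x (v k)) (fun k => aeval x (v' k)) := fun x =>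
        hvv'.map (aeval x : D[X] →ₐ[D] S).toRingHom
      refine (h1 x).trans (REq.trans ?_ (h1 _).symm)
      exact REq.comp_of_mem v' i j hji.symm p q b (by rw [hv'i, ← hpq]; ring) x z
    have hbm : b ∉ m := by
      rw [← Ideal.Quotient.eq_zero_iff_mem]
      show π b ≠ 0
      rw [hb, ← resultant_map_map]
      have hdM : ((v i).map π).natDegree = M :=
        le_antisymm (natDegree_map_le.trans (hdeg i)) (le_natDegree_of_ne_zero hcoef)
      have hle : ((v' j).map π).natDegree ≤ N + 1 := natDegree_map_le.trans (Nat.le_succ _)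
      obtain ⟨k, hk⟩ := Nat.exists_eq_add_of_le hle
      rw [hk, resultant_add_right_deg _ _ _ _ _ le_rfl]
      refine mul_ne_zero (pow_ne_zero _ hcoef) ?_
      have := resultant_ne_zero ((v i).map π) ((v' j).map π) (by
        rw [hv'j, Polynomial.map_add, Polynomial.map_mul]; exact hg)
      rwa [hdM] at this
    exact hbm (hIm hbI)
  have h1 : (1 : D) ∈ I := by rw [hI]; trivial
  have := h1 x z
  simpa using this

open Polynomial in
/-- unimodular rows over a polynomial ring with a monic entry -/
theorem row_monic [Nontrivial ι] (v : ι → D[X]) (hun : ∃ w : ι → D[X], ∑ i, w i * v i = 1)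
    (i0 : ι) (hm : (v i0).Monic) : REq v (Pi.single i0 1) := by
  classical
  rcases subsingleton_or_nontrivial D with hD | hD
  · have : v = Pi.single i0 1 := Subsingleton.elim _ _
    rw [this]; exact REq.refl _
  -- reduce the other entries
  let v' : ι → D[X] := fun k => if k = i0 then v i0 else v k %ₘ v i0
  have h1 : REq v v' := by
    refine REq.add_mul_left i0 (fun k => - (v k /ₘ v i0)) _ _ (by simp [v']) ?_
    intro k hk
    simp only [v', if_neg hk]
    linear_combination Polynomial.modByMonic_add_div (v k) (v i0)
  refine h1.trans ?_
  set M := (v i0).natDegree with hM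
  have hv'0 : v' i0 = v i0 := by simp [v']
  have hdeg' : ∀ i, i ≠ i0 → (v' i).degree < (v i0).degree := by
    intro i hi
    simp only [v', if_neg hi]
    exact degree_modByMonic_lt _ hm
  have hdeg : ∀ i, (v' i).natDegree ≤ M := by
    intro i
    by_cases hi : i = i0
    · rw [hi, hv'0]
    · exact natDegree_le_natDegree (hdeg' i hi).le
  have hlead : ∀ i, (v' i).coeff M = if i = i0 then 1 else 0 := by
    intro i
    split_ifs with hi
    · rw [hi, hv'0]; exact hm
    · apply coeff_eq_zero_of_degree_lt
      rw [hM, ← degree_eq_natDegree hm.ne_zero]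
      exact hdeg' i hi
  obtain ⟨w, hw⟩ : ∃ w : ι → D[X], ∑ i, w i * v' i = 1 := by
    obtain ⟨G, hG, hGv⟩ := h1.symm
    obtain ⟨w, hw⟩ := hun
    refine ⟨Matrix.vecMul w G, ?_⟩
    have : dotProduct (Matrix.vecMul w G) v' = 1 := by
      rw [← Matrix.dotProduct_mulVec, hGv]; exact hw
    exact this
  have step1 : REq v' (fun k => C ((v' k).eval 1)) := by
    have := horrocks (S := D[X]) v' M hdeg ⟨Pi.single i0 1, by simp [hlead, Pi.single_apply]⟩
      ⟨w, hw⟩ X (1 - X)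
    simp only [aeval_X_left_apply, add_sub_cancel] at this
    convert this using 2 with k
    rw [← C_1, aeval_def, Polynomial.algebraMap_eq, Polynomial.eval₂_at_apply]
  refine step1.trans ?_
  -- the reflected row
  let u : ι → D[X] := fun k => reflect M (v' k)
  have hu1 : ∀ k, (u k).eval 1 = (v' k).eval 1 := by
    intro k
    let _ : Invertible (1 : D) := invertibleOne
    have := eval₂_reflect_mul_pow (RingHom.id D) 1 M (v' k) (hdeg k)
    simpa [eval₂_id] using this
  have hu0 : ∀ k, (u k).eval 0 = if k = i0 then 1 else 0 := by
    intro k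
    rw [← hlead k, ← coeff_zero_eq_eval_zero]
    simp [u, coeff_reflect, revAt_le]
  have hulead : ∀ k, (u k).coeff M = (v' k).eval 0 := by
    intro k
    rw [← coeff_zero_eq_eval_zero]
    simp [u, coeff_reflect, revAt_le]
  have hudeg : ∀ k, (u k).natDegree ≤ M := by
    intro k
    rw [natDegree_le_iff_coeff_eq_zero]
    intro N hN
    simp only [u, coeff_reflect]
    rw [revAt_eq_self_of_lt hN]
    exact coeff_eq_zero_of_natDegree_lt ((hdeg k).trans_lt hN)
  have huun : ∃ w' : ι → D[X], ∑ i, w' i * u i = 1 := by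
    let K := Finset.univ.sup fun i => (w i).natDegree
    have hK : ∀ i, (w i).natDegree ≤ K := fun i => Finset.le_sup (f := fun i => (w i).natDegree)
      (Finset.mem_univ i)
    have h2 : ∑ i, reflect K (w i) * u i = X ^ (K + M) := by
      have h3 : ∀ i, reflect K (w i) * u i = reflect (K + M) (w i * v' i) := fun i =>
        (reflect_mul _ _ (hK i) (hdeg i)).symm
      simp only [h3]
      have h4 : reflect (K + M) (∑ i, w i * v' i) = ∑ i, reflect (K + M) (w i * v' i) := by
        have : ∀ s : Finset ι, reflect (K + M) (∑ i ∈ s, w i * v' i)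
            = ∑ i ∈ s, reflect (K + M) (w i * v' i) := by
          intro s
          induction s using Finset.induction_on with
          | empty => simp
          | insert a s ha ih => rw [Finset.sum_insert ha, Finset.sum_insert ha, reflect_add, ih]
        exact this _
      rw [← h4, hw, reflect_one]
    have h5 : ∃ s : D[X], u i0 = 1 + X * s := by
      have : X ∣ u i0 - 1 := by
        rw [X_dvd_iff, coeff_sub, coeff_zero_eq_eval_zero, hu0]; simp
      obtain ⟨s, hs⟩ := this
      exact ⟨s, by rw [← hs]; ring⟩
    obtain ⟨s, hs⟩ := h5
    have hcop : IsCoprime (X ^ (K + M)) (u i0) := by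
      apply IsCoprime.pow_left
      exact ⟨-s, 1, by rw [hs]; ring⟩
    obtain ⟨a, b, hab⟩ := hcop
    refine ⟨fun i => a * reflect K (w i) + (if i = i0 then b else 0), ?_⟩
    simp only [add_mul, Finset.sum_add_distrib, ite_mul, zero_mul, Finset.sum_ite_eq',
      Finset.mem_univ, if_true, mul_assoc, ← Finset.mul_sum]
    rw [h2, hab]
  have step2 := horrocks (S := D[X]) u M hudeg ⟨fun i => (w i).eval 0, by
      simp only [hulead, ← eval_mul, ← eval_finset_sum, hw, eval_one]⟩ huun 1 (-1)
  simp only [add_neg_cancel] at step2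
  have e1 : (fun k => aeval (1 : D[X]) (u k)) = fun k => C ((v' k).eval 1) := by
    ext1 k
    rw [← hu1, ← C_1, aeval_def, Polynomial.algebraMap_eq, Polynomial.eval₂_at_apply]
  have e2 : (fun k => aeval (0 : D[X]) (u k)) = Pi.single i0 1 := by
    ext1 k
    rw [← C_0, aeval_def, Polynomial.algebraMap_eq, Polynomial.eval₂_at_apply, hu0, Pi.single_apply]
    split_ifs <;> simp
  rwa [e1, e2] at step2

end HL
end

noncomputable section

section Fil
open Polynomial
variable {D A : Type*} [CommRing D] [CommRing A] [Algebra D[X] A]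

/-- filtration on a localization of a polynomial ring -/
def Fil (f : D[X]) (σ M : ℕ) (a : A) : Prop :=
  ∃ p : D[X], p.natDegree ≤ M * σ ∧ algebraMap D[X] A p = algebraMap D[X] A f ^ M * a

/-- elements with controlled leading term and controlled residue modulo `f` -/
def Un (f : D[X]) (σ M : ℕ) (c : D) (a : A) : Prop :=
  ∃ (p : D[X]) (u u' : Dˣ), p.natDegree ≤ M * σ ∧
    algebraMap D[X] A p = algebraMap D[X] A f ^ M * a ∧
    p.coeff (M * σ) = c * u ∧ f ∣ p - C (c * u')

variable {f : D[X]} {σ : ℕ}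

theorem Un.fil {M : ℕ} {c : D} {a : A} (h : Un f σ M c a) : Fil f σ M a := by
  obtain ⟨p, u, u', h1, h2, -⟩ := h
  exact ⟨p, h1, h2⟩

theorem Fil.mul {M M' : ℕ} {a b : A} (h : Fil f σ M a) (h' : Fil f σ M' b) :
    Fil f σ (M + M') (a * b) := by
  obtain ⟨p, h1, h2⟩ := h
  obtain ⟨q, h3, h4⟩ := h'
  refine ⟨p * q, natDegree_mul_le.trans ?_, ?_⟩
  · rw [add_mul]; omega
  · rw [map_mul, h2, h4]; ring

theorem Fil.add {M : ℕ} {a b : A} (h : Fil f σ M a) (h' : Fil f σ M b) :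
    Fil f σ M (a + b) := by
  obtain ⟨p, h1, h2⟩ := h
  obtain ⟨q, h3, h4⟩ := h'
  refine ⟨p + q, (natDegree_add_le _ _).trans (max_le h1 h3), ?_⟩
  rw [map_add, h2, h4]; ring

theorem Fil.neg {M : ℕ} {a : A} (h : Fil f σ M a) : Fil f σ M (-a) := by
  obtain ⟨p, h1, h2⟩ := h
  exact ⟨-p, by rwa [natDegree_neg], by rw [map_neg, h2]; ring⟩

theorem Fil.zero (M : ℕ) : Fil f σ M (0 : A) := ⟨0, by simp, by simp⟩

theorem Fil.const (M : ℕ) (hσ : f.natDegree ≤ σ) (c : D) :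
    Fil f σ M (algebraMap D[X] A (C c)) := by
  refine ⟨f ^ M * C c, ?_, by simp⟩
  refine natDegree_mul_le.trans ?_
  rw [natDegree_C]
  exact natDegree_pow_le.trans (Nat.mul_le_mul_left _ hσ)

theorem Fil.mono {M M' : ℕ} {a : A} (hσ : f.natDegree ≤ σ) (h : Fil f σ M a) (hM : M ≤ M') :
    Fil f σ M' a := by
  obtain ⟨k, rfl⟩ := Nat.exists_eq_add_of_le hM
  have := h.mul (Fil.const (A := A) k hσ 1)
  simpa using this

theorem Fil.pow {M : ℕ} {a : A} (h : Fil f σ M a) (k : ℕ) : Fil f σ (k * M) (a ^ k) := by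
  induction k with
  | zero => exact ⟨1, by simp, by simp⟩
  | succ k ih => rw [pow_succ, add_mul, one_mul]; exact ih.mul h

theorem Fil.sum {ι : Type*} (s : Finset ι) (g : ι → A) {M : ℕ} (h : ∀ i ∈ s, Fil f σ M (g i)) :
    Fil f σ M (∑ i ∈ s, g i) := by
  classical
  induction s using Finset.induction_on with
  | empty => simpa using Fil.zero M
  | insert a s ha ih =>
    rw [Finset.sum_insert ha]
    exact (h _ (by simp)).add (ih fun i hi => h i (by simp [hi]))

theorem Un.mul {M M' : ℕ} {c c' : D} {a b : A} (h : Un f σ M c a) (h' : Un f σ M' c' b) :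
    Un f σ (M + M') (c * c') (a * b) := by
  obtain ⟨p, u, u', h1, h2, h5, h6⟩ := h
  obtain ⟨q, v, v', h3, h4, h7, h8⟩ := h'
  refine ⟨p * q, u * v, u' * v', natDegree_mul_le.trans ?_, ?_, ?_, ?_⟩
  · rw [add_mul]; omega
  · rw [map_mul, h2, h4]; ring
  · rw [add_mul, coeff_mul_add_eq_of_natDegree_le h1 h3, h5, h7]
    push_cast; ring
  · obtain ⟨x, hx⟩ := h6
    obtain ⟨y, hy⟩ := h8
    refine ⟨x * q + C (c * u') * y, ?_⟩
    rw [eq_comm, show f * (x * q + C (c * u') * y) = (f * x) * q + C (c * u') * (f * y) by ring,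
      ← hx, ← hy]
    push_cast
    simp only [map_mul]
    ring

theorem Un.const (c : D) : Un f σ 0 c (algebraMap D[X] A (C c)) :=
  ⟨C c, 1, 1, by simp, by simp, by simp, by simp⟩

theorem Un.one : Un f σ 0 1 (1 : A) := by
  have := Un.const (A := A) (f := f) (σ := σ) 1
  simpa using this

theorem Un.pow {M : ℕ} {a : A} (h : Un f σ M 1 a) (k : ℕ) : Un f σ (k * M) 1 (a ^ k) := by
  induction k with
  | zero => simpa using Un.one
  | succ k ih =>
    rw [pow_succ, add_mul, one_mul]
    simpa using ih.mul h

theorem Un.add_fil {M M' : ℕ} {c : D} {a b : A} (hσ : f.natDegree < σ) (h : Un f σ M c a)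
    (h' : Fil f σ M' b) (hM : M' < M) : Un f σ M c (a + b) := by
  obtain ⟨p, u, u', h1, h2, h5, h6⟩ := h
  obtain ⟨q, h3, h4⟩ := h'
  obtain ⟨k, rfl⟩ := Nat.exists_eq_add_of_lt hM
  have hd : (f ^ (k + 1) * q).natDegree < (M' + k + 1) * σ := by
    refine natDegree_mul_le.trans_lt ?_
    have h7 : (f ^ (k+1)).natDegree ≤ (k + 1) * f.natDegree := natDegree_pow_le
    nlinarith
  refine ⟨p + f ^ (k + 1) * q, u, u', ?_, ?_, ?_, ?_⟩
  · exact (natDegree_add_le _ _).trans (max_le h1 hd.le)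
  · rw [map_add, map_mul, map_pow, h2, h4]; ring
  · rw [coeff_add, h5, coeff_eq_zero_of_natDegree_lt hd, add_zero]
  · rw [add_sub_right_comm]
    exact dvd_add h6 (Dvd.intro (f ^ k * q) (by ring))

/-- polynomial expressions lie in the filtration -/
theorem fil_eval {R : Type*} [CommRing R] (ρ : R →+* D) (hσ : f.natDegree ≤ σ) (k : ℕ)
    (h : MvPolynomial (Fin k) R) : ∃ B : ℕ, ∀ T : ℕ, 1 ≤ T → ∀ ζ : Fin k → A,
      (∀ i : Fin k, Fil f σ (T ^ (k - 1 - (i : ℕ))) (ζ i)) →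
      Fil f σ (B * (k * T ^ (k - 1)))
        (MvPolynomial.eval₂ ((algebraMap D[X] A).comp (C.comp ρ)) ζ h) := by
  induction h using MvPolynomial.induction_on with
  | C r =>
    refine ⟨0, fun T hT ζ hζ => ?_⟩
    rw [MvPolynomial.eval₂_C]
    exact Fil.const _ hσ _
  | add p q hp hq =>
    obtain ⟨B1, h1⟩ := hp
    obtain ⟨B2, h2⟩ := hq
    refine ⟨max B1 B2, fun T hT ζ hζ => ?_⟩
    rw [MvPolynomial.eval₂_add]
    exact ((h1 T hT ζ hζ).mono hσ (Nat.mul_le_mul_right _ (le_max_left _ _))).add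
      ((h2 T hT ζ hζ).mono hσ (Nat.mul_le_mul_right _ (le_max_right _ _)))
  | mul_X p i hp =>
    obtain ⟨B, h1⟩ := hp
    refine ⟨B + 1, fun T hT ζ hζ => ?_⟩
    rw [MvPolynomial.eval₂_mul, MvPolynomial.eval₂_X]
    refine ((h1 T hT ζ hζ).mul (hζ i)).mono hσ ?_
    have h2 : T ^ (k - 1 - (i : ℕ)) ≤ T ^ (k - 1) := Nat.pow_le_pow_right hT (by omega)
    have h3 : 1 * T ^ (k - 1) ≤ k * T ^ (k - 1) := Nat.mul_le_mul_right _ (by have := i.2; omega)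
    rw [add_mul]
    omega

/-- generalized monic polynomials become unitary -/
theorem un_eval {R : Type*} [CommRing R] (ρ : R →+* D) (hσ : f.natDegree < σ) (k : ℕ)
    (h : MvPolynomial (Fin k) R) (hh : h ∈ Sig R k) : ∃ T0 : ℕ, ∀ T : ℕ, T0 ≤ T → ∀ ζ : Fin k → A,
      (∀ i : Fin k, Un f σ (T ^ (k - 1 - (i : ℕ))) 1 (ζ i)) →
      ∃ W, Un f σ W 1
        (MvPolynomial.eval₂ ((algebraMap D[X] A).comp (C.comp ρ)) ζ h) := by
  induction k with
  | zero =>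
    have : h = 1 := hh
    refine ⟨0, fun T hT ζ hζ => ⟨0, ?_⟩⟩
    rw [this, MvPolynomial.eval₂_one]
    exact Un.one
  | succ k ih =>
    obtain ⟨M, hM, hM'⟩ := mem_Sig_succ.1 hh
    set q := MvPolynomial.finSuccEquiv R k h with hq
    obtain ⟨T1, hT1⟩ := ih _ hM'
    choose B hB using fun j => fil_eval (A := A) (f := f) (σ := σ) ρ hσ.le k (q.coeff j)
    let B0 := (Finset.range M).sup B
    refine ⟨max T1 (B0 * k + 1), fun T hT ζ hζ => ?_⟩
    have hT1' : 1 ≤ T := by have := le_max_right T1 (B0 * k + 1); omega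
    have hζ' : ∀ i : Fin k, Un f σ (T ^ (k - 1 - (i : ℕ))) 1 (ζ i.succ) := by
      intro i
      have := hζ i.succ
      rwa [Fin.val_succ, show k + 1 - 1 - ((i : ℕ) + 1) = k - 1 - (i : ℕ) by omega] at this
    obtain ⟨W, hW⟩ := hT1 T (le_trans (le_max_left _ _) hT) (fun i => ζ i.succ) hζ'
    set φ := (algebraMap D[X] A).comp (C.comp ρ) with hφ
    have hev : MvPolynomial.eval₂ φ ζ h
        = ∑ j ∈ Finset.range (M + 1),
          MvPolynomial.eval₂ φ (fun i => ζ i.succ) (q.coeff j) * ζ 0 ^ j := by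
      have h1 : ∀ g : MvPolynomial (Fin (k+1)) R, MvPolynomial.eval₂ φ ζ g
          = (MvPolynomial.finSuccEquiv R k g).eval₂
            (MvPolynomial.eval₂Hom φ (fun i : Fin k => ζ i.succ)) (ζ 0) := by
        intro g
        induction g using MvPolynomial.induction_on with
        | C r => simp [MvPolynomial.finSuccEquiv_apply]
        | add p q hp hq => rw [MvPolynomial.eval₂_add, hp, hq, map_add, Polynomial.eval₂_add]
        | mul_X p i hp =>
          rw [MvPolynomial.eval₂_mul, hp, map_mul, Polynomial.eval₂_mul, MvPolynomial.eval₂_X]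
          congr 1
          refine Fin.cases ?_ (fun i => ?_) i
          · rw [MvPolynomial.finSuccEquiv_X_zero, Polynomial.eval₂_X]
          · rw [MvPolynomial.finSuccEquiv_X_succ, Polynomial.eval₂_C]; simp
      rw [h1, ← hq, Polynomial.eval₂_eq_sum_range' _ (Nat.lt_succ_of_le hM)]
      rfl
    rw [hev, Finset.sum_range_succ, add_comm]
    have h0 : Un f σ (T ^ k) 1 (ζ 0) := by simpa using hζ 0
    have hlast := hW.mul (h0.pow M)
    rw [one_mul] at hlast
    refine ⟨W + M * T ^ k, ?_⟩
    rcases Nat.eq_zero_or_pos M with rfl | hMpos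
    · simpa using hlast
    refine hlast.add_fil (M' := M * T ^ k - 1) hσ ?_ ?_
    · apply Fil.sum
      intro j hj
      rw [Finset.mem_range] at hj
      have h2 := (hB j T hT1' (fun i => ζ i.succ) (fun i => (hζ' i).fil)).mul (h0.fil.pow j)
      refine h2.mono hσ.le ?_
      have h3 : B j ≤ B0 := Finset.le_sup (f := B) (Finset.mem_range.2 hj)
      have h4 : B j * (k * T ^ (k - 1)) + 1 ≤ T ^ k := by
        rcases Nat.eq_zero_or_pos k with rfl | hk
        · simp
        · obtain ⟨k', rfl⟩ := Nat.exists_eq_add_of_le' hk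
          have h5 : B j * (k' + 1) + 1 ≤ T := by
            have h7 : B j * (k' + 1) ≤ B0 * (k' + 1) := Nat.mul_le_mul_right (k' + 1) h3
            have h8 : B0 * (k' + 1) + 1 ≤ T := (le_max_right _ _).trans hT
            omega
          have h6 : 1 ≤ T ^ k' := Nat.one_le_pow _ _ hT1'
          rw [pow_succ]
          simp only [Nat.add_sub_cancel]
          nlinarith
      have h5 : (j + 1) * T ^ k ≤ M * T ^ k := Nat.mul_le_mul_right _ hj
      rw [add_mul, one_mul] at h5
      omega
    · have : 1 ≤ M * T ^ k := Nat.mul_pos hMpos (Nat.pow_pos hT1')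
      omega

end Fil
end

noncomputable section
noncomputable section
section Acon
open Polynomial
universe u v

/-- Laurent polynomial ring -/
def Lau (R : Type u) [CommRing R] (m n : ℕ) : Type u := Localization (Ymonoid R m n)

instance (R : Type u) [CommRing R] (m n : ℕ) : CommRing (Lau R m n) :=
  inferInstanceAs (CommRing (Localization (Ymonoid R m n)))

instance (R : Type u) [CommRing R] (m n : ℕ) :
    Algebra (MvPolynomial (Fin m ⊕ Fin n) R) (Lau R m n) :=
  inferInstanceAs (Algebra (MvPolynomial (Fin m ⊕ Fin n) R) (Localization (Ymonoid R m n)))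

instance (R : Type u) [CommRing R] (m n : ℕ) : Algebra R (Lau R m n) :=
  ((algebraMap (MvPolynomial (Fin m ⊕ Fin n) R) (Lau R m n)).comp MvPolynomial.C).toAlgebra

instance (R : Type u) [CommRing R] (m n : ℕ) :
    IsScalarTower R (MvPolynomial (Fin m ⊕ Fin n) R) (Lau R m n) :=
  IsScalarTower.of_algebraMap_eq (fun _ => rfl)

instance (R : Type u) [CommRing R] (m n : ℕ) : IsLocalization (Ymonoid R m n) (Lau R m n) :=
  inferInstanceAs (IsLocalization (Ymonoid R m n) (Localization (Ymonoid R m n)))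

/-- the polynomial `f` over the Laurent polynomial ring -/
abbrev fL {R : Type u} [CommRing R] (m n : ℕ) (f : R[X]) : (Lau R m n)[X] :=
  f.map (algebraMap R (Lau R m n))

/-- the concrete ring `B[Y, 1/f]` -/
def Acon (R : Type u) [CommRing R] (m n : ℕ) (f : R[X]) : Type u :=
  Localization.Away (fL m n f)

instance (R : Type u) [CommRing R] (m n : ℕ) (f : R[X]) : CommRing (Acon R m n f) :=
  inferInstanceAs (CommRing (Localization.Away (fL m n f)))

instance (R : Type u) [CommRing R] (m n : ℕ) (f : R[X]) :
    Algebra (Lau R m n)[X] (Acon R m n f) :=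
  inferInstanceAs (Algebra (Lau R m n)[X] (Localization.Away (fL m n f)))

instance (R : Type u) [CommRing R] (m n : ℕ) (f : R[X]) :
    IsLocalization.Away (fL m n f) (Acon R m n f) :=
  inferInstanceAs (IsLocalization.Away (fL m n f) (Localization.Away (fL m n f)))

variable (R : Type u) [CommRing R] (m n : ℕ) (f : R[X])

/-- the coefficient map -/
def aR : R →+* Acon R m n f :=
  (algebraMap (Lau R m n)[X] (Acon R m n f)).comp (C.comp (algebraMap R (Lau R m n)))

/-- polynomial variables -/
def lX (i : Fin m) : Lau R m n := algebraMap (MvPolynomial (Fin m ⊕ Fin n) R) _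
  (MvPolynomial.X (Sum.inl i))

theorem isUnit_lY (j : Fin n) : IsUnit (algebraMap (MvPolynomial (Fin m ⊕ Fin n) R) (Lau R m n)
    (MvPolynomial.X (Sum.inr j))) :=
  IsLocalization.map_units _ (⟨MvPolynomial.X (Sum.inr j), Submonoid.subset_closure ⟨j, rfl⟩⟩ :
    Ymonoid R m n)

/-- Laurent variables -/
def lY (j : Fin n) : (Lau R m n)ˣ := (isUnit_lY R m n j).unit

theorem lY_val (j : Fin n) : (lY R m n j : Lau R m n) =
    algebraMap (MvPolynomial (Fin m ⊕ Fin n) R) (Lau R m n) (MvPolynomial.X (Sum.inr j)) := rfl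

/-- the map from the Laurent ring -/
def aL : Lau R m n →+* Acon R m n f := (algebraMap (Lau R m n)[X] (Acon R m n f)).comp C

/-- polynomial variables -/
def aX (i : Fin m) : Acon R m n f := aL R m n f (lX R m n i)

/-- Laurent variables -/
def aY (j : Fin n) : (Acon R m n f)ˣ := Units.map (aL R m n f).toMonoidHom (lY R m n j)

/-- the last variable -/
def aT : Acon R m n f := algebraMap (Lau R m n)[X] (Acon R m n f) X

theorem fL_eq : algebraMap (Lau R m n)[X] (Acon R m n f) (fL m n f)
    = f.eval₂ (aR R m n f) (aT R m n f) := by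
  have : ∀ p : (Lau R m n)[X], algebraMap (Lau R m n)[X] (Acon R m n f) p
      = p.eval₂ (aL R m n f) (aT R m n f) := by
    intro p
    conv_lhs => rw [← Polynomial.eval₂_C_X (p := p)]
    rw [Polynomial.hom_eval₂]
    rfl
  rw [this, Polynomial.eval₂_map]
  rfl

theorem isUnit_f : IsUnit (f.eval₂ (aR R m n f) (aT R m n f)) := by
  rw [← fL_eq]
  exact IsLocalization.Away.algebraMap_isUnit _

/-- `f` as a unit -/
def aF : (Acon R m n f)ˣ := (isUnit_f R m n f).unit

theorem aF_val : (aF R m n f : Acon R m n f) = f.eval₂ (aR R m n f) (aT R m n f) := rfl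

theorem aF_val' : (aF R m n f : Acon R m n f) =
    algebraMap (Lau R m n)[X] (Acon R m n f) (fL m n f) := (fL_eq R m n f).symm

variable {R m n f}
variable {S : Type v} [CommRing S]

theorem isUnit_ymonoid (φ : R →+* S) (x : Fin m → S) (y : Fin n → Sˣ) (z : Ymonoid R m n) :
    IsUnit (MvPolynomial.eval₂Hom φ (Sum.elim x (fun j => (y j : S))) z) := by
  have : Ymonoid R m n ≤ (IsUnit.submonoid S).comap
      (MvPolynomial.eval₂Hom φ (Sum.elim x (fun j => (y j : S)))).toMonoidHom := by
    rw [Ymonoid, Submonoid.closure_le]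
    rintro _ ⟨j, rfl⟩
    show IsUnit _
    simp
  exact this z.2

/-- universal property of the Laurent ring -/
def lauLift (φ : R →+* S) (x : Fin m → S) (y : Fin n → Sˣ) : Lau R m n →+* S :=
  IsLocalization.lift (M := Ymonoid R m n) (isUnit_ymonoid φ x y)

theorem lauLift_R (φ : R →+* S) (x : Fin m → S) (y : Fin n → Sˣ) (r : R) :
    lauLift φ x y (algebraMap R (Lau R m n) r) = φ r := by
  rw [IsScalarTower.algebraMap_apply R (MvPolynomial (Fin m ⊕ Fin n) R) (Lau R m n), lauLift,
    IsLocalization.lift_eq]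
  simp

theorem lauLift_X (φ : R →+* S) (x : Fin m → S) (y : Fin n → Sˣ) (i) :
    lauLift φ x y (lX R m n i) = x i := by
  rw [lX, lauLift, IsLocalization.lift_eq]
  simp

theorem lauLift_Y (φ : R →+* S) (x : Fin m → S) (y : Fin n → Sˣ) (j) :
    lauLift φ x y (lY R m n j) = y j := by
  rw [lY_val, lauLift, IsLocalization.lift_eq]
  simp

theorem lau_hom_ext {g h : Lau R m n →+* S}
    (h1 : ∀ r, g (algebraMap R _ r) = h (algebraMap R _ r))
    (h2 : ∀ i, g (lX R m n i) = h (lX R m n i)) (h3 : ∀ j, g (lY R m n j) = h (lY R m n j)) :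
    g = h := by
  apply IsLocalization.ringHom_ext (Ymonoid R m n)
  apply MvPolynomial.ringHom_ext
  · intro r
    have := h1 r
    rw [IsScalarTower.algebraMap_apply R (MvPolynomial (Fin m ⊕ Fin n) R) (Lau R m n)] at this
    simpa using this
  · rintro (i | j)
    · exact h2 i
    · exact h3 j

/-- universal property -/
def aLift (φ : R →+* S) (x : Fin m → S) (y : Fin n → Sˣ) (t : S) (ht : IsUnit (f.eval₂ φ t)) :
    Acon R m n f →+* S :=
  IsLocalization.Away.lift (fL m n f) (g := Polynomial.eval₂RingHom (lauLift φ x y) t) (by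
    rw [coe_eval₂RingHom, eval₂_map]
    convert ht using 2
    ext r
    exact lauLift_R _ _ _ _)

section
variable (φ : R →+* S) (x : Fin m → S) (y : Fin n → Sˣ) (t : S) (ht : IsUnit (f.eval₂ φ t))

theorem aLift_alg (p : (Lau R m n)[X]) : aLift φ x y t ht (algebraMap _ _ p)
    = p.eval₂ (lauLift φ x y) t := by
  rw [aLift, IsLocalization.Away.lift_eq]
  rfl

theorem aLift_L (c : Lau R m n) : aLift φ x y t ht (aL R m n f c) = lauLift φ x y c := by
  show aLift φ x y t ht (algebraMap _ _ (C c)) = _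
  rw [aLift_alg, eval₂_C]

theorem aLift_R (r : R) : aLift φ x y t ht (aR R m n f r) = φ r := by
  show aLift φ x y t ht (aL R m n f _) = _
  rw [aLift_L, lauLift_R]

theorem aLift_X (i) : aLift φ x y t ht (aX R m n f i) = x i := by
  rw [aX, aLift_L, lauLift_X]

theorem aLift_Y (j) : aLift φ x y t ht (aY R m n f j) = y j := by
  show aLift φ x y t ht (aL R m n f _) = _
  rw [aLift_L, lauLift_Y]

theorem aLift_T : aLift φ x y t ht (aT R m n f) = t := by
  rw [aT, aLift_alg, eval₂_X]
end

theorem acon_hom_ext {g h : Acon R m n f →+* S}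
    (h1 : ∀ r, g (aR R m n f r) = h (aR R m n f r))
    (h2 : ∀ i, g (aX R m n f i) = h (aX R m n f i)) (h3 : ∀ j, g (aY R m n f j) = h (aY R m n f j))
    (h4 : g (aT R m n f) = h (aT R m n f)) : g = h := by
  apply IsLocalization.ringHom_ext (Submonoid.powers (fL m n f))
  apply Polynomial.ringHom_ext
  · intro a
    have : g.comp (aL R m n f) = h.comp (aL R m n f) := lau_hom_ext h1 h2 h3
    exact RingHom.congr_fun this a
  · exact h4

/-- generators of the ring -/
theorem acon_closure (T : Subring (Acon R m n f)) (h1 : ∀ r, aR R m n f r ∈ T)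
    (h2 : ∀ i, aX R m n f i ∈ T) (h3 : ∀ j, (aY R m n f j : Acon R m n f) ∈ T)
    (h3' : ∀ j, ((aY R m n f j)⁻¹ : (Acon R m n f)ˣ).1 ∈ T)
    (h4 : aT R m n f ∈ T) (h5 : ((aF R m n f)⁻¹ : (Acon R m n f)ˣ).1 ∈ T) (a : Acon R m n f) :
    a ∈ T := by
  let y : Fin n → Tˣ := fun j => ⟨⟨_, h3 j⟩, ⟨_, h3' j⟩, by ext; simp, by ext; simp⟩
  let φ : R →+* T := (aR R m n f).codRestrict T h1
  let tt : T := ⟨_, h4⟩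
  have hsub : T.subtype (f.eval₂ φ tt) = aF R m n f := by
    rw [Polynomial.hom_eval₂]; rfl
  have hu : IsUnit (f.eval₂ φ tt) := by
    refine IsUnit.of_mul_eq_one (⟨_, h5⟩ : T) ?_
    ext
    rw [Subring.coe_mul]
    rw [Subring.subtype_apply] at hsub
    rw [hsub]
    simp
  let g := aLift φ (fun i => (⟨_, h2 i⟩ : T)) y tt hu
  have : T.subtype.comp g = RingHom.id _ := by
    apply acon_hom_ext
    · intro r; simp only [RingHom.comp_apply, g, aLift_R]; rfl
    · intro r; simp only [RingHom.comp_apply, g, aLift_X]; rfl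
    · intro r; simp only [RingHom.comp_apply, g, aLift_Y]; rfl
    · simp only [RingHom.comp_apply, g, aLift_T]; rfl
  have h6 := RingHom.congr_fun this a
  rw [RingHom.comp_apply, RingHom.id_apply] at h6
  rw [← h6]
  exact (g a).2

end Acon
end

noncomputable section
section Key
open Polynomial
universe u
variable {R : Type u} [CommRing R] {m n : ℕ} {f : R[X]}

theorem map_aF {g : Acon R m n f →+* Acon R m n f} (h1 : ∀ r, g (aR R m n f r) = aR R m n f r)
    (h2 : g (aT R m n f) = aT R m n f) : g (aF R m n f) = aF R m n f := by
  rw [aF_val, hom_eval₂, h2]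
  congr 1
  ext r; exact h1 r

theorem map_aF_inv {g : Acon R m n f →+* Acon R m n f} (h1 : ∀ r, g (aR R m n f r) = aR R m n f r)
    (h2 : g (aT R m n f) = aT R m n f) :
    g ((aF R m n f)⁻¹ : (Acon R m n f)ˣ).1 = ((aF R m n f)⁻¹ : (Acon R m n f)ˣ).1 := by
  have h3 : g ((aF R m n f)⁻¹ : (Acon R m n f)ˣ).1 * aF R m n f = 1 := by
    rw [← map_aF h1 h2, ← map_mul]; simp
  calc _ = g ((aF R m n f)⁻¹ : (Acon R m n f)ˣ).1 * (aF R m n f *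
        ((aF R m n f)⁻¹ : (Acon R m n f)ˣ).1) := by simp
    _ = _ := by rw [← mul_assoc, h3, one_mul]

variable (R m n f) in
/-- the basic unitary element -/
def aW : Acon R m n f := if f.natDegree = 0 then aT R m n f else
  (aF R m n f : Acon R m n f) + ((aF R m n f)⁻¹ : (Acon R m n f)ˣ).1

/-- the fslope of the filtration -/
def fslope (f : R[X]) : ℕ := if f.natDegree = 0 then 1 else 2 * f.natDegree

theorem map_aW {g : Acon R m n f →+* Acon R m n f} (h1 : ∀ r, g (aR R m n f r) = aR R m n f r)
    (h2 : g (aT R m n f) = aT R m n f) : g (aW R m n f) = aW R m n f := by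
  rw [aW]
  split_ifs
  · exact h2
  · rw [map_add, map_aF h1 h2, map_aF_inv h1 h2]

theorem lt_fslope : (fL m n f).natDegree < fslope f := by
  have : (fL m n f).natDegree ≤ f.natDegree := natDegree_map_le
  rw [fslope]; split_ifs <;> omega

variable (R m n f) in
/-- the change of variables -/
def thetaHom (a : Fin m → ℕ) (b : Fin n → ℕ) : Acon R m n f →+* Acon R m n f :=
  aLift (aR R m n f) (fun i => aX R m n f i + aW R m n f ^ a i)
    (fun j => aY R m n f j * aF R m n f ^ b j) (aT R m n f) (isUnit_f R m n f)

variable (R m n f) in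
/-- the inverse change of variables -/
def thetaInv (a : Fin m → ℕ) (b : Fin n → ℕ) : Acon R m n f →+* Acon R m n f :=
  aLift (aR R m n f) (fun i => aX R m n f i - aW R m n f ^ a i)
    (fun j => aY R m n f j * ((aF R m n f)⁻¹) ^ b j) (aT R m n f) (isUnit_f R m n f)

variable (R m n f) in
/-- the change of variables as an automorphism -/
def theta (a : Fin m → ℕ) (b : Fin n → ℕ) : Acon R m n f ≃+* Acon R m n f :=
  RingEquiv.ofRingHom (thetaHom R m n f a b) (thetaInv R m n f a b)
  (by
    have h1 : ∀ r, thetaHom R m n f a b (aR R m n f r) = aR R m n f r := aLift_R _ _ _ _ _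
    have h2 : thetaHom R m n f a b (aT R m n f) = aT R m n f := aLift_T _ _ _ _ _
    apply acon_hom_ext
    · intro r
      simp only [RingHom.comp_apply, RingHom.id_apply, thetaInv, aLift_R, h1]
    · intro i
      simp only [RingHom.comp_apply, RingHom.id_apply, thetaInv, aLift_X, map_sub, map_pow,
        map_aW h1 h2]
      rw [thetaHom, aLift_X]; ring
    · intro i
      simp only [RingHom.comp_apply, RingHom.id_apply, thetaInv, aLift_Y, Units.val_mul, map_mul,
        Units.val_pow_eq_pow_val, map_pow, map_aF_inv h1 h2]
      rw [thetaHom, aLift_Y]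
      rw [Units.val_mul, Units.val_pow_eq_pow_val, mul_assoc, ← mul_pow]; simp
    · simp only [RingHom.comp_apply, RingHom.id_apply, thetaInv, aLift_T, h2])
  (by
    have h1 : ∀ r, thetaInv R m n f a b (aR R m n f r) = aR R m n f r := aLift_R _ _ _ _ _
    have h2 : thetaInv R m n f a b (aT R m n f) = aT R m n f := aLift_T _ _ _ _ _
    apply acon_hom_ext
    · intro r
      simp only [RingHom.comp_apply, RingHom.id_apply, thetaHom, aLift_R, h1]
    · intro i
      simp only [RingHom.comp_apply, RingHom.id_apply, thetaHom, aLift_X, map_add, map_pow,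
        map_aW h1 h2]
      rw [thetaInv, aLift_X]; ring
    · intro i
      simp only [RingHom.comp_apply, RingHom.id_apply, thetaHom, aLift_Y, Units.val_mul, map_mul,
        Units.val_pow_eq_pow_val, map_pow, map_aF h1 h2]
      rw [thetaInv, aLift_Y]
      rw [Units.val_mul, Units.val_pow_eq_pow_val, mul_assoc, ← mul_pow]; simp
    · simp only [RingHom.comp_apply, RingHom.id_apply, thetaHom, aLift_T, h2])

section
variable (a : Fin m → ℕ) (b : Fin n → ℕ)
theorem theta_R (r : R) : theta R m n f a b (aR R m n f r) = aR R m n f r :=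
  aLift_R _ _ _ _ (isUnit_f R m n f) _
theorem theta_T : theta R m n f a b (aT R m n f) = aT R m n f :=
  aLift_T _ _ _ _ (isUnit_f R m n f)
theorem theta_F : theta R m n f a b (aF R m n f) = aF R m n f :=
  map_aF (g := (theta R m n f a b).toRingHom) (theta_R a b) (theta_T a b)
theorem theta_F_inv : theta R m n f a b ((aF R m n f)⁻¹ : (Acon R m n f)ˣ).1
    = ((aF R m n f)⁻¹ : (Acon R m n f)ˣ).1 :=
  map_aF_inv (g := (theta R m n f a b).toRingHom) (theta_R a b) (theta_T a b)
theorem theta_W : theta R m n f a b (aW R m n f) = aW R m n f :=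
  map_aW (g := (theta R m n f a b).toRingHom) (theta_R a b) (theta_T a b)
theorem theta_X (i) : theta R m n f a b (aX R m n f i) = aX R m n f i + aW R m n f ^ a i :=
  aLift_X _ _ _ _ (isUnit_f R m n f) _
theorem theta_Y (j) : theta R m n f a b (aY R m n f j)
    = (aY R m n f j * aF R m n f ^ b j : (Acon R m n f)ˣ) :=
  aLift_Y _ _ _ _ (isUnit_f R m n f) _
theorem theta_Y_inv (j) : theta R m n f a b ((aY R m n f j)⁻¹ : (Acon R m n f)ˣ).1
    = ((aY R m n f j * aF R m n f ^ b j)⁻¹ : (Acon R m n f)ˣ).1 := by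
  have h3 : theta R m n f a b ((aY R m n f j)⁻¹ : (Acon R m n f)ˣ).1 *
      (aY R m n f j * aF R m n f ^ b j : (Acon R m n f)ˣ).1 = 1 := by
    rw [← theta_Y, ← map_mul]; simp
  exact Units.eq_inv_of_mul_eq_one_left (by rw [mul_comm]; exact h3)
end

theorem coeff_fL (hf : f.Monic) : (fL m n f).coeff f.natDegree = 1 := by
  rw [coeff_map, hf.coeff_natDegree, map_one]

theorem coeff_fL_pow (hf : f.Monic) (k : ℕ) : (fL m n f ^ k).coeff (k * f.natDegree) = 1 := by
  rw [coeff_pow_of_natDegree_le natDegree_map_le, coeff_fL hf, one_pow]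

theorem natDegree_fL_pow (k : ℕ) : (fL m n f ^ k).natDegree ≤ k * f.natDegree :=
  natDegree_pow_le.trans (Nat.mul_le_mul_left _ natDegree_map_le)

theorem eq_one_of_natDegree (hf : f.Monic) (h : f.natDegree = 0) : f = 1 :=
  hf.natDegree_eq_zero.1 h

theorem un_aW (hf : f.Monic) : Un (fL m n f) (fslope f) 1 1 (aW R m n f) := by
  rw [aW, fslope]
  split_ifs with h
  · obtain rfl := eq_one_of_natDegree hf h
    refine ⟨X, 1, 1, ?_, ?_, ?_, ?_⟩
    · simpa using natDegree_X_le
    · simp [aT]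
    · simp
    · simp
  · refine ⟨fL m n f ^ 2 + 1, 1, 1, ?_, ?_, ?_, ?_⟩
    · rw [one_mul]
      refine (natDegree_add_le _ _).trans (max_le (natDegree_fL_pow 2) (by simp))
    · rw [map_add, map_pow, ← aF_val', map_one, mul_add, pow_one, Units.mul_inv]; ring
    · rw [one_mul, coeff_add, coeff_fL_pow hf, coeff_one, if_neg (by omega)]; simp
    · simp [pow_two]

theorem fil_X (M : ℕ) (i) : Fil (fL m n f) (fslope f) M (aX R m n f i) :=
  Fil.const _ lt_fslope.le _

theorem un_theta_X (hf : f.Monic) (a : Fin m → ℕ) (b : Fin n → ℕ) (i) (ha : 0 < a i) :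
    Un (fL m n f) (fslope f) (a i) 1 (theta R m n f a b (aX R m n f i)) := by
  rw [theta_X, add_comm]
  have := (un_aW (m := m) (n := n) hf).pow (a i)
  rw [mul_one] at this
  exact this.add_fil lt_fslope (fil_X 0 i) ha

theorem un_theta_Y (hf : f.Monic) (h0 : f.natDegree ≠ 0) (a : Fin m → ℕ) (b : Fin n → ℕ) (j)
    (hb : 0 < b j) :
    Un (fL m n f) (fslope f) (b j) 1 (theta R m n f a b (aY R m n f j +
      ((aY R m n f j)⁻¹ : (Acon R m n f)ˣ).1)) := by
  rw [map_add, theta_Y, theta_Y_inv]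
  have hs : b j * fslope f = (2 * b j) * f.natDegree := by rw [fslope, if_neg h0]; ring
  refine ⟨C (lY R m n j : Lau R m n) * fL m n f ^ (2 * b j) +
    C ((lY R m n j)⁻¹ : (Lau R m n)ˣ).1, lY R m n j, (lY R m n j)⁻¹, ?_, ?_, ?_, ?_⟩
  · rw [hs]
    refine (natDegree_add_le _ _).trans (max_le ?_ (by simp))
    exact (natDegree_C_mul_le _ _).trans (natDegree_fL_pow _)
  · rw [map_add, map_mul, map_pow, ← aF_val']
    have h1 : algebraMap (Lau R m n)[X] (Acon R m n f) (C (lY R m n j : Lau R m n))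
      = aY R m n f j := rfl
    have h2 : algebraMap (Lau R m n)[X] (Acon R m n f) (C ((lY R m n j)⁻¹ : (Lau R m n)ˣ).1)
      = ((aY R m n f j)⁻¹ : (Acon R m n f)ˣ).1 := by
      rw [aY, ← map_inv]; rfl
    rw [h1, h2, mul_inv, Units.val_mul, Units.val_mul, Units.val_pow_eq_pow_val, mul_add]
    congr 1
    · ring
    · rw [mul_comm, mul_assoc, ← inv_pow, Units.val_pow_eq_pow_val, ← mul_pow]; simp
  · rw [hs, coeff_add, coeff_C_mul, coeff_fL_pow hf, coeff_C, if_neg (by positivity)]; simp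
  · obtain ⟨k, hk⟩ := Nat.exists_eq_add_of_lt hb
    rw [one_mul, add_sub_cancel_right, show 2 * b j = (2 * b j - 1) + 1 by omega, pow_succ]
    exact Dvd.intro_left _ (by rw [mul_assoc])

theorem fil_theta_Y (h0 : f.natDegree ≠ 0) (a : Fin m → ℕ) (b : Fin n → ℕ) (j) :
    Fil (fL m n f) (fslope f) (b j) (theta R m n f a b (aY R m n f j)) := by
  rw [theta_Y]
  have hs : b j * fslope f = (2 * b j) * f.natDegree := by rw [fslope, if_neg h0]; ring
  refine ⟨C (lY R m n j : Lau R m n) * fL m n f ^ (2 * b j), ?_, ?_⟩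
  · rw [hs]
    exact (natDegree_C_mul_le _ _).trans (natDegree_fL_pow _)
  · rw [map_mul, map_pow, ← aF_val']
    have h1 : algebraMap (Lau R m n)[X] (Acon R m n f) (C (lY R m n j : Lau R m n))
      = aY R m n f j := rfl
    rw [h1, Units.val_mul, Units.val_pow_eq_pow_val]
    ring

theorem fil_theta_Y_inv (a : Fin m → ℕ) (b : Fin n → ℕ) (j) :
    Fil (fL m n f) (fslope f) (b j)
      (theta R m n f a b ((aY R m n f j)⁻¹ : (Acon R m n f)ˣ).1) := by
  rw [theta_Y_inv]
  refine ⟨C ((lY R m n j)⁻¹ : (Lau R m n)ˣ).1, by simp, ?_⟩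
  · have h2 : algebraMap (Lau R m n)[X] (Acon R m n f) (C ((lY R m n j)⁻¹ : (Lau R m n)ˣ).1)
      = ((aY R m n f j)⁻¹ : (Acon R m n f)ˣ).1 := by
      rw [aY, ← map_inv]; rfl
    rw [h2, ← aF_val', mul_inv, Units.val_mul]
    rw [mul_comm, mul_assoc, ← inv_pow, Units.val_pow_eq_pow_val, ← mul_pow]; simp

theorem fil_T : Fil (fL m n f) (fslope f) 1 (aT R m n f) := by
  refine ⟨fL m n f * X, ?_, by rw [map_mul, pow_one]; rfl⟩
  refine natDegree_mul_le.trans ?_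
  have h1 : (fL m n f).natDegree ≤ f.natDegree := natDegree_map_le
  have h2 : (X : (Lau R m n)[X]).natDegree ≤ 1 := natDegree_X_le
  rw [fslope]; split_ifs <;> omega

theorem fil_F_inv : Fil (fL m n f) (fslope f) 1 ((aF R m n f)⁻¹ : (Acon R m n f)ˣ).1 :=
  ⟨1, by simp, by rw [← aF_val']; simp⟩

end Key
end

noncomputable section
section Key2
open Polynomial
universe u
variable {R : Type u} [CommRing R] {m n : ℕ} {f : R[X]}

variable (R m n f) in
/-- the parameters -/
def aZ : Fin (m + n + 1) → Acon R m n f :=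
  Fin.snoc (α := fun _ => Acon R m n f) (Fin.append (aX R m n f)
    (fun j => (aY R m n f j + ((aY R m n f j)⁻¹ : (Acon R m n f)ˣ).1 : Acon R m n f)))
    (aW R m n f)

theorem aZ_last : aZ R m n f (Fin.last _) = aW R m n f := by simp [aZ]
theorem aZ_X (i : Fin m) : aZ R m n f (Fin.castSucc (Fin.castAdd n i)) = aX R m n f i := by
  simp [aZ]
theorem aZ_Y (j : Fin n) : aZ R m n f (Fin.castSucc (Fin.natAdd m j)) =
    aY R m n f j + ((aY R m n f j)⁻¹ : (Acon R m n f)ˣ).1 := by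
  rw [aZ, Fin.snoc_castSucc, Fin.append_right]

variable (R m n f) in
/-- the integral map from the polynomial ring -/
def aI : MvPolynomial (Fin (m + n + 1)) R →+* Acon R m n f :=
  MvPolynomial.eval₂Hom (aR R m n f) (aZ R m n f)

theorem root_quad {P A : Type*} [CommRing P] [CommRing A] (g : P →+* A) (z : P) (y y' : A)
    (h : y * y' = 1) (hz : g z = y + y') : g.IsIntegralElem y := by
  rcases subsingleton_or_nontrivial P with hP | hP
  · exact ⟨1, monic_one, by
      have : (1 : A) = 0 := by rw [← map_one g, Subsingleton.elim (1 : P) 0, map_zero]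
      rw [eval₂_one, this]⟩
  refine ⟨X ^ 2 + (C (-z) * X + C 1), ?_, ?_⟩
  · apply Polynomial.monic_X_pow_add
    refine (degree_linear_le).trans_lt (by norm_num)
  · simp [hz]; linear_combination -h

theorem aI_isIntegral (hf : f.Monic) : (aI R m n f).IsIntegral := by
  let _ := (aI R m n f).toAlgebra
  have key := acon_closure (R := R) (m := m) (n := n) (f := f)
    (integralClosure (MvPolynomial (Fin (m + n + 1)) R) (Acon R m n f)).toSubring
  have hmem : ∀ a, a ∈ (integralClosure (MvPolynomial (Fin (m + n + 1)) R)
      (Acon R m n f)).toSubring ↔ (aI R m n f).IsIntegralElem a := fun a => Iff.rfl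
  have hX : ∀ i, aI R m n f (MvPolynomial.X i) = aZ R m n f i := by
    intro i; simp [aI]
  intro a
  rw [← hmem]
  apply key
  · intro r
    rw [hmem, show aR R m n f r = aI R m n f (MvPolynomial.C r) by simp [aI]]
    exact RingHom.isIntegralElem_map _
  · intro i
    rw [hmem, ← aZ_X, ← hX]
    exact RingHom.isIntegralElem_map _
  · intro j
    rw [hmem]
    refine root_quad _ (MvPolynomial.X (Fin.castSucc (Fin.natAdd m j))) _
      ((aY R m n f j)⁻¹ : (Acon R m n f)ˣ).1 (by simp) ?_
    rw [hX, aZ_Y]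
  · intro j
    rw [hmem]
    refine root_quad _ (MvPolynomial.X (Fin.castSucc (Fin.natAdd m j))) _
      (aY R m n f j : Acon R m n f) (by simp) ?_
    rw [hX, aZ_Y, add_comm]
  · rw [hmem]
    by_cases h : f.natDegree = 0
    · rw [show aT R m n f = aI R m n f (MvPolynomial.X (Fin.last _)) by
        rw [hX, aZ_last, aW, if_pos h]]
      exact RingHom.isIntegralElem_map _
    · rcases subsingleton_or_nontrivial R with hP | hP
      · exact ⟨1, monic_one, by
          have : (1 : Acon R m n f) = 0 := by
            rw [← map_one (aR R m n f), Subsingleton.elim (1 : R) 0, map_zero]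
          rw [eval₂_one, this]⟩
      let g := f.map (MvPolynomial.C : R →+* MvPolynomial (Fin (m + n + 1)) R)
      have hg : g.Monic := hf.map _
      have hgd : g.natDegree = f.natDegree := hf.natDegree_map _
      refine ⟨g ^ 2 + (C (- MvPolynomial.X (Fin.last _)) * g + C 1), ?_, ?_⟩
      · apply (hg.pow 2).add_of_left
        have h1 : (C (- MvPolynomial.X (Fin.last _) : MvPolynomial (Fin (m + n + 1)) R) * g
          + C 1).natDegree ≤ f.natDegree := by
          refine (natDegree_add_le _ _).trans (max_le ?_ (by simp))
          exact (natDegree_C_mul_le _ _).trans hgd.le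
        have h2 : (g ^ 2).natDegree = 2 * f.natDegree := by rw [hg.natDegree_pow, hgd]
        refine degree_lt_degree ?_
        omega
      · have h1 : eval₂ (aI R m n f) (aT R m n f) g = aF R m n f := by
          rw [aF_val, eval₂_map]
          congr 1
          ext r; simp [aI]
        rw [eval₂_add, eval₂_add, eval₂_mul, eval₂_pow, h1, eval₂_C, eval₂_C, map_neg, hX, aZ_last,
          aW, if_neg h]
        have := (aF R m n f).mul_inv
        rw [map_one]
        linear_combination -this
  · rw [hmem]
    by_cases h : f.natDegree = 0
    · have h1 := eq_one_of_natDegree hf h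
      have : ((aF R m n f)⁻¹ : (Acon R m n f)ˣ) = 1 := by
        rw [inv_eq_one]; ext; rw [aF_val, h1]; simp
      rw [this, Units.val_one]
      exact RingHom.isIntegralElem_one _
    · refine root_quad _ (MvPolynomial.X (Fin.last _)) _ (aF R m n f : Acon R m n f) (by simp) ?_
      rw [hX, aZ_last, aW, if_neg h, add_comm]

/-- existence of good changes of variables -/
theorem key_un (hf : f.Monic) (hnat : f.natDegree ≠ 0 ∨ n = 0) (a : Acon R m n f) :
    ∃ c0 : Acon R m n f, ∀ s : R, ∀ h ∈ Sig R (m + n + 1), ∃ θ : Acon R m n f ≃+* Acon R m n f,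
      (∀ r, θ (aR R m n f r) = aR R m n f r) ∧
      (∃ W, Un (fL m n f) (fslope f) W 1 (θ (aI R m n f h))) ∧
      (∃ W, Un (fL m n f) (fslope f) W (algebraMap R (Lau R m n) s)
        (θ (a + aR R m n f s * c0))) := by
  let th : ℕ → (Acon R m n f ≃+* Acon R m n f) := fun T =>
    theta R m n f (fun i => T ^ (m + n - (i : ℕ))) (fun j => T ^ (m + n - (m + (j : ℕ))))
  have hle : ∀ T : ℕ, 1 ≤ T → ∀ k, T ^ (m + n - k) ≤ 1 * T ^ (m + n) := by
    intro T hT k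
    rw [one_mul]
    exact Nat.pow_le_pow_right hT (by omega)
  have hY : ∀ j : Fin n, f.natDegree ≠ 0 := by
    intro j
    rcases hnat with h | rfl
    · exact h
    · exact j.elim0
  have hσ : (fL m n f).natDegree ≤ fslope f := lt_fslope.le
  -- filtration bound
  have hB : ∀ a : Acon R m n f, ∃ B : ℕ, ∀ T, 1 ≤ T →
      Fil (fL m n f) (fslope f) (B * T ^ (m + n)) (th T a) := by
    let S : Subring (Acon R m n f) :=
      { carrier := {a | ∃ B : ℕ, ∀ T, 1 ≤ T →
          Fil (fL m n f) (fslope f) (B * T ^ (m + n)) (th T a)}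
        mul_mem' := by
          rintro x y ⟨B1, h1⟩ ⟨B2, h2⟩
          refine ⟨B1 + B2, fun T hT => ?_⟩
          rw [map_mul, add_mul]
          exact (h1 T hT).mul (h2 T hT)
        add_mem' := by
          rintro x y ⟨B1, h1⟩ ⟨B2, h2⟩
          refine ⟨max B1 B2, fun T hT => ?_⟩
          rw [map_add]
          exact ((h1 T hT).mono hσ (Nat.mul_le_mul_right _ (le_max_left _ _))).add
            ((h2 T hT).mono hσ (Nat.mul_le_mul_right _ (le_max_right _ _)))
        one_mem' := ⟨0, fun T hT => by
          rw [map_one, zero_mul]; exact Un.one.fil⟩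
        zero_mem' := ⟨0, fun T hT => by
          rw [map_zero, zero_mul]; exact Fil.zero _⟩
        neg_mem' := by
          rintro x ⟨B1, h1⟩
          refine ⟨B1, fun T hT => ?_⟩
          rw [map_neg]
          exact (h1 T hT).neg }
    intro a
    refine acon_closure S ?_ ?_ ?_ ?_ ?_ ?_ a
    · intro r
      refine ⟨0, fun T hT => ?_⟩
      rw [theta_R]
      exact Fil.const _ hσ _
    · intro i
      refine ⟨1, fun T hT => ?_⟩
      exact (un_theta_X hf _ _ i (Nat.pow_pos hT)).fil.mono hσ (hle T hT _)
    · intro j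
      refine ⟨1, fun T hT => ?_⟩
      exact (fil_theta_Y (hY j) _ _ j).mono hσ (hle T hT _)
    · intro j
      refine ⟨1, fun T hT => ?_⟩
      exact (fil_theta_Y_inv _ _ j).mono hσ (hle T hT _)
    · refine ⟨1, fun T hT => ?_⟩
      rw [theta_T]
      exact fil_T.mono hσ (by rw [one_mul]; exact Nat.pow_pos hT)
    · refine ⟨1, fun T hT => ?_⟩
      rw [theta_F_inv]
      exact fil_F_inv.mono hσ (by rw [one_mul]; exact Nat.pow_pos hT)
  have hZ : ∀ T, 1 ≤ T → ∀ i : Fin (m + n + 1), Un (fL m n f) (fslope f)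
      (T ^ (m + n + 1 - 1 - (i : ℕ))) 1 (th T (aZ R m n f i)) := by
    intro T hT i
    rw [Nat.add_sub_cancel]
    refine Fin.lastCases ?_ (fun i => ?_) i
    · rw [aZ_last, theta_W]
      simpa using un_aW hf
    · refine Fin.addCases (fun i => ?_) (fun j => ?_) i
      · rw [aZ_X]
        exact un_theta_X hf (fun i => T ^ (m + n - (i : ℕ))) _ i (Nat.pow_pos hT)
      · rw [aZ_Y]
        exact un_theta_Y hf (hY j) _ (fun j => T ^ (m + n - (m + (j : ℕ)))) j (Nat.pow_pos hT)
  obtain ⟨B, hBa⟩ := hB a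
  refine ⟨aZ R m n f 0 ^ (B + 1), fun s h hh => ?_⟩
  obtain ⟨T0, hT0⟩ := un_eval (A := Acon R m n f) (algebraMap R (Lau R m n))
    (lt_fslope (m := m) (n := n) (f := f)) _ h hh
  have hT : 1 ≤ max T0 1 := le_max_right _ _
  refine ⟨th (max T0 1), theta_R _ _, ?_, ?_⟩
  · have := hT0 (max T0 1) (le_max_left _ _) (fun i => th (max T0 1) (aZ R m n f i)) (hZ _ hT)
    convert this using 4
    rw [aI, MvPolynomial.coe_eval₂Hom, ← RingEquiv.coe_toRingHom, MvPolynomial.hom_eval₂]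
    congr 1
    ext r
    exact theta_R _ _ _
  · refine ⟨(B + 1) * (max T0 1) ^ (m + n), ?_⟩
    have h0 := (hZ (max T0 1) hT 0).pow (B + 1)
    simp only [Nat.add_sub_cancel, Fin.val_zero, Nat.sub_zero] at h0
    have h1 := (Un.const (A := Acon R m n f) (f := fL m n f) (σ := fslope f)
      (algebraMap R (Lau R m n) s)).mul h0
    rw [zero_add, mul_one] at h1
    rw [map_add, map_mul, map_pow, add_comm (th (max T0 1) a), theta_R]
    refine h1.add_fil lt_fslope (hBa _ hT) ?_
    rw [add_mul, one_mul]
    have : 0 < max T0 1 ^ (m + n) := Nat.pow_pos hT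
    omega

end Key2
end

noncomputable section
section ThmS
open Polynomial
universe u

/-- clearing denominators simultaneously -/
theorem clear_den {D A : Type*} [CommRing D] [CommRing A] [Algebra D[X] A] (f : D[X])
    [IsLocalization.Away f A] {ι : Type*} [Finite ι] (v : ι → A) :
    ∃ (K : ℕ) (q : ι → D[X]), ∀ i, algebraMap D[X] A (q i) = algebraMap D[X] A f ^ K * v i := by
  classical
  let _ := Fintype.ofFinite ι
  obtain ⟨⟨_, K, rfl⟩, hb⟩ := IsLocalization.exist_integer_multiples_of_finite
    (Submonoid.powers f) v
  choose q hq using hb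
  refine ⟨K, q, fun i => ?_⟩
  rw [hq i, Algebra.smul_def]
  simp

theorem S_gen {D A ι : Type*} [CommRing D] [CommRing A] [Algebra D[X] A] (f : D[X]) (hf : f.Monic)
    [IsLocalization.Away f A] [Fintype ι] [DecidableEq ι] [Nontrivial ι] (i0 : ι) (v : ι → A)
    (hv : ∃ w : ι → A, ∑ i, w i * v i = 1) (c : ι → A) (hc : c i0 = 0) (σ W : ℕ)
    (hg : Un f σ W 1 (∑ i, c i * v i)) : REq v (Pi.single i0 1) := by
  rcases subsingleton_or_nontrivial D with hD | hD
  · have : Subsingleton A := by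
      refine subsingleton_of_zero_eq_one ?_
      rw [← map_zero (algebraMap D[X] A), ← map_one (algebraMap D[X] A), Subsingleton.elim (0 : D[X]) 1]
    have : v = Pi.single i0 1 := Subsingleton.elim _ _
    rw [this]; exact REq.refl _
  obtain ⟨p, u, u', h1, h2, h3, h4⟩ := hg
  rw [one_mul] at h3 h4
  obtain ⟨K, q, hq⟩ := clear_den f v
  obtain ⟨F, hF⟩ : IsUnit (algebraMap D[X] A f) := IsLocalization.Away.algebraMap_isUnit f
  let J := (q i0).natDegree + 1
  let r : D[X] := f * q i0 + p * (1 + f * X ^ J)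
  have hfX : (f * X ^ J).Monic := hf.mul (monic_X_pow _)
  have hfXd : (f * X ^ J).natDegree = f.natDegree + J := by
    rw [hf.natDegree_mul (monic_X_pow _), natDegree_X_pow]
  let N := W * σ + (f.natDegree + J)
  have hd1 : (f * q i0).natDegree < N := by
    refine natDegree_mul_le.trans_lt ?_
    show _ < W * σ + (f.natDegree + ((q i0).natDegree + 1))
    omega
  have hd2 : p.natDegree < N := by
    show _ < W * σ + (f.natDegree + ((q i0).natDegree + 1))
    omega
  have hr : r = (f * q i0 + p) + p * (f * X ^ J) := by simp only [r]; ring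
  have hd3 : (f * q i0 + p).natDegree < N := (natDegree_add_le _ _).trans_lt (max_lt hd1 hd2)
  have hrc : r.coeff N = u := by
    rw [hr, coeff_add, coeff_eq_zero_of_natDegree_lt hd3, zero_add,
      coeff_mul_add_eq_of_natDegree_le h1 hfXd.le, h3, ← hfXd, hfX.coeff_natDegree, mul_one]
  have hrd : r.natDegree ≤ N := by
    rw [hr]
    refine (natDegree_add_le _ _).trans (max_le hd3.le ?_)
    exact natDegree_mul_le.trans (add_le_add h1 hfXd.le)
  let r' : D[X] := C (u⁻¹ : Dˣ).1 * r
  have hr'm : r'.Monic := by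
    have h5 : r'.natDegree ≤ N := (natDegree_C_mul_le _ _).trans hrd
    refine monic_of_natDegree_le_of_coeff_eq_one N h5 ?_
    rw [coeff_C_mul, hrc, Units.inv_mul]
  -- the row in the polynomial ring
  let V : ι → D[X] := Function.update q i0 r'
  have hV0 : V i0 = r' := Function.update_self _ _ _
  have hV : ∀ i, i ≠ i0 → V i = q i := fun i hi => Function.update_of_ne hi _ _
  have hvV : REq v (fun i => algebraMap D[X] A (V i)) := by
    -- scaling
    let v1 : ι → A := fun i => (if i = i0 then F ^ (K + 1) else F ^ K : Aˣ) * v i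
    have e1 : REq v v1 := REq.units_mul (fun i => if i = i0 then F ^ (K + 1) else F ^ K) _ _
      (fun i => rfl)
    have hv1 : ∀ i, i ≠ i0 → v1 i = algebraMap D[X] A (q i) := by
      intro i hi
      simp only [v1, if_neg hi, hq, Units.val_pow_eq_pow_val, hF]
    have hv10 : v1 i0 = algebraMap D[X] A (f * q i0) := by
      simp only [v1, if_true, hq, Units.val_pow_eq_pow_val, hF, map_mul]
      ring
    let v2 : ι → A := Function.update v1 i0 (algebraMap D[X] A r)
    have e2 : REq v1 v2 := by
      refine REq.add_sum i0 (fun i => algebraMap D[X] A (1 + f * X ^ J) * algebraMap D[X] A f ^ W *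
        (F⁻¹ ^ K : Aˣ) * c i) (by simp [hc]) _ _ ?_ ?_
      · have h5 : ∑ i, algebraMap D[X] A (1 + f * X ^ J) * algebraMap D[X] A f ^ W *
            (F⁻¹ ^ K : Aˣ) * c i * v1 i
            = algebraMap D[X] A (p * (1 + f * X ^ J)) := by
          rw [map_mul, h2, Finset.mul_sum, Finset.sum_mul]
          refine Finset.sum_congr rfl fun i _ => ?_
          by_cases hi : i = i0
          · rw [hi, hc]; ring
          · simp only [v1, if_neg hi]
            have h6 : ((F⁻¹ ^ K : Aˣ) : A) * (F ^ K : Aˣ) = 1 := by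
              rw [inv_pow, Units.inv_mul]
            linear_combination (algebraMap D[X] A (1 + f * X ^ J) * algebraMap D[X] A f ^ W
              * c i * v i) * h6
        rw [h5, hv10, ← map_add]
        simp [v2, r]
      · intro i hi
        exact Function.update_of_ne hi _ _
    refine e1.trans (e2.trans ?_)
    let uA : Aˣ := Units.map ((algebraMap D[X] A).comp C).toMonoidHom u⁻¹
    refine REq.units_mul (fun i => if i = i0 then uA else 1) _ _ ?_
    intro i
    by_cases hi : i = i0
    · subst hi
      simp only [if_true, v2, Function.update_self, hV0, r', map_mul]
      rfl
    · simp only [if_neg hi, hV i hi, v2, Units.val_one, one_mul]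
      rw [Function.update_of_ne hi, hv1 i hi]
  refine hvV.trans ?_
  have hVun : ∃ w : ι → D[X], ∑ i, w i * V i = 1 := by
    suffices h : (1 : D[X]) ∈ Ideal.span (Set.range V) by
      obtain ⟨w, hw⟩ := (Submodule.mem_span_range_iff_exists_fun D[X]).1 h
      exact ⟨w, hw⟩
    obtain ⟨w, hw⟩ := hv
    obtain ⟨G, hG, hGV⟩ := hvV.symm
    have h5 : ∑ i, Matrix.vecMul w G i * algebraMap D[X] A (V i) = 1 := by
      have : dotProduct (Matrix.vecMul w G) (fun i => algebraMap D[X] A (V i)) = 1 := by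
        rw [← Matrix.dotProduct_mulVec, hGV]; exact hw
      exact this
    have h6 : (1 : A) ∈ Ideal.map (algebraMap D[X] A) (Ideal.span (Set.range V)) := by
      rw [← h5]
      refine Ideal.sum_mem _ fun i _ => Ideal.mul_mem_left _ _ (Ideal.mem_map_of_mem _ ?_)
      exact Ideal.subset_span ⟨i, rfl⟩
    rw [← map_one (algebraMap D[X] A), IsLocalization.algebraMap_mem_map_algebraMap_iff
      (Submonoid.powers f)] at h6
    obtain ⟨_, ⟨k, rfl⟩, hk⟩ := h6
    rw [mul_one] at hk
    have hrI : r ∈ Ideal.span (Set.range V) := by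
      have : r = C (u : D) * V i0 := by
        rw [hV0]; simp only [r']; rw [← mul_assoc, ← C_mul, Units.mul_inv, C_1, one_mul]
      rw [this]
      exact Ideal.mul_mem_left _ _ (Ideal.subset_span ⟨i0, rfl⟩)
    have hcop : IsCoprime (f ^ k) r := by
      apply IsCoprime.pow_left
      obtain ⟨g, hg⟩ := h4
      refine ⟨- C (u'⁻¹ : Dˣ).1 * (q i0 + p * X ^ J + g), C (u'⁻¹ : Dˣ).1, ?_⟩
      have h7 : (C (u'⁻¹ : Dˣ).1 : D[X]) * C (u' : D) = 1 := by
        rw [← C_mul, Units.inv_mul, C_1]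
      simp only [r]
      linear_combination C (u'⁻¹ : Dˣ).1 * hg + h7
    obtain ⟨x, y, hxy⟩ := hcop
    rw [← hxy]
    exact Ideal.add_mem _ (Ideal.mul_mem_left _ _ hk) (Ideal.mul_mem_left _ _ hrI)
  have := (row_monic V hVun i0 (by rw [hV0]; exact hr'm)).map (algebraMap D[X] A)
  convert this using 2 with i
  by_cases hi : i = i0
  · subst hi; simp
  · simp [hi]

theorem lau_noeth (R : Type u) [CommRing R] [IsNoetherianRing R] (m n : ℕ) :
    IsNoetherianRing (Lau R m n) :=
  IsLocalization.isNoetherianRing (Ymonoid R m n) _ inferInstance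

theorem acon_noeth (R : Type u) [CommRing R] [IsNoetherianRing R] (m n : ℕ) (f : R[X]) :
    IsNoetherianRing (Acon R m n f) :=
  have := lau_noeth R m n
  IsLocalization.isNoetherianRing (Submonoid.powers (fL m n f)) _ inferInstance

/-- unimodular rows of length at least `d + 2` are completable -/
theorem thmS {R : Type u} [CommRing R] [IsNoetherianRing R] {m n : ℕ} {f : R[X]} (hf : f.Monic)
    (hnat : f.natDegree ≠ 0 ∨ n = 0) (d : ℕ) (hd : ringKrullDim R ≤ d) (k : ℕ) (hk : d + 1 ≤ k)
    (v : Fin (k + 1) → Acon R m n f) (hv : ∃ w : Fin (k + 1) → Acon R m n f, ∑ i, w i * v i = 1) :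
    REq v (Pi.single (Fin.last k) 1) := by
  have := acon_noeth R m n f
  obtain ⟨k', rfl⟩ := Nat.exists_eq_add_of_le' hk
  obtain ⟨c, hc⟩ := gp (v (Fin.last _)) 0 (k' + (d + 1)) (fun i => v i.castSucc) ⊥ (by simp)
  let v' : Fin (k' + (d + 1) + 1) → Acon R m n f := Fin.snoc (α := fun _ => Acon R m n f)
    (fun i => v i.castSucc + v (Fin.last _) * c i) (v (Fin.last _))
  have e1 : REq v v' := by
    refine REq.add_mul_left (Fin.last _) (Fin.snoc (α := fun _ => Acon R m n f) c 0) _ _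
      (by simp [v']) ?_
    intro i hi
    obtain ⟨i, rfl⟩ := Fin.exists_castSucc_eq.2 hi
    simp [v', mul_comm]
  refine e1.trans ?_
  obtain ⟨w', hw'⟩ : ∃ w : Fin (k' + (d + 1) + 1) → Acon R m n f, ∑ i, w i * v' i = 1 := by
    obtain ⟨G, hG, hGv⟩ := e1.symm
    obtain ⟨w, hw⟩ := hv
    refine ⟨Matrix.vecMul w G, ?_⟩
    have : dotProduct (Matrix.vecMul w G) v' = 1 := by
      rw [← Matrix.dotProduct_mulVec, hGv]; exact hw
    exact this
  obtain ⟨h, hh, hhJ⟩ := exists_sig_mem d hd (m + n + 1) (aI R m n f) (aI_isIntegral hf)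
    (Ideal.span (Set.range fun i : Fin (k' + (d + 1)) => v' i.castSucc)) (by
      intro p hp hJ
      have h1 : ∀ i : Fin (k' + (d + 1)), v' i.castSucc ∈ p := fun i =>
        hJ (Ideal.subset_span ⟨i, rfl⟩)
      have h2 : v (Fin.last _) ∉ p := by
        intro h3
        apply hp.ne_top
        rw [Ideal.eq_top_iff_one, ← hw']
        refine Ideal.sum_mem _ fun i _ => Ideal.mul_mem_left _ _ ?_
        refine Fin.lastCases ?_ (fun i => h1 i) i
        simpa [v'] using h3
      have h4 := hc p hp bot_le (fun i => by simpa [v'] using h1 i) h2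
      refine le_trans ?_ h4
      exact_mod_cast (by omega : d + 1 ≤ 0 + (k' + (d + 1))))
  obtain ⟨c0, hc0⟩ := key_un hf hnat (0 : Acon R m n f)
  obtain ⟨θ, -, ⟨W, hW⟩, -⟩ := hc0 0 h hh
  obtain ⟨c1, hc1⟩ := (Submodule.mem_span_range_iff_exists_fun _).1 hhJ
  let c2 : Fin (k' + (d + 1) + 1) → Acon R m n f := Fin.snoc (α := fun _ => Acon R m n f) c1 0
  have hsum : ∑ i, c2 i * v' i = aI R m n f h := by
    rw [Fin.sum_univ_castSucc, ← hc1]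
    simp [c2]
  have hcard : Nontrivial (Fin (k' + (d + 1) + 1)) := Fin.nontrivial_iff_two_le.2 (by omega)
  have h5 := S_gen (fL m n f) (hf.map _) (Fin.last _) (fun i => θ (v' i))
    ⟨fun i => θ (w' i), by simp only [← map_mul, ← map_sum, hw', map_one]⟩
    (fun i => θ (c2 i)) (by simp [c2]) (fslope f) W (by
      simp only [← map_mul, ← map_sum, hsum]; exact hW)
  have h6 := h5.map θ.symm.toRingHom
  convert h6 using 2 with i
  · simp
  · rename_i i
    by_cases hi : i = Fin.last _
    · subst hi; simp
    · simp [hi]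

end ThmS
end

noncomputable section
section PT
open scoped Polynomial

theorem pdiv_aux {D : Type*} [CommRing D] (pn : D[X]) (N : ℕ) (S : D) (u : Dˣ)
    (h1 : pn.natDegree ≤ N) (h2 : pn.coeff N = S * u) (n : ℕ) :
    ∀ p : D[X], (∀ j, N + n ≤ j → p.coeff j = 0) →
    ∃ (k : ℕ) (r p' : D[X]), Polynomial.C S ^ k * p = r * pn + p' ∧ ∀ j, N ≤ j → p'.coeff j = 0 := by
  induction n with
  | zero => intro p hp; exact ⟨0, 0, p, by simp, hp⟩
  | succ n ih =>
    intro p hp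
    obtain ⟨k, r, p', h3, h4⟩ := ih (Polynomial.C S * p
      - Polynomial.C (p.coeff (N + n) * (u⁻¹ : Dˣ)) * (pn * Polynomial.X ^ n)) (by
        intro j hj
        rw [Polynomial.coeff_sub, Polynomial.coeff_C_mul, Polynomial.coeff_C_mul]
        obtain ⟨i, rfl⟩ := Nat.exists_eq_add_of_le hj
        rw [show N + n + i = (N + i) + n by ring, Polynomial.coeff_mul_X_pow]
        rcases Nat.eq_zero_or_pos i with rfl | hi
        · rw [add_zero, h2, show p.coeff (N + n) * (u⁻¹ : Dˣ) * (S * u)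
            = S * p.coeff (N + n) * ((u⁻¹ : Dˣ) * u) by ring, Units.inv_mul]
          ring
        · rw [hp _ (by omega), Polynomial.coeff_eq_zero_of_natDegree_lt (n := N + i) (by omega)]
          ring)
    refine ⟨k + 1, r + Polynomial.C S ^ k *
      (Polynomial.C (p.coeff (N + n) * (u⁻¹ : Dˣ)) * Polynomial.X ^ n), p', ?_, h4⟩
    linear_combination h3

theorem pdiv {D ι : Type*} [CommRing D] [Fintype ι] (pn : D[X]) (N : ℕ) (S : D) (u : Dˣ)
    (h1 : pn.natDegree ≤ N) (h2 : pn.coeff N = S * u) (p : ι → D[X]) :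
    ∃ (k : ℕ) (r p' : ι → D[X]), ∀ i, Polynomial.C S ^ k * p i = r i * pn + p' i ∧
      (p' i).natDegree ≤ N := by
  have : ∀ i, ∃ (k : ℕ) (r p' : D[X]), Polynomial.C S ^ k * p i = r * pn + p' ∧
      ∀ j, N ≤ j → p'.coeff j = 0 := fun i =>
    pdiv_aux pn N S u h1 h2 ((p i).natDegree + 1) (p i) (fun j hj =>
      Polynomial.coeff_eq_zero_of_natDegree_lt (by omega))
  choose k r p' h3 h4 using this
  refine ⟨∑ i, k i, fun i => Polynomial.C S ^ (∑ i, k i - k i) * r i,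
    fun i => Polynomial.C S ^ (∑ i, k i - k i) * p' i, fun i => ⟨?_, ?_⟩⟩
  · have h5 : k i ≤ ∑ i, k i := Finset.single_le_sum (fun _ _ => Nat.zero_le _) (Finset.mem_univ i)
    have h6 : (Polynomial.C S) ^ (∑ i, k i) = (Polynomial.C S) ^ (∑ i, k i - k i)
        * Polynomial.C S ^ k i := by rw [← pow_add]; congr 1; omega
    rw [h6]
    linear_combination Polynomial.C S ^ (∑ i, k i - k i) * h3 i
  · rw [Polynomial.natDegree_le_iff_coeff_eq_zero]
    intro j hj
    show (Polynomial.C S ^ (∑ i, k i - k i) * p' i).coeff j = 0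
    rw [← Polynomial.C_pow, Polynomial.coeff_C_mul, h4 i j hj.le, mul_zero]

theorem integralElem_pow {D Q : Type*} [CommRing D] [CommRing Q] (φ : D →+* Q) {z : Q}
    (h : φ.IsIntegralElem z) (k : ℕ) : φ.IsIntegralElem (z ^ k) := by
  induction k with
  | zero => rw [pow_zero]; exact φ.isIntegralElem_one
  | succ i ih => rw [pow_succ]; exact ih.mul φ h

theorem integral_unit {D Q : Type*} [CommRing D] [CommRing Q] (φ : D →+* Q) (h : φ.IsIntegral)
    (s : D) (hs : IsUnit (φ s)) : ∃ c : D, φ (1 + s * c) = 0 := by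
  have h1 : (RingHom.kerLift φ).IsIntegral := by
    apply RingHom.IsIntegral.tower_top (f := Ideal.Quotient.mk (RingHom.ker φ))
    exact h
  have h2 := h1.isLocalHom (RingHom.kerLift_injective φ)
  have h3 : IsUnit (Ideal.Quotient.mk (RingHom.ker φ) s) := by
    apply h2.map_nonunit
    exact hs
  obtain ⟨c, hc⟩ := h3.exists_right_inv
  obtain ⟨c, rfl⟩ := Ideal.Quotient.mk_surjective c
  refine ⟨-c, ?_⟩
  rw [← map_mul, ← map_one (Ideal.Quotient.mk (RingHom.ker φ)), Ideal.Quotient.eq,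
    RingHom.mem_ker] at hc
  rw [show 1 + s * -c = -(s * c - 1) by ring, map_neg, hc, neg_zero]

variable {D A : Type*} [CommRing D] [CommRing A] [Algebra D[X] A] {f : D[X]}
  [IsLocalization.Away f A]

variable (f) in
theorem isUnit_algf : IsUnit (algebraMap D[X] A f) := IsLocalization.Away.algebraMap_isUnit f

/-- Step 1 -/
theorem pt_step1 {σ W : ℕ} (I : Ideal A) (g : A) (hg : Un f σ W 1 g) (hgI : g ∈ I) (s : D) (y : A)
    (hy : 1 + algebraMap D[X] A (Polynomial.C s) * y ∈ I) :
    ∃ c : D, algebraMap D[X] A (Polynomial.C (1 + s * c)) ∈ I := by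
  let π : A →+* A ⧸ I := Ideal.Quotient.mk I
  let φ : D →+* A ⧸ I := π.comp ((algebraMap D[X] A).comp Polynomial.C)
  obtain ⟨p, u, u', h1, h2, h3, h4⟩ := hg
  have hev : ∀ q : D[X], π (algebraMap D[X] A q) = q.eval₂ φ (π (algebraMap D[X] A Polynomial.X)) := by
    intro q
    conv_lhs => rw [← Polynomial.eval₂_C_X (p := q)]
    rw [Polynomial.hom_eval₂, Polynomial.hom_eval₂]
  have hp0 : π (algebraMap D[X] A p) = 0 := by
    rw [h2]
    exact Ideal.Quotient.eq_zero_iff_mem.mpr (I.mul_mem_left _ hgI)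
  have hX : φ.IsIntegralElem (π (algebraMap D[X] A Polynomial.X)) := by
    refine ⟨Polynomial.C ((u⁻¹ : Dˣ) : D) * p, ?_, ?_⟩
    · apply Polynomial.monic_of_natDegree_le_of_coeff_eq_one (W * σ)
      · exact (Polynomial.natDegree_C_mul_le _ _).trans h1
      · rw [Polynomial.coeff_C_mul, h3]; simp
    · rw [← hev, map_mul, map_mul, hp0, mul_zero]
  have hpoly : ∀ q : D[X], φ.IsIntegralElem (π (algebraMap D[X] A q)) := by
    intro q
    rw [hev, Polynomial.eval₂_eq_sum_range]
    refine Finset.sum_induction _ φ.IsIntegralElem (fun a b ha hb => ha.add φ hb)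
      (φ.isIntegralElem_zero) ?_
    intro i _
    refine RingHom.IsIntegralElem.mul φ (φ.isIntegralElem_map) ?_
    exact integralElem_pow φ hX i
  have hF : φ.IsIntegralElem (π (((isUnit_algf (A := A) f).unit⁻¹ : Aˣ) : A)) := by
    obtain ⟨x, hx⟩ := h4
    have h5 : (π (((isUnit_algf (A := A) f).unit⁻¹ : Aˣ) : A))
        = π (algebraMap D[X] A (- (Polynomial.C ((u'⁻¹ : Dˣ) : D) * x))) := by
      have h6 : π (algebraMap D[X] A f) * π (algebraMap D[X] A (- (Polynomial.C ((u'⁻¹ : Dˣ) : D) * x)))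
          = 1 := by
        rw [← map_mul, ← map_mul, show f * (- (Polynomial.C ((u'⁻¹ : Dˣ) : D) * x))
          = - Polynomial.C ((u'⁻¹ : Dˣ) : D) * (f * x) by ring, ← hx, mul_sub, one_mul,
          neg_mul, neg_mul, ← Polynomial.C_mul]
        rw [Units.inv_mul, map_sub, map_neg, map_mul, map_sub, map_neg, map_mul, hp0]
        simp
      have h7 : π (((isUnit_algf (A := A) f).unit⁻¹ : Aˣ) : A) * π (algebraMap D[X] A f) = 1 := by
        rw [← map_mul, IsUnit.val_inv_mul, map_one]
      rw [← mul_one (π (((isUnit_algf (A := A) f).unit⁻¹ : Aˣ) : A)), ← h6, ← mul_assoc, h7, one_mul]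
    rw [h5]
    exact hpoly _
  have hinteg : φ.IsIntegral := by
    intro z
    obtain ⟨z, rfl⟩ := Ideal.Quotient.mk_surjective z
    obtain ⟨⟨q, ⟨_, k, rfl⟩⟩, hq⟩ := IsLocalization.surj (Submonoid.powers f) z
    have h8 : z = algebraMap D[X] A q * (((isUnit_algf (A := A) f).unit⁻¹ : Aˣ) : A) ^ k := by
      rw [← hq]
      simp only [map_pow]
      rw [mul_assoc, ← mul_pow, IsUnit.mul_val_inv, one_pow, mul_one]
    change φ.IsIntegralElem (π z)
    rw [h8, map_mul, map_pow]
    refine (hpoly q).mul φ ?_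
    exact integralElem_pow φ hF k
  obtain ⟨c, hc⟩ := integral_unit φ hinteg s (by
    refine IsUnit.of_mul_eq_one (π (-y)) ?_
    show π _ * π _ = _
    rw [← map_mul, ← sub_eq_zero, ← map_one π, ← map_sub]
    refine Ideal.Quotient.eq_zero_iff_mem.mpr ?_
    have := I.neg_mem hy
    convert this using 1
    simp only [RingHom.comp_apply]
    ring)
  exact ⟨c, Ideal.Quotient.eq_zero_iff_mem.mp hc⟩

/-- homogeneous evaluation -/
def hEv (N : ℕ) (q : D[X]) (X Y : A) : A :=
  ∑ j ∈ Finset.range (N + 1), algebraMap D[X] A (Polynomial.C (q.coeff j)) * X ^ j * Y ^ (N - j)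

theorem hEv_near (N : ℕ) (q : D[X]) (hq : q.natDegree ≤ N) (l c : A) :
    ∃ h : A, hEv N q (algebraMap D[X] A Polynomial.X + l * c) (1 - l)
      = algebraMap D[X] A q + l * h := by
  have h1 : algebraMap D[X] A q = ∑ j ∈ Finset.range (N + 1),
      algebraMap D[X] A (Polynomial.C (q.coeff j)) * algebraMap D[X] A Polynomial.X ^ j := by
    conv_lhs => rw [Polynomial.as_sum_range_C_mul_X_pow' q (n := N + 1) (by omega)]
    simp only [map_sum, map_mul, map_pow]
  have h2 : l ∣ hEv N q (algebraMap D[X] A Polynomial.X + l * c) (1 - l) - algebraMap D[X] A q := by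
    rw [h1, hEv, ← Finset.sum_sub_distrib]
    apply Finset.dvd_sum
    intro j _
    rw [mul_assoc, ← mul_sub]
    apply Dvd.dvd.mul_left
    have h3 : l ∣ (algebraMap D[X] A Polynomial.X + l * c) ^ j - algebraMap D[X] A Polynomial.X ^ j :=
      Dvd.dvd.trans ⟨c, by ring⟩ (sub_dvd_pow_sub_pow _ _ _)
    have h4 : l ∣ (1 - l) ^ (N - j) - 1 ^ (N - j) :=
      Dvd.dvd.trans ⟨-1, by ring⟩ (sub_dvd_pow_sub_pow _ _ _)
    obtain ⟨x, hx⟩ := h3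
    obtain ⟨y, hy⟩ := h4
    rw [one_pow] at hy
    exact ⟨x * (1 - l) ^ (N - j) + algebraMap D[X] A Polynomial.X ^ j * y, by
      linear_combination (1 - l) ^ (N - j) * hx + algebraMap D[X] A Polynomial.X ^ j * hy⟩
  obtain ⟨h, hh⟩ := h2
  exact ⟨h, by rw [← hh]; ring⟩

theorem hEv_map {L : Type*} [Field L] (ψ : A →+* L) (N : ℕ) (q : D[X]) (hq : q.natDegree ≤ N)
    (X Y : A) (hY : ψ Y ≠ 0) : ψ (hEv N q X Y) = ψ Y ^ N *
      q.eval₂ (ψ.comp ((algebraMap D[X] A).comp Polynomial.C)) (ψ X / ψ Y) := by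
  rw [Polynomial.eval₂_eq_sum_range' _ (n := N + 1) (by omega), hEv, map_sum, Finset.mul_sum]
  apply Finset.sum_congr rfl
  intro j hj
  have : ψ Y ^ N = ψ Y ^ j * ψ Y ^ (N - j) := by
    rw [← pow_add]; congr 1; rw [Finset.mem_range] at hj; omega
  simp only [map_mul, map_pow, RingHom.comp_apply]
  rw [this, div_pow]
  field_simp

theorem hEv_map_zero {L : Type*} [Field L] (ψ : A →+* L) (N : ℕ) (q : D[X])
    (X Y : A) (hY : ψ Y = 0) (hX : ψ X = 1) : ψ (hEv N q X Y) =
      ψ (algebraMap D[X] A (Polynomial.C (q.coeff N))) := by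
  rw [hEv, map_sum, Finset.sum_range_succ, Finset.sum_eq_zero]
  · simp [hX]
  · intro j hj
    rw [Finset.mem_range] at hj
    rw [map_mul, map_pow, hY, zero_pow (by omega), mul_zero]

/-- Step 2: membership in the polynomial ring -/
theorem pt_step2 {ι : Type*} (i0 : ι) (v : ι → A) (w : D) (S : D)
    (hw : algebraMap D[X] A (Polynomial.C w) ∈ Ideal.span (Set.range v))
    (p p' : ι → D[X]) (k : ℕ) (u : Dˣ)
    (hp : ∀ i, ∃ K, algebraMap D[X] A (p i) = algebraMap D[X] A f ^ K * v i)
    (hS : f ∣ p' i0 - Polynomial.C (S * u))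
    (hpp : ∀ i, Polynomial.C S ^ k * p i ∈ Ideal.span (Set.range p')) :
    ∃ e, Polynomial.C (S ^ e * w) ∈ Ideal.span (Set.range p') := by
  have h1 : algebraMap D[X] A (Polynomial.C w) ∈
      Ideal.map (algebraMap D[X] A) (Ideal.span (Set.range p)) := by
    refine (Ideal.span_le.mpr ?_) hw
    rintro _ ⟨i, rfl⟩
    obtain ⟨K, hK⟩ := hp i
    have h2 : algebraMap D[X] A (p i) ∈ Ideal.map (algebraMap D[X] A) (Ideal.span (Set.range p)) :=
      Ideal.mem_map_of_mem _ (Ideal.subset_span ⟨i, rfl⟩)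
    rw [hK] at h2
    exact (Ideal.unit_mul_mem_iff_mem _ ((isUnit_algf (A := A) f).pow K)).mp h2
  rw [IsLocalization.mem_map_algebraMap_iff (Submonoid.powers f)] at h1
  obtain ⟨⟨⟨y, hy⟩, ⟨_, L, rfl⟩⟩, h3⟩ := h1
  simp only at h3
  rw [← map_mul] at h3
  obtain ⟨⟨_, L', rfl⟩, h4⟩ := (IsLocalization.eq_iff_exists (Submonoid.powers f) A).mp h3
  simp only at h4
  have h5 : f ^ (L' + L) * Polynomial.C w ∈ Ideal.span (Set.range p) := by
    rw [show f ^ (L' + L) * Polynomial.C w = f ^ L' * (Polynomial.C w * f ^ L) by ring, h4]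
    exact Ideal.mul_mem_left _ _ hy
  have h6 : ∀ z ∈ Ideal.span (Set.range p), Polynomial.C S ^ k * z ∈ Ideal.span (Set.range p') := by
    intro z hz
    refine Submodule.span_induction (p := fun z _ => Polynomial.C S ^ k * z ∈
      Ideal.span (Set.range p')) ?_ ?_ ?_ ?_ hz
    · rintro _ ⟨i, rfl⟩; exact hpp i
    · rw [mul_zero]; exact Ideal.zero_mem _
    · intro a b _ _ ha hb; rw [mul_add]; exact Ideal.add_mem _ ha hb
    · intro a b _ hb
      rw [smul_eq_mul, mul_left_comm]; exact Ideal.mul_mem_left _ _ hb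
  have h7 := h6 _ h5
  obtain ⟨x, hx⟩ := hS
  refine ⟨L' + L + k, ?_⟩
  rw [← Ideal.Quotient.eq_zero_iff_mem] at h7 ⊢
  have h8 : Ideal.Quotient.mk (Ideal.span (Set.range p')) (p' i0) = 0 :=
    Ideal.Quotient.eq_zero_iff_mem.mpr (Ideal.subset_span ⟨i0, rfl⟩)
  have h9 := congrArg (Ideal.Quotient.mk (Ideal.span (Set.range p'))) hx
  rw [map_sub, h8, zero_sub, map_mul, map_mul, map_mul] at h9
  have h10 : Ideal.Quotient.mk (Ideal.span (Set.range p')) (Polynomial.C S) =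
      Ideal.Quotient.mk (Ideal.span (Set.range p')) f * (- Ideal.Quotient.mk _ x *
        Ideal.Quotient.mk _ (Polynomial.C ((u⁻¹ : Dˣ) : D))) := by
    have h11 : Ideal.Quotient.mk (Ideal.span (Set.range p')) (Polynomial.C (u : D)) *
        Ideal.Quotient.mk _ (Polynomial.C ((u⁻¹ : Dˣ) : D)) = 1 := by
      rw [← map_mul, ← map_mul, Units.mul_inv, map_one, map_one]
    linear_combination (- Ideal.Quotient.mk _ (Polynomial.C ((u⁻¹ : Dˣ) : D))) * h9
      - Ideal.Quotient.mk _ (Polynomial.C S) * h11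
  simp only [map_mul, map_pow] at h7 ⊢
  rw [pow_add, h10, mul_pow, ← h10]
  linear_combination (- Ideal.Quotient.mk _ x *
        Ideal.Quotient.mk _ (Polynomial.C ((u⁻¹ : Dˣ) : D))) ^ (L' + L) * h7

/-- the patching lemma -/
theorem pt_main {ι κ : Type*} [Fintype ι] [DecidableEq ι] [Fintype κ] [DecidableEq κ] (i0 : ι)
    (s : D) (E : Matrix κ κ A) (a : Matrix κ ι A) (b : Matrix ι κ A)
    (hab : a * b = algebraMap D[X] A (Polynomial.C s) • E)
    (hba : b * a = algebraMap D[X] A (Polynomial.C s) • 1) (hEa : E * a = a)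
    (q : κ → A) (hEq : E.mulVec q = q) {σ W W' : ℕ} (y g : A)
    (H1 : 1 + algebraMap D[X] A (Polynomial.C s) * y ∈ Ideal.span (Set.range q))
    (H2 : Un f σ W 1 g) (H2' : g ∈ Ideal.span (Set.range q))
    (H3 : Un f σ W' (s ^ 2) (b.mulVec q i0)) :
    ∃ q' : κ → A, E.mulVec q' = q' ∧ 1 ∈ Ideal.span (Set.range q') := by
  obtain ⟨c', hc'⟩ := pt_step1 _ g H2 H2' s y H1
  obtain ⟨pn, u1, u1', h1, h2, h3, h4⟩ := H3
  obtain ⟨K, p, hp⟩ := clear_den f (b.mulVec q)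
  obtain ⟨k, r, p', hpp⟩ := pdiv pn _ (s ^ 2) u1 h1 h3 p
  set cs : A := algebraMap D[X] A (Polynomial.C s) with hcs
  set u : D := 1 + s * c' with hu
  have hav : a.mulVec (b.mulVec q) = cs • q := by
    rw [Matrix.mulVec_mulVec, hab, Matrix.smul_mulVec, hEq]
  have hsu : algebraMap D[X] A (Polynomial.C (s * u)) ∈ Ideal.span (Set.range (b.mulVec q)) := by
    rw [Polynomial.C_mul, map_mul, ← hcs]
    have h5 : ∀ z ∈ Ideal.span (Set.range q), cs * z ∈ Ideal.span (Set.range (b.mulVec q)) := by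
      intro z hz
      refine Submodule.span_induction (p := fun z _ => cs * z ∈
        Ideal.span (Set.range (b.mulVec q))) ?_ ?_ ?_ ?_ hz
      · rintro _ ⟨i, rfl⟩
        have := congrFun hav i
        rw [Pi.smul_apply, smul_eq_mul] at this
        rw [← this]
        exact Ideal.sum_mem _ fun j _ => Ideal.mul_mem_left _ _ (Ideal.subset_span ⟨j, rfl⟩)
      · rw [mul_zero]; exact Ideal.zero_mem _
      · intro a b _ _ ha hb; rw [mul_add]; exact Ideal.add_mem _ ha hb
      · intro a b _ hb
        rw [smul_eq_mul, mul_left_comm]; exact Ideal.mul_mem_left _ _ hb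
    exact h5 _ hc'
  obtain ⟨e, he⟩ := pt_step2 (f := f) i0 (b.mulVec q) (s * u) (s ^ 2) hsu (Function.update p i0 pn)
    (Function.update p' i0 pn) k u1' (by
      intro i
      by_cases hi : i = i0
      · subst hi; rw [Function.update_self]; exact ⟨_, h2⟩
      · rw [Function.update_of_ne hi]; exact ⟨_, hp i⟩) (by rwa [Function.update_self]) (by
      intro i
      have hpn : pn ∈ Ideal.span (Set.range (Function.update p' i0 pn)) :=
        Ideal.subset_span ⟨i0, by rw [Function.update_self]⟩
      by_cases hi : i = i0
      · subst hi; rw [Function.update_self]; exact Ideal.mul_mem_left _ _ hpn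
      · rw [Function.update_of_ne hi, (hpp i).1]
        refine Ideal.add_mem _ (Ideal.mul_mem_left _ _ hpn)
          (Ideal.subset_span ⟨i, by rw [Function.update_of_ne hi]⟩))
  have hcop : IsCoprime ((s ^ 2) ^ k * s ^ 2) u := by
    have : IsCoprime s u := ⟨-c', 1, by rw [hu]; ring⟩
    exact IsCoprime.mul_left (this.pow_left.pow_left) this.pow_left
  obtain ⟨x, y', hxy⟩ := hcop
  set N := W' * σ
  set l : A := algebraMap D[X] A (Polynomial.C (x * ((s ^ 2) ^ k * s ^ 2))) with hl
  set t : A := algebraMap D[X] A Polynomial.X with ht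
  set Xv : A := t + l * (1 - t) with hXv
  choose h hh using fun i => hEv_near (A := A) N (p' i) (hpp i).2 l (1 - t)
  obtain ⟨hn, hhn⟩ := hEv_near (A := A) N pn h1 l (1 - t)
  set F : Aˣ := (isUnit_algf (A := A) f).unit with hF
  have hFv : algebraMap D[X] A f = F := rfl
  set cx : A := algebraMap D[X] A (Polynomial.C x) with hcx
  have hl' : l = cx * ((cs ^ 2) ^ k * cs ^ 2) := by
    rw [hl, hcx, hcs]; simp only [map_mul, map_pow]
  let G : ι → A := fun i => if i = i0 then cx * (cs ^ 2) ^ k * ((F⁻¹ : Aˣ) : A) ^ W' * hn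
    else cx * ((F⁻¹ : Aˣ) : A) ^ K * (h i + algebraMap D[X] A (r i) * hn)
  let q' := q + a.mulVec (cs • G)
  have hbq : b.mulVec q' = b.mulVec q + cs • (cs • G) := by
    rw [Matrix.mulVec_add, Matrix.mulVec_mulVec, hba, Matrix.smul_mulVec, Matrix.one_mulVec]
  have hFF : ∀ j : ℕ, (F : A) ^ j * ((F⁻¹ : Aˣ) : A) ^ j = 1 := by
    intro j; rw [← mul_pow, Units.mul_inv, one_pow]
  have e0 : (F : A) ^ W' * b.mulVec q' i0 = hEv N pn Xv (1 - l) := by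
    rw [hbq, hhn, Pi.add_apply, Pi.smul_apply, Pi.smul_apply, h2, hl', hFv]
    simp only [G, if_true, smul_eq_mul]
    linear_combination (cs * (cs * (cx * (cs ^ 2) ^ k * hn))) * hFF W'
  have e1 : ∀ i, i ≠ i0 → (cs ^ 2) ^ k * (F : A) ^ K * b.mulVec q' i
      = algebraMap D[X] A (r i) * hEv N pn Xv (1 - l) + hEv N (p' i) Xv (1 - l) := by
    intro i hi
    have h6 := congrArg (algebraMap D[X] A) (hpp i).1
    simp only [map_mul, map_pow, map_add] at h6
    rw [hp i, hFv, h2, ← hcs] at h6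
    rw [hbq, hhn, hh, Pi.add_apply, Pi.smul_apply, Pi.smul_apply, h2, hl']
    simp only [G, if_neg hi, smul_eq_mul]
    linear_combination h6 + ((cs ^ 2) ^ k * cs ^ 2 * cx * (h i + algebraMap D[X] A (r i) * hn)) * hFF K
  refine ⟨q', ?_, ?_⟩
  · rw [Matrix.mulVec_add, hEq, Matrix.mulVec_mulVec, hEa]
  rw [← Ideal.eq_top_iff_one]
  by_contra hne
  obtain ⟨M, hM, hqM⟩ := Ideal.exists_le_maximal _ hne
  let _ : Field (A ⧸ M) := Ideal.Quotient.field M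
  let ψ : A →+* A ⧸ M := Ideal.Quotient.mk M
  have hq0 : ∀ i, ψ (q' i) = 0 := fun i =>
    Ideal.Quotient.eq_zero_iff_mem.mpr (hqM (Ideal.subset_span ⟨i, rfl⟩))
  have hv0 : ∀ i, ψ (b.mulVec q' i) = 0 := by
    intro i
    rw [Matrix.mulVec, dotProduct, map_sum]
    exact Finset.sum_eq_zero fun j _ => by rw [map_mul, hq0, mul_zero]
  have hψu : ψ (algebraMap D[X] A (Polynomial.C u)) = 1 + ψ cs * ψ (algebraMap D[X] A (Polynomial.C c')) := by
    rw [hu, hcs]; simp only [map_add, map_mul, map_one]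
  have hun : ∀ z : Aˣ, ψ z ≠ 0 := fun z => (z.isUnit.map ψ).ne_zero
  by_cases hs : ψ cs = 0
  · have h7 : ∀ z ∈ Ideal.span (Set.range q), z ∈ M := by
      intro z hz
      refine (Ideal.span_le.mpr ?_) hz
      rintro _ ⟨i, rfl⟩
      have h8 := hq0 i
      simp only [q', Pi.add_apply, map_add, Matrix.mulVec_smul, Pi.smul_apply, smul_eq_mul, map_mul,
        hs, zero_mul, add_zero] at h8
      exact Ideal.Quotient.eq_zero_iff_mem.mp h8
    have h9 : ψ (algebraMap D[X] A (Polynomial.C u)) = 0 := Ideal.Quotient.eq_zero_iff_mem.mpr (h7 _ hc')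
    rw [hψu, hs, zero_mul, add_zero] at h9
    exact one_ne_zero h9
  have hVn : ψ (hEv N pn Xv (1 - l)) = 0 := by rw [← e0, map_mul, hv0, mul_zero]
  have hV : ∀ i, i ≠ i0 → ψ (hEv N (p' i) Xv (1 - l)) = 0 := by
    intro i hi
    have := congrArg ψ (e1 i hi)
    rw [map_mul, hv0, mul_zero, map_add, map_mul, hVn, mul_zero, zero_add] at this
    exact this.symm
  by_cases hY : ψ (1 - l) = 0
  · rw [hEv_map_zero ψ N pn Xv _ hY, h3] at hVn
    · simp only [map_mul, map_pow, mul_eq_zero] at hVn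
      rcases hVn with h10 | h10
      · exact hs (pow_eq_zero_iff (two_ne_zero) |>.mp h10)
      · exact hun (Units.map ((algebraMap D[X] A).comp Polynomial.C).toMonoidHom u1) h10
    · rw [map_sub, map_one, sub_eq_zero] at hY
      rw [hXv, map_add, map_mul, ← hY, one_mul, map_sub, map_one]; ring
  · rw [hEv_map ψ N pn h1 _ _ hY] at hVn
    set χ : D[X] →+* A ⧸ M := Polynomial.eval₂RingHom (ψ.comp ((algebraMap D[X] A).comp Polynomial.C))
      (ψ Xv / ψ (1 - l)) with hχ
    have h11 : Ideal.span (Set.range (Function.update p' i0 pn)) ≤ RingHom.ker χ := by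
      rw [Ideal.span_le]
      rintro _ ⟨i, rfl⟩
      show χ _ = 0
      by_cases hi : i = i0
      · subst hi
        rw [Function.update_self]
        exact (mul_eq_zero.mp hVn).resolve_left (pow_ne_zero _ hY)
      · rw [Function.update_of_ne hi]
        have := hV i hi
        rw [hEv_map ψ N (p' i) (hpp i).2 _ _ hY] at this
        exact (mul_eq_zero.mp this).resolve_left (pow_ne_zero _ hY)
    have h12 : χ (Polynomial.C ((s ^ 2) ^ e * (s * u))) = 0 := h11 he
    rw [hχ, Polynomial.coe_eval₂RingHom, Polynomial.eval₂_C] at h12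
    simp only [map_mul, map_pow, RingHom.comp_apply] at h12
    rw [← hcs] at h12
    have h13 : ψ (algebraMap D[X] A (Polynomial.C u)) = 0 :=
      ((mul_eq_zero.mp h12).resolve_left (pow_ne_zero _ (pow_ne_zero _ hs)) |> mul_eq_zero.mp).resolve_left hs
    apply hY
    have h14 : 1 - l = algebraMap D[X] A (Polynomial.C y') * algebraMap D[X] A (Polynomial.C u) := by
      rw [← map_mul, ← map_mul, hl, ← map_one (algebraMap D[X] A), ← map_sub, ← Polynomial.C_1,
        ← map_sub, ← hxy]
      congr 2
      ring
    rw [h14, map_mul, h13, mul_zero]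

theorem un_minimal {σ W : ℕ} {c : D} {a : A} (h : Un f σ W c a) (P : Ideal A)
    (hP : P ∈ minimalPrimes A) (ha : a ∈ P) : algebraMap D[X] A (Polynomial.C c) ∈ P := by
  have hPp : P.IsPrime := hP.1.1
  obtain ⟨p, u, u', h1, h2, h3, -⟩ := h
  let Q := P.comap (algebraMap D[X] A)
  have hQ : Q.IsPrime := Ideal.IsPrime.comap _
  let q := Q.comap (Polynomial.C : D →+* D[X])
  have hq : q.IsPrime := Ideal.IsPrime.comap _
  let q' : Ideal D[X] := q.map Polynomial.C
  have hq' : q'.IsPrime := Ideal.isPrime_map_C_of_isPrime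
  have hle : q' ≤ Q := Ideal.map_comap_le
  have hdQ : Disjoint (Submonoid.powers f : Set D[X]) (Q : Set D[X]) := by
    rw [Set.disjoint_left]
    rintro _ ⟨j, rfl⟩ hj
    have h4 : algebraMap D[X] A (f ^ j) ∈ P := hj
    rw [map_pow] at h4
    exact hPp.ne_top (P.eq_top_of_isUnit_mem h4 ((isUnit_algf f).pow j))
  have hd : Disjoint (Submonoid.powers f : Set D[X]) (q' : Set D[X]) := hdQ.mono_right hle
  have h5 := IsLocalization.isPrime_of_isPrime_disjoint (Submonoid.powers f) A q' hq' hd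
  have h6 : q'.map (algebraMap D[X] A) ≤ P := Ideal.map_le_iff_le_comap.mpr hle
  have h7 : q'.map (algebraMap D[X] A) = P := le_antisymm h6 (hP.2 ⟨h5, bot_le⟩ h6)
  have h8 : q' = Q := by
    have := IsLocalization.under_map_of_isPrime_disjoint (Submonoid.powers f) A hq' hd
    rw [h7] at this
    exact this.symm
  have h9 : p ∈ q' := by
    rw [h8]
    show algebraMap D[X] A p ∈ P
    rw [h2]
    exact P.mul_mem_left _ ha
  have h10 := Ideal.mem_map_C_iff.mp h9 (W * σ)
  rw [h3, Ideal.mul_unit_mem_iff_mem _ u.isUnit] at h10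
  exact h10

end PT
end

noncomputable section
section RankEq
open scoped Polynomial
universe u v

/-- `E` has rank `k` (used for idempotent matrices) -/
def RankEq {A κ : Type*} [CommRing A] [Fintype κ] [DecidableEq κ] (E : Matrix κ κ A) (k : ℕ) : Prop :=
  (1 + (Polynomial.X - 1 : A[X]) • E.map Polynomial.C).det = Polynomial.X ^ k

/-- idempotent matrices of constant rank have free image -/
def FreeI (A : Type u) [CommRing A] : Prop :=
  ∀ (N k : ℕ) (E : Matrix (Fin N) (Fin N) A), E * E = E → RankEq E k →
    ∃ (a : Matrix (Fin N) (Fin k) A) (b : Matrix (Fin k) (Fin N) A), a * b = E ∧ b * a = 1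

variable {A : Type u} {B : Type v} {κ ι : Type*} [CommRing A] [CommRing B] [Fintype κ]
  [DecidableEq κ] [Fintype ι] [DecidableEq ι]

theorem RankEq.map (φ : A →+* B) {E : Matrix κ κ A} {k : ℕ} (h : RankEq E k) :
    RankEq (E.map φ) k := by
  have h1 := congrArg (Polynomial.mapRingHom φ) h
  rw [RingHom.map_det] at h1
  rw [RankEq]
  convert h1 using 2
  · ext i j : 2
    simp [Matrix.one_apply, apply_ite]
  · simp

theorem RankEq.zero {E : Matrix κ κ A} (hE : E * E = E) (h : RankEq E 0) : E = 0 := by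
  have h1 := congrArg (Polynomial.evalRingHom (0 : A)) h
  rw [RingHom.map_det] at h1
  have h2 : (Polynomial.evalRingHom (0 : A)).mapMatrix
      (1 + (Polynomial.X - 1 : A[X]) • E.map Polynomial.C) = 1 - E := by
    ext i j : 2
    simp [Matrix.one_apply]
    by_cases hij : i = j
    · simp [hij]; ring
    · simp [hij]
  rw [h2] at h1
  have h3 : IsUnit (1 - E) := by
    rw [Matrix.isUnit_iff_isUnit_det, h1]; simp
  have h4 : (1 - E) * E = 0 := by rw [sub_mul, one_mul, hE, sub_self]
  exact (h3.mul_right_eq_zero).mp h4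

theorem rankEq_of_factor (a : Matrix κ ι A) (b : Matrix ι κ A) (h : b * a = 1) :
    RankEq (a * b) (Fintype.card ι) := by
  rw [RankEq]
  have h1 : (Polynomial.X - 1 : A[X]) • (a * b).map Polynomial.C
      = ((Polynomial.X - 1 : A[X]) • a.map Polynomial.C) * (b.map Polynomial.C) := by
    rw [Matrix.map_mul, Matrix.smul_mul]
  rw [h1, Matrix.det_one_add_mul_comm, Matrix.mul_smul, ← Matrix.map_mul, h]
  have h2 : (1 + (Polynomial.X - 1 : A[X]) • (1 : Matrix ι ι A).map Polynomial.C)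
      = (Polynomial.X : A[X]) • (1 : Matrix ι ι A[X]) := by
    rw [Matrix.map_one _ (by simp) (by simp), sub_smul, one_smul]; abel
  rw [h2, Matrix.det_smul]
  simp

theorem RankEq.unique [Nontrivial A] {E : Matrix κ κ A} {k l : ℕ} (h : RankEq E k)
    (h' : RankEq E l) : k = l := by
  rw [RankEq] at h h'
  rw [h] at h'
  simpa using congrArg Polynomial.natDegree h'

theorem RankEq.mul_aux (E F : Matrix κ κ A) :
    (1 + (Polynomial.X - 1 : A[X]) • E.map Polynomial.C) *
      (1 + (Polynomial.X - 1 : A[X]) • F.map Polynomial.C)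
    = 1 + (Polynomial.X - 1 : A[X]) • (E + F).map Polynomial.C +
      ((Polynomial.X - 1) * (Polynomial.X - 1) : A[X]) • (E * F).map Polynomial.C := by
  rw [Matrix.map_mul, Matrix.map_add _ (by simp), add_mul, mul_add, mul_add, one_mul, one_mul, mul_one, Matrix.smul_mul,
    Matrix.mul_smul, smul_smul, smul_add]
  abel

theorem RankEq.compl {E : Matrix κ κ A} (hE : E * E = E) {r : ℕ} (h : RankEq E r)
    (hr : r ≤ Fintype.card κ) : RankEq (1 - E) (Fintype.card κ - r) := by
  have h1 := RankEq.mul_aux (1 - E) E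
  rw [sub_mul (1 : Matrix κ κ A) E E, one_mul E, hE, sub_self, sub_add_cancel, Matrix.map_one _ (by simp) (by simp),
    Matrix.map_zero _ (by simp), smul_zero, add_zero, show (1 : Matrix κ κ A[X]) + (Polynomial.X - 1 : A[X]) • 1 = (Polynomial.X : A[X]) • 1 by
      rw [sub_smul, one_smul, add_sub_cancel]] at h1
  have h2 := congrArg Matrix.det h1
  rw [Matrix.det_mul, Matrix.det_smul, Matrix.det_one, mul_one] at h2
  rw [RankEq] at h ⊢
  rw [h] at h2
  have h3 : (Polynomial.X : A[X]) ^ Fintype.card κ = Polynomial.X ^ (Fintype.card κ - r) * Polynomial.X ^ r := by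
    rw [← pow_add]; congr 1; omega
  rw [h3] at h2
  exact (Polynomial.monic_X_pow (R := A) r).isRegular.right h2

/-- splitting off a rank one summand -/
theorem RankEq.split {E : Matrix κ κ A} {k : ℕ} (hE : E * E = E) (h : RankEq E (k + 1))
    (p : κ → A) (q : κ → A) (h1 : p ⬝ᵥ E.mulVec q = 1) :
    ∃ (a : Matrix κ (Fin 1) A) (b : Matrix (Fin 1) κ A), b * a = 1 ∧ E * a = a ∧ b * E = b ∧
      (E - a * b) * (E - a * b) = E - a * b ∧ RankEq (E - a * b) k := by
  let a : Matrix κ (Fin 1) A := E * Matrix.of fun i _ => q i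
  let b : Matrix (Fin 1) κ A := (Matrix.of fun _ i => p i) * E
  have hba : b * a = 1 := by
    ext i j
    have : b * a = (Matrix.of fun _ i => p i) * (E * Matrix.of fun i _ => q i) := by
      simp only [a, b]
      rw [Matrix.mul_assoc, ← Matrix.mul_assoc E E, hE]
    rw [this]
    have hij : i = j := Subsingleton.elim _ _
    subst hij
    rw [Matrix.one_apply_eq, ← h1]
    simp [Matrix.mul_apply, dotProduct, Matrix.mulVec]
  have hEa : E * a = a := by simp only [a]; rw [← Matrix.mul_assoc, hE]
  have hbE : b * E = b := by simp only [b]; rw [Matrix.mul_assoc, hE]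
  have hEab : E * (a * b) = a * b := by rw [← Matrix.mul_assoc, hEa]
  have habE : (a * b) * E = a * b := by rw [Matrix.mul_assoc, hbE]
  have hab2 : (a * b) * (a * b) = a * b := by
    rw [Matrix.mul_assoc, ← Matrix.mul_assoc b, hba, Matrix.one_mul]
  refine ⟨a, b, hba, hEa, hbE, ?_, ?_⟩
  · rw [sub_mul, mul_sub, mul_sub, hE, hEab, habE, hab2]; abel
  · have h2 := RankEq.mul_aux (E - a * b) (a * b)
    rw [sub_mul E (a * b) (a * b), hEab, hab2, sub_self, sub_add_cancel, Matrix.map_zero _ (by simp), smul_zero,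
      add_zero] at h2
    have h3 := congrArg Matrix.det h2
    have h4 := rankEq_of_factor a b hba
    rw [RankEq] at h h4 ⊢
    rw [Matrix.det_mul, h, h4, Fintype.card_fin, pow_one, pow_succ] at h3
    exact (Polynomial.monic_X (R := A)).isRegular.right h3

theorem FreeI.of_equiv (e : A ≃+* B) (h : FreeI A) : FreeI B := by
  intro N k E hE hk
  obtain ⟨a, b, h1, h2⟩ := h N k (E.map e.symm) (by
    rw [← Matrix.map_mul, hE]) (hk.map (e.symm : B →+* A))
  refine ⟨a.map e, b.map e, ?_, ?_⟩
  · rw [← Matrix.map_mul, h1]; ext; simp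
  · rw [← Matrix.map_mul, h2, Matrix.map_one _ (map_zero e) (map_one e)]

end RankEq
end

noncomputable section
section BaseChange
open scoped Polynomial
universe u v
variable {R : Type u} [CommRing R] {S : Type v} [CommRing S]

/-- base change -/
def bc (φ : R →+* S) (m n : ℕ) (f : R[X]) : Acon R m n f →+* Acon S m n (f.map φ) :=
  aLift ((aR S m n (f.map φ)).comp φ) (aX S m n (f.map φ)) (aY S m n (f.map φ)) (aT S m n (f.map φ)) (by
    rw [← Polynomial.eval₂_map]; exact isUnit_f S m n (f.map φ))

variable (φ : R →+* S) (m n : ℕ) (f : R[X])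

theorem bc_R (r : R) : bc φ m n f (aR R m n f r) = aR S m n (f.map φ) (φ r) := by
  rw [bc, aLift_R]; rfl
theorem bc_X (i) : bc φ m n f (aX R m n f i) = aX S m n (f.map φ) i := by rw [bc, aLift_X]
theorem bc_Y (i) : bc φ m n f (aY R m n f i) = aY S m n (f.map φ) i := by rw [bc, aLift_Y]
theorem bc_T : bc φ m n f (aT R m n f) = aT S m n (f.map φ) := by rw [bc, aLift_T]

theorem map_inv_of {A B : Type*} [CommRing A] [CommRing B] (g : A →+* B) (x : Aˣ) (y : Bˣ)
    (h : g x = y) : g ((x⁻¹ : Aˣ) : A) = ((y⁻¹ : Bˣ) : B) := by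
  have h1 : g ((x⁻¹ : Aˣ) : A) * (y : B) = 1 := by rw [← h, ← map_mul, Units.inv_mul, map_one]
  calc g ((x⁻¹ : Aˣ) : A) = g ((x⁻¹ : Aˣ) : A) * (y * ((y⁻¹ : Bˣ) : B)) := by rw [Units.mul_inv, mul_one]
    _ = _ := by rw [← mul_assoc, h1, one_mul]

theorem bc_Y_inv (i) : bc φ m n f ((aY R m n f i)⁻¹ : (Acon R m n f)ˣ).1
    = ((aY S m n (f.map φ) i)⁻¹ : (Acon S m n (f.map φ))ˣ).1 :=
  map_inv_of _ _ _ (bc_Y φ m n f i)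

theorem bc_F : bc φ m n f (aF R m n f) = aF S m n (f.map φ) := by
  rw [aF_val, aF_val, Polynomial.hom_eval₂, Polynomial.eval₂_map, bc_T]
  congr 1
  ext r
  exact bc_R φ m n f r

theorem bc_F_inv : bc φ m n f ((aF R m n f)⁻¹ : (Acon R m n f)ˣ).1
    = ((aF S m n (f.map φ))⁻¹ : (Acon S m n (f.map φ))ˣ).1 :=
  map_inv_of _ _ _ (bc_F φ m n f)

theorem bc_surjective (hφ : Function.Surjective φ) : Function.Surjective (bc φ m n f) := by
  intro a
  have := acon_closure (bc φ m n f).range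
    (fun r => by obtain ⟨r, rfl⟩ := hφ r; exact ⟨_, bc_R φ m n f r⟩)
    (fun i => ⟨_, bc_X φ m n f i⟩) (fun i => ⟨_, bc_Y φ m n f i⟩) (fun i => ⟨_, bc_Y_inv φ m n f i⟩)
    ⟨_, bc_T φ m n f⟩ ⟨_, bc_F_inv φ m n f⟩ a
  exact this

/-- detecting the kernel of a base change -/
theorem bc_ker {L : Type*} [CommRing L] (j : Acon R m n f →+* L) (ψ : S →+* L)
    (h : ∀ r, ψ (φ r) = j (aR R m n f r)) (x : Acon R m n f) (hx : bc φ m n f x = 0) : j x = 0 := by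
  let g : Acon S m n (f.map φ) →+* L := aLift ψ (fun i => j (aX R m n f i))
    (fun i => Units.map j.toMonoidHom (aY R m n f i)) (j (aT R m n f)) (by
      rw [Polynomial.eval₂_map]
      have h1 := (isUnit_f R m n f).map j
      rw [Polynomial.hom_eval₂] at h1
      convert h1 using 2
      ext r
      exact h r)
  have h2 : g.comp (bc φ m n f) = j := by
    apply acon_hom_ext
    · intro r; rw [RingHom.comp_apply, bc_R]; simp only [g]; rw [aLift_R, h]
    · intro r; rw [RingHom.comp_apply, bc_X]; simp only [g]; rw [aLift_X]
    · intro r; rw [RingHom.comp_apply, bc_Y]; simp only [g]; rw [aLift_Y]; rfl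
    · rw [RingHom.comp_apply, bc_T]; simp only [g]; rw [aLift_T]
  rw [← h2, RingHom.comp_apply, hx, map_zero]

theorem bc_quot_ker (I : Ideal R) (x : Acon R m n f) (hx : bc (Ideal.Quotient.mk I) m n f x = 0) :
    x ∈ I.map (aR R m n f) := by
  have := bc_ker (Ideal.Quotient.mk I) m n f (Ideal.Quotient.mk (I.map (aR R m n f)))
    (Ideal.Quotient.lift I ((Ideal.Quotient.mk (I.map (aR R m n f))).comp (aR R m n f)) (by
      intro a ha
      exact Ideal.Quotient.eq_zero_iff_mem.mpr (Ideal.mem_map_of_mem _ ha)))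
    (fun r => rfl) x hx
  exact Ideal.Quotient.eq_zero_iff_mem.mp this

theorem bc_loc_ker (M : Submonoid R) [Algebra R S] [IsLocalization M S] (x : Acon R m n f)
    (hx : bc (algebraMap R S) m n f x = 0) : ∃ s ∈ M, aR R m n f s * x = 0 := by
  let L := Localization (M.map (aR R m n f))
  have hu : ∀ y : M, IsUnit ((algebraMap (Acon R m n f) L).comp (aR R m n f) y) := fun y =>
    IsLocalization.map_units L (⟨_, Submonoid.mem_map_of_mem (aR R m n f) y.2⟩ : M.map (aR R m n f))
  have := bc_ker (algebraMap R S) m n f (algebraMap (Acon R m n f) L)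
    (IsLocalization.lift (M := M) hu) (fun r => IsLocalization.lift_eq hu r) x hx
  rw [IsLocalization.map_eq_zero_iff (M.map (aR R m n f))] at this
  obtain ⟨⟨_, ⟨s, hs, rfl⟩⟩, h⟩ := this
  exact ⟨s, hs, h⟩

theorem bc_loc_surj (M : Submonoid R) [Algebra R S] [IsLocalization M S]
    (x : Acon S m n (f.map (algebraMap R S))) :
    ∃ s ∈ M, ∃ y, bc (algebraMap R S) m n f y = bc (algebraMap R S) m n f (aR R m n f s) * x := by
  let T : Subring (Acon S m n (f.map (algebraMap R S))) :=
    { carrier := {x | ∃ s ∈ M, ∃ y, bc (algebraMap R S) m n f y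
        = bc (algebraMap R S) m n f (aR R m n f s) * x}
      mul_mem' := by
        rintro a b ⟨s, hs, y, h⟩ ⟨s', hs', y', h'⟩
        refine ⟨s * s', M.mul_mem hs hs', y * y', ?_⟩
        rw [map_mul, h, h', map_mul, map_mul]; ring
      one_mem' := ⟨1, M.one_mem, 1, by simp⟩
      add_mem' := by
        rintro a b ⟨s, hs, y, h⟩ ⟨s', hs', y', h'⟩
        refine ⟨s * s', M.mul_mem hs hs', aR R m n f s' * y + aR R m n f s * y', ?_⟩
        rw [map_add, map_mul, map_mul, h, h', map_mul, map_mul]; ring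
      zero_mem' := ⟨1, M.one_mem, 0, by simp⟩
      neg_mem' := by
        rintro a ⟨s, hs, y, h⟩
        exact ⟨s, hs, -y, by rw [map_neg, h]; ring⟩ }
  have hT : ∀ y, bc (algebraMap R S) m n f y ∈ T := fun y => ⟨1, M.one_mem, y, by simp⟩
  refine acon_closure T ?_ ?_ ?_ ?_ ?_ ?_ x
  · intro r
    obtain ⟨⟨a, s⟩, h⟩ := IsLocalization.surj M r
    refine ⟨s, s.2, aR R m n f a, ?_⟩
    rw [bc_R, bc_R, ← h, map_mul]; ring
  · intro i; rw [← bc_X]; exact hT _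
  · intro i; rw [← bc_Y]; exact hT _
  · intro i; rw [← bc_Y_inv]; exact hT _
  · rw [← bc_T]; exact hT _
  · rw [← bc_F_inv]; exact hT _

end BaseChange
end

noncomputable section
section GF
open scoped Polynomial
universe u v
variable {R : Type u} [CommRing R]

theorem bc_loc_ker_fin {S : Type v} [CommRing S] (m n : ℕ) (f : R[X]) (M : Submonoid R) [Algebra R S]
    [IsLocalization M S] {ι : Type*} [Fintype ι] (x : ι → Acon R m n f)
    (hx : ∀ i, bc (algebraMap R S) m n f (x i) = 0) : ∃ s ∈ M, ∀ i, aR R m n f s * x i = 0 := by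
  choose s hs h using fun i => bc_loc_ker m n f M (x i) (hx i)
  refine ⟨∏ i, s i, M.prod_mem fun i _ => hs i, fun i => ?_⟩
  obtain ⟨t, ht⟩ := Finset.dvd_prod_of_mem s (Finset.mem_univ i)
  rw [ht, map_mul, mul_right_comm, h, zero_mul]

theorem bc_loc_surj_fin {S : Type v} [CommRing S] (m n : ℕ) (f : R[X]) (M : Submonoid R) [Algebra R S]
    [IsLocalization M S] {ι : Type*} [Fintype ι] (x : ι → Acon S m n (f.map (algebraMap R S))) :
    ∃ s ∈ M, ∃ y : ι → Acon R m n f, ∀ i, bc (algebraMap R S) m n f (y i)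
      = bc (algebraMap R S) m n f (aR R m n f s) * x i := by
  choose s hs y h using fun i => bc_loc_surj m n f M (x i)
  refine ⟨∏ i, s i, M.prod_mem fun i _ => hs i, ?_⟩
  choose t ht using fun i => Finset.dvd_prod_of_mem s (Finset.mem_univ i)
  refine ⟨fun i => aR R m n f (t i) * y i, fun i => ?_⟩
  rw [map_mul, h, ht i, map_mul (aR R m n f), map_mul]
  ring

theorem gf_local {S : Type u} [CommRing S] {m n : ℕ} {f : R[X]} (M : Submonoid R) [Algebra R S]
    [IsLocalization M S] (hS : FreeI (Acon S m n (f.map (algebraMap R S)))) {N k : ℕ}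
    (E : Matrix (Fin N) (Fin N) (Acon R m n f)) (hE : E * E = E) (hk : RankEq E k) :
    ∃ s ∈ M, ∃ (a : Matrix (Fin N) (Fin k) (Acon R m n f)) (b : Matrix (Fin k) (Fin N) (Acon R m n f)),
      a * b = aR R m n f s • E ∧ b * a = aR R m n f s • 1 ∧ E * a = a := by
  set β := bc (algebraMap R S) m n f
  obtain ⟨a', b', h1, h2⟩ := hS N k (E.map β) (by rw [← Matrix.map_mul, hE]) (hk.map β)
  have h3 : E.map β * a' = a' := by rw [← h1, Matrix.mul_assoc, h2, Matrix.mul_one]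
  obtain ⟨s, hs, y, hy⟩ := bc_loc_surj_fin m n f M
    (Sum.elim (fun p : Fin N × Fin k => a' p.1 p.2) (fun p : Fin k × Fin N => b' p.1 p.2))
  let a : Matrix (Fin N) (Fin k) (Acon R m n f) := Matrix.of fun i j => y (Sum.inl (i, j))
  let b : Matrix (Fin k) (Fin N) (Acon R m n f) := Matrix.of fun i j => y (Sum.inr (i, j))
  have ha : a.map β = β (aR R m n f s) • a' := by ext i j; exact hy (Sum.inl (i, j))
  have hb : b.map β = β (aR R m n f s) • b' := by ext i j; exact hy (Sum.inr (i, j))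
  set t := aR R m n f s with ht
  have e1 : (a * b - (t * t) • E).map β = 0 := by
    rw [Matrix.map_sub _ (map_sub β), Matrix.map_mul, ha, hb, Matrix.smul_mul, Matrix.mul_smul, smul_smul, h1]
    ext i j; simp
  have e2 : (b * a - (t * t) • 1).map β = 0 := by
    rw [Matrix.map_sub _ (map_sub β), Matrix.map_mul, ha, hb, Matrix.smul_mul, Matrix.mul_smul, smul_smul, h2]
    ext i j
    by_cases hij : i = j <;> simp [hij]
  have e3 : (E * a - a).map β = 0 := by
    rw [Matrix.map_sub _ (map_sub β), Matrix.map_mul, ha, Matrix.mul_smul, h3, sub_self]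
  obtain ⟨s', hs', hk'⟩ := bc_loc_ker_fin (S := S) m n f M
    (Sum.elim (fun p : Fin N × Fin N => (a * b - (t * t) • E) p.1 p.2)
      (Sum.elim (fun p : Fin k × Fin k => (b * a - (t * t) • (1 : Matrix (Fin k) (Fin k) (Acon R m n f))) p.1 p.2)
        (fun p : Fin N × Fin k => (E * a - a) p.1 p.2))) (by
      rintro (p | p | p)
      · exact congrFun (congrFun e1 p.1) p.2
      · exact congrFun (congrFun e2 p.1) p.2
      · exact congrFun (congrFun e3 p.1) p.2)
  set t' := aR R m n f s' with ht'
  refine ⟨s' * (s * s), M.mul_mem hs' (M.mul_mem hs hs), t' • a, b, ?_, ?_, ?_⟩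
  · rw [Matrix.smul_mul, map_mul, map_mul, ← ht, ← ht', mul_smul, ← sub_eq_zero, ← smul_sub]
    ext i j
    exact hk' (Sum.inl (i, j))
  · rw [Matrix.mul_smul, map_mul, map_mul, ← ht, ← ht', mul_smul, ← sub_eq_zero, ← smul_sub]
    ext i j
    exact hk' (Sum.inr (Sum.inl (i, j)))
  · rw [Matrix.mul_smul, ← sub_eq_zero, ← smul_sub]
    ext i j
    exact hk' (Sum.inr (Sum.inr (i, j)))

theorem atPrime_isField [IsReduced R] (p : Ideal R) (hp : p ∈ minimalPrimes R) [p.IsPrime] :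
    IsField (Localization.AtPrime p) := by
  rw [IsLocalRing.isField_iff_maximalIdeal_eq]
  have h1 := IsLocalization.AtPrime.radical_map_of_mem_minimalPrimes (A := Localization.AtPrime p) p ⊥ hp
  rw [Ideal.map_bot, IsLocalization.AtPrime.map_eq_maximalIdeal p] at h1
  rw [← h1]
  exact nilradical_eq_zero _

/-- generic freeness over all fields -/
def HF (R : Type u) [CommRing R] (m n : ℕ) (f : R[X]) : Prop :=
  ∀ (K : Type u) [Field K] (φ : R →+* K), FreeI (Acon K m n (f.map φ))

theorem gf [IsNoetherianRing R] [IsReduced R] {m n : ℕ} {f : R[X]} (hHF : HF R m n f) {N k : ℕ}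
    (E : Matrix (Fin N) (Fin N) (Acon R m n f)) (hE : E * E = E) (hk : RankEq E k) :
    ∃ s ∈ nonZeroDivisors R,
      ∃ (a : Matrix (Fin N) (Fin k) (Acon R m n f)) (b : Matrix (Fin k) (Fin N) (Acon R m n f)),
      a * b = aR R m n f s • E ∧ b * a = aR R m n f s • 1 ∧ E * a = a := by
  classical
  let ι := minimalPrimes R
  let _ : Fintype ι := (minimalPrimes.finite_of_isNoetherianRing R).fintype
  have hpr : ∀ p : ι, p.1.IsPrime := fun p => p.2.1.1
  have hloc : ∀ p : ι, ∃ s ∈ p.1.primeCompl, ∃ (a : Matrix (Fin N) (Fin k) (Acon R m n f)) (b : Matrix (Fin k) (Fin N) (Acon R m n f)),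
      a * b = aR R m n f s • E ∧ b * a = aR R m n f s • 1 ∧ E * a = a := by
    intro p
    let _ : Field (Localization.AtPrime p.1) := (atPrime_isField p.1 p.2).toField
    exact gf_local (S := Localization.AtPrime p.1) p.1.primeCompl (hHF _ _) E hE hk
  choose s hs a b h1 h2 h3 using hloc
  have hx : ∀ p q : ι, ∃ x : R, x ∉ p.1 ∧ (q ≠ p → x ∈ q.1) := by
    intro p q
    by_cases hqp : q = p
    · exact ⟨1, fun h => (hpr p).ne_top (p.1.eq_top_iff_one.mpr h), fun h => absurd hqp h⟩
    · have : ¬ q.1 ≤ p.1 := fun h => hqp (Subtype.ext (le_antisymm h (p.2.2 ⟨hpr q, bot_le⟩ h)))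
      obtain ⟨x, hx, hx'⟩ := Set.not_subset.mp this
      exact ⟨x, hx', fun _ => hx⟩
  choose x hx1 hx2 using hx
  let t : ι → R := fun p => ∏ q, x p q
  have ht1 : ∀ p, t p ∉ p.1 := by
    intro p h
    rw [Ideal.IsPrime.prod_mem_iff] at h
    obtain ⟨q, -, hq⟩ := h
    exact hx1 p q hq
  have ht2 : ∀ p q : ι, q ≠ p → t p ∈ q.1 := fun p q hq =>
    Ideal.mem_of_dvd _ (Finset.dvd_prod_of_mem _ (Finset.mem_univ q)) (hx2 p q hq)
  have hzero : ∀ y : R, (∀ p : ι, y ∈ p.1) → y = 0 := by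
    intro y hy
    have : y ∈ sInf ((⊥ : Ideal R).minimalPrimes) := by
      rw [Submodule.mem_sInf]
      intro p hp
      exact hy ⟨p, hp⟩
    rw [Ideal.sInf_minimalPrimes] at this
    have h := nilradical_eq_zero R
    have h' : y ∈ nilradical R := this
    rw [h] at h'
    exact h'
  have htt : ∀ p q : ι, p ≠ q → t p * t q = 0 := by
    intro p q hpq
    apply hzero
    intro r
    by_cases hr : r = p
    · subst hr; exact Ideal.mul_mem_left _ _ (ht2 q r hpq)
    · exact Ideal.mul_mem_right _ _ (ht2 p r hr)
  let c : ι → Acon R m n f := fun p => aR R m n f (t p)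
  have hcc : ∀ p q : ι, p ≠ q → c p * c q = 0 := by
    intro p q hpq
    simp only [c]
    rw [← map_mul, htt p q hpq, map_zero]
  refine ⟨∑ p, t p * t p * s p, ?_, ∑ p, c p • a p, ∑ p, c p • b p, ?_, ?_, ?_⟩
  · rw [mem_nonZeroDivisors_iff_right]
    intro y hy
    apply hzero
    intro p
    have h4 : y * (∑ p, t p * t p * s p) ∈ p.1 := by rw [hy]; exact p.1.zero_mem
    refine ((hpr p).mem_or_mem h4).resolve_right ?_
    intro h5
    rw [← Finset.add_sum_erase _ _ (Finset.mem_univ p)] at h5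
    have h6 : ∑ q ∈ Finset.univ.erase p, t q * t q * s q ∈ p.1 := by
      refine Ideal.sum_mem _ fun q hq => ?_
      rw [mul_assoc]
      exact Ideal.mul_mem_right _ _ (ht2 q p (Finset.ne_of_mem_erase hq).symm)
    have h7 := (Ideal.add_mem_iff_left _ h6).mp h5
    rcases (hpr p).mem_or_mem h7 with h8 | h8
    · rcases (hpr p).mem_or_mem h8 with h9 | h9 <;> exact ht1 p h9
    · exact hs p h8
  · rw [Matrix.sum_mul, map_sum, Finset.sum_smul]
    refine Finset.sum_congr rfl fun p _ => ?_
    rw [Matrix.mul_sum, Finset.sum_eq_single p]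
    · rw [Matrix.smul_mul, Matrix.mul_smul, h1, smul_smul, smul_smul, map_mul, map_mul]
    · intro q _ hq
      rw [Matrix.smul_mul, Matrix.mul_smul, smul_smul, hcc p q hq.symm, zero_smul]
    · intro h; exact absurd (Finset.mem_univ _) h
  · rw [Matrix.sum_mul, map_sum, Finset.sum_smul]
    refine Finset.sum_congr rfl fun p _ => ?_
    rw [Matrix.mul_sum, Finset.sum_eq_single p]
    · rw [Matrix.smul_mul, Matrix.mul_smul, h2, smul_smul, smul_smul, map_mul, map_mul]
    · intro q _ hq
      rw [Matrix.smul_mul, Matrix.mul_smul, smul_smul, hcc p q hq.symm, zero_smul]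
    · intro h; exact absurd (Finset.mem_univ _) h
  · rw [Matrix.mul_sum]
    refine Finset.sum_congr rfl fun p _ => ?_
    rw [Matrix.mul_smul, h3]

end GF
end

noncomputable section
section ThmU
open scoped Polynomial
universe u v
variable {R : Type u} [CommRing R]

/-- every idempotent of rank `k` has a unimodular element -/
def UC (R : Type u) [CommRing R] (m n : ℕ) (f : R[X]) (k : ℕ) : Prop :=
  ∀ (N : ℕ) (E : Matrix (Fin N) (Fin N) (Acon R m n f)), E * E = E → RankEq E k →
    ∃ φ q : Fin N → Acon R m n f, φ ⬝ᵥ E.mulVec q = 1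

theorem map_mulVec_comp {A B : Type*} [CommRing A] [CommRing B] {κ ι : Type*} [Fintype κ]
    (g : A →+* B) (M : Matrix ι κ A) (v : κ → A) : g ∘ (M.mulVec v) = (M.map g).mulVec (g ∘ v) := by
  ext i; exact RingHom.map_mulVec g M v i

theorem uc_lift {m n : ℕ} {f : R[X]} {k : ℕ} (I : Ideal R)
    (h : UC (R ⧸ I) m n (f.map (Ideal.Quotient.mk I)) k) {N : ℕ}
    (E : Matrix (Fin N) (Fin N) (Acon R m n f)) (hE : E * E = E) (hk : RankEq E k) :
    ∃ φ q : Fin N → Acon R m n f, φ ⬝ᵥ E.mulVec q - 1 ∈ I.map (aR R m n f) := by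
  set β := bc (Ideal.Quotient.mk I) m n f
  have hs := bc_surjective (Ideal.Quotient.mk I) m n f Ideal.Quotient.mk_surjective
  obtain ⟨φ', q', h1⟩ := h N (E.map β) (by rw [← Matrix.map_mul, hE]) (hk.map β)
  choose φ hφ using fun i => hs (φ' i)
  choose q hq using fun i => hs (q' i)
  refine ⟨φ, q, bc_quot_ker m n f I _ ?_⟩
  have e1 : β ∘ φ = φ' := funext hφ
  have e2 : β ∘ q = q' := funext hq
  show β _ = 0
  rw [map_sub, RingHom.map_dotProduct, map_mulVec_comp, e1, e2, h1, map_one, sub_self]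

theorem mem_span_map {A B : Type*} [CommRing A] [CommRing B] {κ : Type*}
    (g : A →+* B) (q : κ → A) (x : A) (hx : x ∈ Ideal.span (Set.range q)) :
    g x ∈ Ideal.span (Set.range (g ∘ q)) := by
  have := Ideal.mem_map_of_mem g hx
  rwa [Ideal.map_span, ← Set.range_comp] at this

theorem uc_reduced [IsNoetherianRing R] [IsReduced R] {m n : ℕ} {f : R[X]} (hf : f.Monic)
    (hnat : f.natDegree ≠ 0 ∨ n = 0) (hHF : HF R m n f) (k : ℕ) (hd : ringKrullDim R ≤ k) (k' : ℕ)
    (hk' : k ≤ k')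
    (IH : ∀ s ∈ nonZeroDivisors R, UC (R ⧸ Ideal.span {s}) m n (f.map (Ideal.Quotient.mk (Ideal.span {s})))
      (k' + 1)) : UC R m n f (k' + 1) := by
  intro N E hE hk
  have := acon_noeth R m n f
  obtain ⟨s, hs, a, b, hab, hba, hEa⟩ := gf hHF E hE hk
  obtain ⟨φ, q0, h0⟩ := uc_lift _ (IH s hs) E hE hk
  rw [Ideal.map_span, Set.image_singleton, Ideal.mem_span_singleton] at h0
  obtain ⟨y, hy⟩ := h0
  set t := aR R m n f s with ht
  set q := E.mulVec q0 with hq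
  have hEq : E.mulVec q = q := by rw [hq, Matrix.mulVec_mulVec, hE]
  set v := b.mulVec q with hv
  obtain ⟨c0, hc0⟩ := key_un hf hnat (v (Fin.last k'))
  have ht2 : aR R m n f (s ^ 2) = t ^ 2 := map_pow _ _ _
  have hC : ∀ r : R, algebraMap (Lau R m n)[X] (Acon R m n f) (Polynomial.C (algebraMap R _ r))
    = aR R m n f r := fun r => rfl
  -- height one
  have hh1 : ∀ p : Ideal (Acon R m n f), p.IsPrime →
      Ideal.span {v (Fin.last k') + t ^ 2 * c0} ≤ p → t ^ 2 ∉ p → ((1 : ℕ) : ℕ∞) ≤ p.height := by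
    intro p hp hle htp
    rw [Nat.cast_one, Order.one_le_iff_ne_zero]
    intro h0
    obtain ⟨θ, hθ, -, W, hW⟩ := hc0 (s ^ 2) 1 (Submonoid.one_mem _)
    have hp' : (p.comap (θ.symm : Acon R m n f →+* Acon R m n f)).IsPrime := hp.comap _
    have h1 : p.comap (θ.symm : Acon R m n f →+* Acon R m n f) ∈ minimalPrimes (Acon R m n f) := by
      rw [← Ideal.height_eq_zero_iff]
      have := RingEquiv.height_comap θ.symm p
      rw [← h0]; exact this
    have h2 := un_minimal hW _ h1 (by
      show θ.symm _ ∈ p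
      rw [RingEquiv.symm_apply_apply, ht2]
      exact hle (Ideal.subset_span rfl))
    rw [hC] at h2
    have h3 : θ.symm (aR R m n f (s ^ 2)) ∈ p := h2
    rw [← hθ, RingEquiv.symm_apply_apply, ht2] at h3
    exact htp h3
  obtain ⟨c, hc⟩ := gp (t ^ 2) 1 k' (fun i => v i.castSucc) _ hh1
  let cv : Fin (k' + 1) → Acon R m n f := Fin.snoc c c0
  let q1 := q + a.mulVec (t • cv)
  have hEq1 : E.mulVec q1 = q1 := by
    simp only [q1]
    rw [Matrix.mulVec_add, hEq, Matrix.mulVec_mulVec, hEa]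
  have hbq1 : b.mulVec q1 = v + (t ^ 2) • cv := by
    simp only [q1]
    rw [Matrix.mulVec_add, Matrix.mulVec_mulVec (t • cv), hba, Matrix.smul_mulVec, Matrix.one_mulVec, smul_smul,
      pow_two]
  have hsp : ∀ x : Fin N → Acon R m n f, x ⬝ᵥ q1 ∈ Ideal.span (Set.range q1) := fun x =>
    Ideal.sum_mem _ fun i _ => Ideal.mul_mem_left _ _ (Ideal.subset_span ⟨i, rfl⟩)
  have H1 : 1 + t * (y + φ ⬝ᵥ a.mulVec cv) ∈ Ideal.span (Set.range q1) := by
    have : 1 + t * (y + φ ⬝ᵥ a.mulVec cv) = φ ⬝ᵥ q1 := by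
      simp only [q1]
      rw [dotProduct_add, Matrix.mulVec_smul, dotProduct_smul, smul_eq_mul]
      linear_combination -hy
    rw [this]; exact hsp _
  obtain ⟨h, hh, hhq⟩ := exists_sig_mem k hd (m + n + 1) (aI R m n f) (aI_isIntegral hf)
    (Ideal.span (Set.range q1)) (by
    intro p hp hle
    have htp : t ∉ p := by
      intro htp
      apply hp.ne_top
      rw [Ideal.eq_top_iff_one]
      have := p.sub_mem (hle H1) (p.mul_mem_right (y + φ ⬝ᵥ a.mulVec cv) htp)
      simpa using this
    have hb : ∀ i, v i + t ^ 2 * cv i ∈ p := by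
      intro i
      have : v i + t ^ 2 * cv i = (b.mulVec q1) i := by rw [hbq1]; rfl
      rw [this]
      exact hle (hsp _)
    have := hc p hp (by
      rw [Ideal.span_singleton_le_iff_mem]
      have := hb (Fin.last k')
      simpa [cv] using this) (by
      intro i
      have := hb i.castSucc
      simpa [cv] using this) (fun h => htp (hp.mem_of_pow_mem _ h))
    refine le_trans ?_ this
    exact_mod_cast (by omega : k + 1 ≤ 1 + k'))
  obtain ⟨θ, hθ, ⟨W, hW⟩, W', hW'⟩ := hc0 (s ^ 2) h hh
  have hmp : ∀ {ι κ : Type} (r : R) (M : Matrix ι κ (Acon R m n f)),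
      (aR R m n f r • M).map θ.toRingHom = aR R m n f r • M.map θ.toRingHom := by
    intro ι κ r M; ext i j
    show θ (aR R m n f r * M i j) = aR R m n f r * θ (M i j)
    rw [map_mul, hθ]
  obtain ⟨q', h1, h2⟩ := pt_main (Fin.last k') (algebraMap R (Lau R m n) s) (E.map θ.toRingHom)
    (a.map θ.toRingHom) (b.map θ.toRingHom) (by
      rw [← Matrix.map_mul, hab, hmp]; rfl) (by
      rw [← Matrix.map_mul, hba, hmp, Matrix.map_one _ (map_zero _) (map_one _)]; rfl) (by
      rw [← Matrix.map_mul, hEa]) (θ.toRingHom ∘ q1) (by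
      rw [← map_mulVec_comp, hEq1]) (θ (y + φ ⬝ᵥ a.mulVec cv)) (θ (aI R m n f h)) (by
      rw [hC, ← hθ, ← map_mul, ← map_one θ, ← map_add]
      exact mem_span_map θ.toRingHom q1 _ H1) hW (mem_span_map θ.toRingHom q1 _ hhq) (W' := W') (by
      rw [← map_pow, ← map_mulVec_comp, hbq1]
      convert hW' using 1
      show θ (v (Fin.last k') + t ^ 2 * cv (Fin.last k')) = _
      rw [ht2]
      simp [cv])
  have h3 := mem_span_map θ.symm.toRingHom q' _ h2
  rw [map_one, Ideal.mem_span_range_iff_exists_fun] at h3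
  obtain ⟨ψ, hψ⟩ := h3
  refine ⟨ψ, θ.symm.toRingHom ∘ q', ?_⟩
  have : E.mulVec (θ.symm.toRingHom ∘ q') = θ.symm.toRingHom ∘ q' := by
    conv_rhs => rw [← h1, map_mulVec_comp]
    congr 1
    ext i j
    exact (θ.symm_apply_apply (E i j)).symm
  rw [this]
  exact hψ

theorem uc_subsingleton [Subsingleton R] {m n : ℕ} {f : R[X]} {k : ℕ} : UC R m n f k := by
  intro N E _ _
  refine ⟨0, 0, ?_⟩
  have h : (1 : Acon R m n f) = 0 := by
    rw [← map_one (aR R m n f), Subsingleton.elim (1 : R) 0, map_zero]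
  rw [h]; simp

theorem HF.map {S : Type u} [CommRing S] {m n : ℕ} {f : R[X]} (h : HF R m n f) (φ : R →+* S) :
    HF S m n (f.map φ) := by
  intro K _ ψ
  rw [Polynomial.map_map]
  exact h K _

theorem wb_le {x : WithBot ℕ∞} {k : ℕ} (h : x < (k + 1 : ℕ)) : x ≤ k := by
  induction x with
  | bot => exact bot_le
  | coe x =>
    have h' : x < ((k + 1 : ℕ) : ℕ∞) := by exact_mod_cast h
    have : x ≤ (k : ℕ∞) := by
      rw [Nat.cast_add, Nat.cast_one] at h'
      exact Order.le_of_lt_add_one h'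
    exact_mod_cast this

theorem wb_lt {x : WithBot ℕ∞} {k : ℕ} (h : x + 1 < (k + 1 : ℕ)) : x < k := by
  induction x with
  | bot => exact WithBot.bot_lt_coe _
  | coe x =>
    have h' : x + 1 < ((k + 1 : ℕ) : ℕ∞) := by exact_mod_cast h
    have : x < (k : ℕ∞) := by
      rw [Nat.cast_add, Nat.cast_one] at h'
      exact lt_of_add_lt_add_right h'
    exact_mod_cast this

theorem thmU (m n : ℕ) (k : ℕ) : ∀ (R : Type u) [CommRing R] [IsNoetherianRing R] (f : R[X]),
    f.Monic → (f.natDegree ≠ 0 ∨ n = 0) → HF R m n f → ringKrullDim R < k → ∀ k', k ≤ k' →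
    UC R m n f k' := by
  induction k with
  | zero =>
    intro R _ _ f hf hnat hHF hd k' hk'
    rcases subsingleton_or_nontrivial R with hR | hR
    · exact uc_subsingleton
    · exact absurd (ringKrullDim_nonneg_of_nontrivial (R := R)) (not_le.2 (by simpa using hd))
  | succ k ih =>
    intro R _ _ f hf hnat hHF hd k' hk'
    obtain ⟨k', rfl⟩ : ∃ l, k' = l + 1 := ⟨k' - 1, by omega⟩
    have key : ∀ (R : Type u) [CommRing R] [IsNoetherianRing R] [IsReduced R] (f : R[X]),
      f.Monic → (f.natDegree ≠ 0 ∨ n = 0) → HF R m n f → ringKrullDim R < (k + 1 : ℕ) →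
        UC R m n f (k' + 1) := by
      intro R _ _ _ f hf hnat hHF hd
      have hd' : ringKrullDim R ≤ k := by
        exact wb_le hd
      refine uc_reduced hf hnat hHF k hd' k' (by omega) fun s hs => ?_
      rcases subsingleton_or_nontrivial (R ⧸ Ideal.span {s}) with hR | hR
      · exact uc_subsingleton
      · refine ih _ _ (hf.map _) ?_ (hHF.map _) ?_ _ (by omega)
        · rwa [hf.natDegree_map]
        · have := ringKrullDim_quotient_succ_le_of_nonZeroDivisor hs
          exact wb_lt (lt_of_le_of_lt this hd)
    rcases subsingleton_or_nontrivial (R ⧸ nilradical R) with hR | hR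
    · have : Subsingleton R := by
        rw [Ideal.Quotient.subsingleton_iff, Ideal.eq_top_iff_one, mem_nilradical] at hR
        obtain ⟨j, hj⟩ := hR
        rw [one_pow] at hj
        exact subsingleton_of_zero_eq_one hj.symm
      exact uc_subsingleton
    intro N E hE hk
    have hred : IsReduced (R ⧸ nilradical R) := by
      rw [← Ideal.isRadical_iff_quotient_reduced]
      exact Ideal.radical_isRadical _
    obtain ⟨φ, q, h⟩ := uc_lift (nilradical R) (key _ _ (hf.map _) (by rwa [hf.natDegree_map]) (hHF.map _)
      (lt_of_le_of_lt (ringKrullDim_quotient_le _) hd)) E hE hk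
    have hn : IsNilpotent (φ ⬝ᵥ E.mulVec q - 1) := by
      rw [← mem_nilradical]
      refine (Ideal.map_le_iff_le_comap.2 ?_ : _ ≤ nilradical (Acon R m n f)) h
      intro x hx
      rw [Ideal.mem_comap, mem_nilradical]
      exact IsNilpotent.map hx _
    have hu : IsUnit (φ ⬝ᵥ E.mulVec q) := by
      have := hn.isUnit_add_one
      simpa using this
    obtain ⟨z, hz⟩ := hu.exists_left_inv
    exact ⟨z • φ, q, by rw [smul_dotProduct, smul_eq_mul, hz]⟩

end ThmU
end

noncomputable section
section FieldCase
open scoped Polynomial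
universe u v

theorem pic_aux {A : Type*} [CommRing A] [IsDomain A] [UniqueFactorizationMonoid A] {N : ℕ} (s : A)
    (hs : s ≠ 0) (a b : Fin N → A) (E : Matrix (Fin N) (Fin N) A)
    (hab : ∀ i j, a i * b j = s * E i j) (hba : ∑ i, b i * a i = s) :
    ∃ a' b' : Fin N → A, (∀ i j, a' i * b' j = E i j) ∧ ∑ i, b' i * a' i = 1 := by
  classical
  let _ := UniqueFactorizationMonoid.strongNormalizationMonoid (α := A)
  let _ := UniqueFactorizationMonoid.toNormalizedGCDMonoid A
  have hne : (Finset.univ : Finset (Fin N)).Nonempty := by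
    by_contra h
    rw [Finset.not_nonempty_iff_eq_empty] at h
    rw [h, Finset.sum_empty] at hba
    exact hs hba.symm
  obtain ⟨a', ha', hg⟩ := Finset.extract_gcd a hne
  set g := Finset.univ.gcd a with hgdef
  have h1 : ∀ j, s ∣ g * b j := by
    intro j
    have : s ∣ Finset.univ.gcd (fun i => (g * b j) * a' i) := by
      refine Finset.dvd_gcd fun i hi => ⟨E i j, ?_⟩
      rw [← hab, ha' i hi]; ring
    have h2 := this.trans (Finset.gcd_mul_left' _ _ (g * b j)).dvd
    rwa [hg, mul_one] at h2
  choose b' hb' using h1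
  refine ⟨a', b', fun i j => ?_, ?_⟩
  · apply mul_left_cancel₀ hs
    rw [← hab, ha' i (Finset.mem_univ _)]
    linear_combination (-a' i) * hb' j
  · apply mul_left_cancel₀ hs
    rw [mul_one, Finset.mul_sum]
    conv_rhs => rw [← hba]
    refine Finset.sum_congr rfl fun i _ => ?_
    rw [ha' i (Finset.mem_univ _)]
    linear_combination (-a' i) * hb' i

theorem freeI_of {A : Type u} [CommRing A] [IsDomain A] [UniqueFactorizationMonoid A]
    (H1 : ∀ (N k : ℕ) (E : Matrix (Fin N) (Fin N) A), E * E = E → RankEq E k → ∃ s : A, s ≠ 0 ∧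
      ∃ (a : Matrix (Fin N) (Fin k) A) (b : Matrix (Fin k) (Fin N) A), a * b = s • E ∧ b * a = s • 1)
    (H2 : ∀ (N k : ℕ) (E : Matrix (Fin N) (Fin N) A), 2 ≤ k → E * E = E → RankEq E k →
      ∃ φ q : Fin N → A, φ ⬝ᵥ E.mulVec q = 1) : FreeI A := by
  intro N k
  induction k with
  | zero =>
    intro E hE hk
    refine ⟨0, 0, ?_, ?_⟩
    · rw [hk.zero hE]; simp
    · exact Subsingleton.elim _ _
  | succ k ih =>
    intro E hE hk
    rcases Nat.eq_zero_or_pos k with rfl | hk0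
    · obtain ⟨s, hs, a, b, hab, hba⟩ := H1 N _ E hE hk
      obtain ⟨a', b', h1, h2⟩ := pic_aux s hs (fun i => a i 0) (fun j => b 0 j) E (by
        intro i j
        have := congrFun (congrFun hab i) j
        simpa [Matrix.mul_apply] using this) (by
        have := congrFun (congrFun hba 0) 0
        simpa [Matrix.mul_apply] using this)
      refine ⟨Matrix.of fun i _ => a' i, Matrix.of fun _ j => b' j, ?_, ?_⟩
      · ext i j
        simpa [Matrix.mul_apply] using h1 i j
      · ext i j
        have hi : i = 0 := by ext; omega
        have hj : j = 0 := by ext; omega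
        subst hi hj
        simpa [Matrix.mul_apply] using h2
    · obtain ⟨φ, q, h⟩ := H2 N _ E (by omega) hE hk
      obtain ⟨a1, b1, e1, e2, e3, e4, e5⟩ := RankEq.split hE hk φ q h
      obtain ⟨a', b', h1, h2⟩ := ih _ e4 e5
      have z1 : b' * a1 = 0 := by
        have : b' = b' * (E - a1 * b1) := by rw [← h1, ← Matrix.mul_assoc, h2, Matrix.one_mul]
        rw [this, Matrix.mul_assoc, Matrix.sub_mul, e2, Matrix.mul_assoc, e1, Matrix.mul_one, sub_self,
          Matrix.mul_zero]
      have z2 : b1 * a' = 0 := by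
        have : a' = (E - a1 * b1) * a' := by rw [← h1, Matrix.mul_assoc, h2, Matrix.mul_one]
        rw [this, ← Matrix.mul_assoc, Matrix.mul_sub, e3, ← Matrix.mul_assoc, e1, Matrix.one_mul, sub_self,
          Matrix.zero_mul]
      refine ⟨Matrix.of fun i => Fin.snoc (α := fun _ => A) (a' i) (a1 i 0),
        Matrix.of fun j i => Fin.snoc (α := fun _ => A) (fun l => b' l i) (b1 0 i) j, ?_, ?_⟩
      · ext i j
        have f1 := congrFun (congrFun h1 i) j
        simp [Matrix.mul_apply] at f1
        simp [Matrix.mul_apply, Fin.sum_univ_castSucc, f1]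
      · ext i j
        refine Fin.lastCases ?_ (fun i => ?_) i <;> refine Fin.lastCases ?_ (fun j => ?_) j
        · have := congrFun (congrFun e1 0) 0
          simpa [Matrix.mul_apply] using this
        · have := congrFun (congrFun z2 0) j
          simp [Matrix.mul_apply] at this
          simp [Matrix.mul_apply, Matrix.one_apply, this, (Fin.castSucc_lt_last j).ne']
        · have := congrFun (congrFun z1 i) 0
          simp [Matrix.mul_apply] at this
          simp [Matrix.mul_apply, Matrix.one_apply, this, (Fin.castSucc_lt_last i).ne]
        · have := congrFun (congrFun h2 i) j
          simp [Matrix.mul_apply, Matrix.one_apply] at this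
          simp [Matrix.mul_apply, Matrix.one_apply, this]

theorem freeI_pid (A : Type u) [CommRing A] [IsDomain A] [IsPrincipalIdealRing A] : FreeI A := by
  intro N k E hE hk
  obtain ⟨l, ⟨B⟩⟩ := Submodule.nonempty_basis_of_pid (Pi.basisFun A (Fin N))
    (LinearMap.range E.mulVecLin)
  let w : Fin N → LinearMap.range E.mulVecLin := fun i => ⟨E.mulVecLin (Pi.single i 1), ⟨_, rfl⟩⟩
  let a : Matrix (Fin N) (Fin l) A := Matrix.of fun i j => (B j : Fin N → A) i
  let b : Matrix (Fin l) (Fin N) A := Matrix.of fun j i => B.repr (w i) j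
  have hab : a * b = E := by
    ext i j
    have h1 := B.sum_repr (w j)
    have h2 := congrFun (congrArg Subtype.val h1) i
    have h3 : (w j : Fin N → A) i = E i j := by simp [w]
    rw [h3] at h2
    rw [← h2, Matrix.mul_apply]
    simp only [a, b, Matrix.of_apply, Submodule.coe_sum, Finset.sum_apply, Submodule.coe_smul,
      Pi.smul_apply, smul_eq_mul]
    exact Finset.sum_congr rfl fun _ _ => mul_comm _ _
  have hEa : E * a = a := by
    ext i j
    obtain ⟨x, hx⟩ := (B j).2
    have : E.mulVec (B j : Fin N → A) = (B j : Fin N → A) := by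
      rw [← hx]; simp [Matrix.mulVec_mulVec, hE]
    exact congrFun this i
  have hinj : ∀ c : Fin l → A, a.mulVec c = 0 → c = 0 := by
    intro c hc
    have : ∑ j, c j • B j = 0 := by
      ext i
      have := congrFun hc i
      simp [Matrix.mulVec, dotProduct, a] at this
      simp
      rw [← this]
      exact Finset.sum_congr rfl fun _ _ => mul_comm _ _
    exact funext (Fintype.linearIndependent_iff.1 B.linearIndependent c this)
  have hba : b * a = 1 := by
    have h0 : a * (b * a - 1) = 0 := by
      rw [Matrix.mul_sub, ← Matrix.mul_assoc, hab, hEa, Matrix.mul_one, sub_self]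
    rw [← sub_eq_zero]
    ext i j
    have h3 : a.mulVec (fun i => (b * a - 1 : Matrix (Fin l) (Fin l) A) i j) = 0 := funext fun i => congrFun (congrFun h0 i) j
    exact congrFun (hinj _ h3) i
  have := rankEq_of_factor a b hba
  rw [hab, Fintype.card_fin] at this
  obtain rfl := this.unique hk
  exact ⟨a, b, hab, hba⟩

end FieldCase
end

noncomputable section
section Isos
open scoped Polynomial
universe u v

theorem isUnit_aT_X (R : Type u) [CommRing R] (m n : ℕ) : IsUnit (aT R m n Polynomial.X) := by
  have := isUnit_f R m n Polynomial.X
  rwa [Polynomial.eval₂_X] at this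

/-- trade a Laurent variable -/
def iso3 (R : Type u) [CommRing R] (m n : ℕ) :
    Acon R m (n + 1) 1 ≃+* Acon R (m + 1) n Polynomial.X :=
  RingEquiv.ofRingHom
    (aLift (aR R (m + 1) n Polynomial.X) (fun i => aX R (m + 1) n Polynomial.X i.succ)
      (Fin.cons (isUnit_aT_X R (m + 1) n).unit (fun j => aY R (m + 1) n Polynomial.X j))
      (aX R (m + 1) n Polynomial.X 0) (by simp))
    (aLift (aR R m (n + 1) 1) (Fin.cons (aT R m (n + 1) 1) (fun i => aX R m (n + 1) 1 i))
      (fun j => aY R m (n + 1) 1 j.succ) (aY R m (n + 1) 1 0) (by simp))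
    (by
      apply acon_hom_ext
      · intro r; simp [aLift_R]
      · intro i; refine Fin.cases ?_ (fun i => ?_) i <;> simp [aLift_X, aLift_T]
      · intro i; simp [aLift_Y]
      · simp [aLift_T, aLift_Y])
    (by
      apply acon_hom_ext
      · intro r; simp [aLift_R]
      · intro i; simp [aLift_X]
      · intro i; refine Fin.cases ?_ (fun i => ?_) i <;> simp [aLift_Y, aLift_T]
      · simp [aLift_T, aLift_X])

section
variable {K : Type u} [CommRing K] {f : K[X]} {S : Type v} [CommRing S]

/-- the base ring -/
abbrev Kf (f : K[X]) : Type u := Localization.Away f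

/-- constants -/
def kC (f : K[X]) : K →+* Kf f := (algebraMap K[X] (Kf f)).comp Polynomial.C

/-- variable -/
def kT (f : K[X]) : Kf f := algebraMap K[X] (Kf f) Polynomial.X

theorem kf_eval : f.eval₂ (kC f) (kT f) = algebraMap K[X] (Kf f) f := by
  have : ∀ p : K[X], p.eval₂ (kC f) (kT f) = algebraMap K[X] (Kf f) p := by
    intro p
    conv_rhs => rw [← Polynomial.eval₂_C_X (p := p), Polynomial.hom_eval₂]
    rfl
  exact this f

theorem kf_unit : IsUnit (f.eval₂ (kC f) (kT f)) := by
  rw [kf_eval]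
  exact IsLocalization.Away.algebraMap_isUnit _

/-- universal property -/
def kLift (φ : K →+* S) (t : S) (ht : IsUnit (f.eval₂ φ t)) : Kf f →+* S :=
  IsLocalization.Away.lift f (g := Polynomial.eval₂RingHom φ t)
    (by rw [Polynomial.coe_eval₂RingHom]; exact ht)

theorem kLift_C (φ : K →+* S) (t : S) (ht : IsUnit (f.eval₂ φ t)) (r : K) :
    kLift φ t ht (kC f r) = φ r := by
  rw [kLift, kC, RingHom.comp_apply, IsLocalization.Away.lift_eq]; simp

theorem kLift_T (φ : K →+* S) (t : S) (ht : IsUnit (f.eval₂ φ t)) :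
    kLift φ t ht (kT f) = t := by
  rw [kLift, kT, IsLocalization.Away.lift_eq]; simp

theorem kf_hom_ext {g h : Kf f →+* S} (h1 : ∀ r, g (kC f r) = h (kC f r)) (h2 : g (kT f) = h (kT f)) :
    g = h := by
  apply IsLocalization.ringHom_ext (Submonoid.powers f)
  apply Polynomial.ringHom_ext
  · exact h1
  · exact h2

theorem kf_comp_ext {T : Type*} [CommRing T] (k : Kf f →+* S) (g : S →+* T) (h : Kf f →+* T)
    (h1 : ∀ r, g (k (kC f r)) = h (kC f r)) (h2 : g (k (kT f)) = h (kT f)) (r : Kf f) :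
    g (k r) = h r :=
  RingHom.congr_fun (kf_hom_ext (g := g.comp k) h1 h2) r

/-- no variables -/
def iso0 (f : K[X]) : Acon K 0 0 f ≃+* Kf f :=
  RingEquiv.ofRingHom
    (aLift (kC f) Fin.elim0 Fin.elim0 (kT f) kf_unit)
    (kLift (aR K 0 0 f) (aT K 0 0 f) (isUnit_f K 0 0 f))
    (by
      apply kf_hom_ext
      · intro r; simp [aLift_R, kLift_C]
      · simp [aLift_T, kLift_T])
    (by
      apply acon_hom_ext
      · intro r; simp [aLift_R, kLift_C]
      · intro i; exact i.elim0
      · intro i; exact i.elim0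
      · simp [aLift_T, kLift_T])

theorem kf_unit_comp (g : Kf f →+* S) : IsUnit (f.eval₂ (g.comp (kC f)) (g (kT f))) := by
  rw [← Polynomial.hom_eval₂]
  exact kf_unit.map g

/-- Laurent case -/
def iso1 (f : K[X]) (m n : ℕ) : Acon K m (n + 1) f ≃+* Acon (Kf f) m n Polynomial.X :=
  RingEquiv.ofRingHom
    (aLift ((aR (Kf f) m n Polynomial.X).comp (kC f)) (fun i => aX (Kf f) m n Polynomial.X i)
      (Fin.cons (isUnit_aT_X (Kf f) m n).unit (fun j => aY (Kf f) m n Polynomial.X j))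
      (aR (Kf f) m n Polynomial.X (kT f)) (kf_unit_comp _))
    (aLift (kLift (aR K m (n + 1) f) (aT K m (n + 1) f) (isUnit_f K m (n + 1) f))
      (fun i => aX K m (n + 1) f i) (fun j => aY K m (n + 1) f j.succ) (aY K m (n + 1) f 0) (by simp))
    (by
      apply acon_hom_ext
      · intro r
        rw [RingHom.comp_apply, aLift_R, RingHom.id_apply]
        refine kf_comp_ext _ _ _ ?_ ?_ r
        · intro r; simp [aLift_R, kLift_C]
        · simp [aLift_R, kLift_T, aLift_T]
      · intro i; simp [aLift_X]
      · intro i; simp [aLift_Y]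
      · simp [aLift_T, aLift_Y])
    (by
      apply acon_hom_ext
      · intro r; simp [aLift_R, kLift_C]
      · intro i; simp [aLift_X]
      · intro i; refine Fin.cases ?_ (fun i => ?_) i <;> simp [aLift_Y, aLift_T]
      · simp [aLift_T, aLift_R, kLift_T])

/-- polynomial case -/
def iso2 (f : K[X]) (m : ℕ) : Acon K (m + 1) 0 f ≃+* Acon (Kf f) m 0 1 :=
  RingEquiv.ofRingHom
    (aLift ((aR (Kf f) m 0 1).comp (kC f)) (Fin.cons (aT (Kf f) m 0 1) (fun i => aX (Kf f) m 0 1 i))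
      Fin.elim0 (aR (Kf f) m 0 1 (kT f)) (kf_unit_comp _))
    (aLift (kLift (aR K (m + 1) 0 f) (aT K (m + 1) 0 f) (isUnit_f K (m + 1) 0 f))
      (fun i => aX K (m + 1) 0 f i.succ) Fin.elim0 (aX K (m + 1) 0 f 0) (by simp))
    (by
      apply acon_hom_ext
      · intro r
        rw [RingHom.comp_apply, aLift_R, RingHom.id_apply]
        refine kf_comp_ext _ _ _ ?_ ?_ r
        · intro r; simp [aLift_R, kLift_C]
        · simp [aLift_R, kLift_T, aLift_T]
      · intro i; simp [aLift_X]
      · intro i; exact i.elim0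
      · simp [aLift_T, aLift_X])
    (by
      apply acon_hom_ext
      · intro r; simp [aLift_R, kLift_C]
      · intro i; refine Fin.cases ?_ (fun i => ?_) i <;> simp [aLift_X, aLift_T]
      · intro i; exact i.elim0
      · simp [aLift_T, aLift_R, kLift_T])

end

end Isos
end

noncomputable section
section FieldCase2
open scoped Polynomial
universe u v
variable (R : Type u) [CommRing R] [IsDomain R] (m n : ℕ)

theorem ymonoid_le : Ymonoid R m n ≤ nonZeroDivisors (MvPolynomial (Fin m ⊕ Fin n) R) := by
  rw [Ymonoid, Submonoid.closure_le]
  rintro _ ⟨j, rfl⟩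
  exact mem_nonZeroDivisors_of_ne_zero (MvPolynomial.X_ne_zero _)

theorem lau_isDomain : IsDomain (Lau R m n) :=
  IsLocalization.isDomain_of_le_nonZeroDivisors _ (ymonoid_le R m n)

theorem lau_inj : Function.Injective (algebraMap R (Lau R m n)) := by
  have h1 := IsLocalization.injective (Lau R m n) (ymonoid_le R m n)
  exact h1.comp (MvPolynomial.C_injective _ _)

variable {f : R[X]}

theorem fL_ne (hf : f.Monic) : fL m n f ≠ 0 := by
  have := lau_isDomain R m n
  exact (hf.map _).ne_zero

theorem powers_fL (hf : f.Monic) : Submonoid.powers (fL m n f) ≤ nonZeroDivisors (Lau R m n)[X] := by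
  have := lau_isDomain R m n
  exact powers_le_nonZeroDivisors_of_noZeroDivisors (fL_ne R m n hf)

theorem acon_isDomain (hf : f.Monic) : IsDomain (Acon R m n f) := by
  have := lau_isDomain R m n
  exact IsLocalization.isDomain_of_le_nonZeroDivisors _ (powers_fL R m n hf)

theorem aR_inj (hf : f.Monic) : Function.Injective (aR R m n f) := by
  have := lau_isDomain R m n
  have h1 := IsLocalization.injective (Acon R m n f) (powers_fL R m n hf)
  exact h1.comp (Polynomial.C_injective.comp (lau_inj R m n))

theorem acon_ufd [UniqueFactorizationMonoid R] (hf : f.Monic) :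
    UniqueFactorizationMonoid (Acon R m n f) := by
  have := lau_isDomain R m n
  have h1 : UniqueFactorizationMonoid (Lau R m n) :=
    UniqueFactorizationMonoid.of_isLocalization (Ymonoid R m n) _
  have := acon_isDomain R m n hf
  exact UniqueFactorizationMonoid.of_isLocalization (Submonoid.powers (fL m n f)) _

theorem freeI_step [IsPrincipalIdealRing R] (hf : f.Monic) (hnat : f.natDegree ≠ 0 ∨ n = 0) (hHF : HF R m n f) :
    FreeI (Acon R m n f) := by
  have := acon_isDomain R m n hf
  have := acon_ufd R m n hf
  have hd : ringKrullDim R < (2 : ℕ) := by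
    have : ringKrullDim R ≤ (1 : ℕ) := Ring.krullDimLE_iff.1 inferInstance
    exact lt_of_le_of_lt this (by exact_mod_cast (by norm_num : 1 < 2))
  refine freeI_of ?_ ?_
  · intro N k E hE hk
    obtain ⟨s, hs, a, b, h1, h2, -⟩ := gf hHF E hE hk
    refine ⟨aR R m n f s, ?_, a, b, h1, h2⟩
    rw [Ne, map_eq_zero_iff _ (aR_inj R m n hf)]
    exact nonZeroDivisors.ne_zero hs
  · intro N k E h2 hE hk
    exact thmU m n 2 R f hf hnat hHF hd k h2 N E hE hk

theorem kf_isDomain (hf : f.Monic) : IsDomain (Kf f) :=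
  IsLocalization.isDomain_of_le_nonZeroDivisors (M := Submonoid.powers f) _
    (powers_le_nonZeroDivisors_of_noZeroDivisors hf.ne_zero)

end FieldCase2

section
open scoped Polynomial
universe u

theorem kf_pid {K : Type u} [Field K] (f : K[X]) : IsPrincipalIdealRing (Kf f) := by
  refine ⟨fun I => ?_⟩
  rw [← IsLocalization.map_under (Submonoid.powers f) (Kf f) I]
  obtain ⟨x, hx⟩ := IsPrincipalIdealRing.principal (I.under K[X])
  refine ⟨algebraMap _ _ x, ?_⟩
  rw [hx]
  show Ideal.map _ (Ideal.span {x}) = Ideal.span {_}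
  rw [Ideal.map_span, Set.image_singleton]

theorem freeI_field (j : ℕ) : ∀ (m n : ℕ), m + n = j → ∀ (K : Type u) [Field K] (f : K[X]), f.Monic →
    FreeI (Acon K m n f) := by
  induction j with
  | zero =>
    intro m n h K _ f hf
    obtain ⟨rfl, rfl⟩ : m = 0 ∧ n = 0 := by omega
    have := kf_pid f
    have := kf_isDomain K hf
    exact (freeI_pid (Kf f)).of_equiv (iso0 f).symm
  | succ j ih =>
    intro m n h K _ f hf
    have := kf_pid f
    have := kf_isDomain K hf
    rcases n with _ | n
    · obtain ⟨m, rfl⟩ : ∃ l, m = l + 1 := ⟨m - 1, by omega⟩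
      refine FreeI.of_equiv (iso2 f m).symm (freeI_step _ _ _ Polynomial.monic_one (Or.inr rfl) ?_)
      intro L _ φ
      exact ih m 0 (by omega) L _ (Polynomial.monic_one.map _)
    · refine FreeI.of_equiv (iso1 f m n).symm (freeI_step _ _ _ Polynomial.monic_X (Or.inl (by simp)) ?_)
      intro L _ φ
      exact ih m n (by omega) L _ (Polynomial.monic_X.map _)

theorem hf_all (R : Type u) [CommRing R] (m n : ℕ) (f : R[X]) (hf : f.Monic) : HF R m n f :=
  fun K _ φ => freeI_field _ m n rfl K _ (hf.map φ)
end
end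

noncomputable section
section FinalA
open scoped Polynomial
universe u v w

/-- the step property -/
def StepP (A : Type v) [CommRing A] (d : ℕ) : Prop :=
  ∀ (N k : ℕ) (E : Matrix (Fin (N + 1)) (Fin (N + 1)) A), E * E = E → RankEq E k → d + 1 ≤ k →
    d + 1 ≤ N → ∃ q, E.mulVec q = q ∧ REq q (Pi.single (Fin.last N) 1)

theorem StepP.of_equiv {A : Type v} {B : Type w} [CommRing A] [CommRing B] (e : A ≃+* B) {d : ℕ}
    (h : StepP A d) : StepP B d := by
  intro N k E hE hk hd hN
  obtain ⟨q, h1, h2⟩ := h N k (E.map (e.symm : B →+* A)) (by rw [← Matrix.map_mul, hE])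
    (hk.map (e.symm : B →+* A)) hd hN
  refine ⟨(e : A →+* B) ∘ q, ?_, ?_⟩
  · conv_rhs => rw [← h1, map_mulVec_comp]
    congr 1
    ext i j
    exact (e.apply_symm_apply (E i j)).symm
  · have := h2.map (e : A →+* B)
    have e1 : (e : A →+* B) ∘ (Pi.single (Fin.last N) 1 : Fin (N + 1) → A) =
        Pi.single (Fin.last N) 1 := by
      ext i
      by_cases hi : i = Fin.last N
      · subst hi; simp
      · simp [Pi.single_eq_of_ne hi]
    rw [← e1]
    exact this

theorem stepP_native {R : Type u} [CommRing R] [IsNoetherianRing R] {d : ℕ} (hd : ringKrullDim R = d)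
    (m n : ℕ) (f : R[X]) (hf : f.Monic) (hnat : f.natDegree ≠ 0 ∨ n = 0) :
    StepP (Acon R m n f) d := by
  intro N k E hE hk hdk hN
  obtain ⟨φ, q, h⟩ := thmU m n (d + 1) R f hf hnat (hf_all R m n f hf) (by
    rw [hd]; exact_mod_cast Nat.lt_succ_self d) k hdk _ E hE hk
  exact ⟨E.mulVec q, by rw [Matrix.mulVec_mulVec, hE], thmS hf hnat d hd.le N hN _ ⟨φ, h⟩⟩

theorem stepP_all {R : Type u} [CommRing R] [IsNoetherianRing R] {d : ℕ} (hd : ringKrullDim R = d)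
    (m n : ℕ) (f : R[X]) (hf : f.Monic) : StepP (Acon R m n f) d := by
  have : Nontrivial R := by
    by_contra h
    rw [not_nontrivial_iff_subsingleton] at h
    rw [ringKrullDim_eq_bot_of_subsingleton] at hd
    exact absurd hd (by simp)
  by_cases hnat : f.natDegree ≠ 0 ∨ n = 0
  · exact stepP_native hd m n f hf hnat
  · push Not at hnat
    obtain ⟨h1, h2⟩ := hnat
    obtain ⟨n, rfl⟩ := Nat.exists_eq_succ_of_ne_zero h2
    obtain rfl := hf.natDegree_eq_zero.1 h1
    exact (stepP_native hd (m + 1) n Polynomial.X Polynomial.monic_X (Or.inl (by simp))).of_equiv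
      (iso3 R m n).symm

theorem rankEq_local {A : Type v} [CommRing A] {N r : ℕ} (E : Matrix (Fin N) (Fin N) A)
    (h : ∀ p : PrimeSpectrum A, RankEq (E.map (algebraMap A (Localization.AtPrime p.asIdeal))) r) :
    RankEq E r := by
  rw [RankEq]
  ext i
  refine Module.eq_of_localization_maximal (fun P _ => Localization.AtPrime P)
    (fun P _ => Algebra.linearMap A _) _ _ fun P hP => ?_
  have h1 : RankEq (E.map (algebraMap A (Localization.AtPrime P))) r := h ⟨P, hP.isPrime⟩
  rw [RankEq] at h1
  have h3 : ((1 + (Polynomial.X - 1 : A[X]) • E.map Polynomial.C).det).map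
      (algebraMap A (Localization.AtPrime P)) =
      (1 + (Polynomial.X - 1 : (Localization.AtPrime P)[X]) •
        (E.map (algebraMap A (Localization.AtPrime P))).map Polynomial.C).det := by
    rw [← Polynomial.coe_mapRingHom, RingHom.map_det]
    congr 1
    ext1 i j
    by_cases hij : i = j <;> simp [hij, Matrix.one_apply]
  rw [Algebra.linearMap_apply, Algebra.linearMap_apply]
  rw [← Polynomial.coeff_map, ← Polynomial.coeff_map, h3, h1]
  simp

theorem rankEq_proj {A : Type v} [CommRing A] {P : Type w} [AddCommGroup P] [Module A P]
    [Module.Finite A P] [Module.Projective A P] {N r : ℕ} (g : Fin N → P) (σ : Fin N → P →ₗ[A] A)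
    (hσ : ∀ y, ∑ i, σ i y • g i = y)
    (hrank : ∀ p : PrimeSpectrum A,
      Module.finrank (Localization.AtPrime p.asIdeal) (LocalizedModule p.asIdeal.primeCompl P) = r) :
    RankEq (Matrix.of fun i j => σ i (g j)) r := by
  refine rankEq_local _ fun p => ?_
  let Ap := Localization.AtPrime p.asIdeal
  let Pp := LocalizedModule p.asIdeal.primeCompl P
  have : Module.Free Ap Pp := Module.free_of_flat_of_isLocalRing
  let β : Module.Basis (Fin r) Ap Pp := Module.finBasisOfFinrankEq Ap Pp (hrank p)
  let ι : P →ₗ[A] Pp := LocalizedModule.mkLinearMap p.asIdeal.primeCompl P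
  let s : Fin N → Pp →ₗ[Ap] Ap := fun i =>
    IsLocalizedModule.mapExtendScalars p.asIdeal.primeCompl ι (Algebra.linearMap A Ap) Ap (σ i)
  have hs : ∀ i y, s i (ι y) = algebraMap A Ap (σ i y) := by
    intro i y
    simp only [s]
    rw [IsLocalizedModule.mapExtendScalars_apply_apply, IsLocalizedModule.map_apply]
    rfl
  have hx : ∀ x : Pp, ∑ i, s i x • ι (g i) = x := by
    intro x
    obtain ⟨⟨y, c⟩, hy⟩ := IsLocalizedModule.surj p.asIdeal.primeCompl ι x
    have hc : IsUnit (algebraMap A Ap c) := IsLocalization.map_units Ap c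
    have hy' : algebraMap A Ap c • x = ι y := by
      rw [algebraMap_smul]; exact hy
    have h1 : algebraMap A Ap c • ∑ i, s i x • ι (g i) = algebraMap A Ap c • x := by
      rw [hy', Finset.smul_sum]
      conv_rhs => rw [← hσ y, map_sum]
      refine Finset.sum_congr rfl fun i _ => ?_
      rw [smul_smul, ← smul_eq_mul, ← map_smul (s i), hy', hs, algebraMap_smul, map_smul ι]
    exact hc.smul_left_cancel.1 h1
  let a : Matrix (Fin N) (Fin r) Ap := Matrix.of fun i j => s i (β j)
  let b : Matrix (Fin r) (Fin N) Ap := Matrix.of fun j i => β.repr (ι (g i)) j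
  have hba : b * a = 1 := by
    ext j l
    have := congrArg (fun z => β.repr z j) (hx (β l))
    simp only [map_sum, map_smul, Finsupp.coe_finsetSum, Finset.sum_apply, Finsupp.smul_apply,
      smul_eq_mul, Module.Basis.repr_self] at this
    rw [Matrix.mul_apply, Matrix.one_apply]
    simp only [a, b, Matrix.of_apply]
    rw [Finset.sum_congr rfl fun i _ => mul_comm _ _, this, Finsupp.single_apply]
    simp [eq_comm]
  have hab : a * b = (Matrix.of fun i j => σ i (g j)).map (algebraMap A Ap) := by
    ext i k
    have := congrArg (s i) (β.sum_repr (ι (g k)))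
    rw [hs, map_sum] at this
    simp only [map_smul, smul_eq_mul] at this
    rw [Matrix.mul_apply, Matrix.map_apply, Matrix.of_apply, ← this]
    exact Finset.sum_congr rfl fun i _ => mul_comm _ _
  have := rankEq_of_factor a b hba
  rwa [hab, Fintype.card_fin] at this

theorem exists_coords {A : Type v} [CommRing A] {P : Type w} [AddCommGroup P] [Module A P]
    [Module.Projective A P] {N : ℕ} (g : Fin N → P) (hg : Submodule.span A (Set.range g) = ⊤) :
    ∃ σ : Fin N → P →ₗ[A] A, ∀ y, ∑ i, σ i y • g i = y := by
  have hsurj : Function.Surjective (Fintype.linearCombination A g) := by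
    rw [← LinearMap.range_eq_top, Fintype.range_linearCombination, hg]
  obtain ⟨h, hh⟩ := Module.projective_lifting_property (Fintype.linearCombination A g) LinearMap.id hsurj
  refine ⟨fun i => (LinearMap.proj i).comp h, fun y => ?_⟩
  exact LinearMap.congr_fun hh y

theorem coords_idem {A : Type v} [CommRing A] {P : Type w} [AddCommGroup P] [Module A P]
    {N : ℕ} (g : Fin N → P) (σ : Fin N → P →ₗ[A] A)
    (hσ : ∀ y, ∑ i, σ i y • g i = y) :
    (Matrix.of fun i j => σ i (g j)) * (Matrix.of fun i j => σ i (g j)) = Matrix.of fun i j => σ i (g j) := by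
  ext i j
  rw [Matrix.mul_apply]
  simp only [Matrix.of_apply]
  conv_rhs => rw [← hσ (g j), map_sum]
  exact Finset.sum_congr rfl fun k _ => by rw [map_smul, smul_eq_mul, mul_comm]

theorem gen_step {A : Type v} [CommRing A] {P : Type w} [AddCommGroup P] [Module A P]
    [Module.Finite A P] [Module.Projective A P] {d r : ℕ} (hA : StepP A d) (hr : 1 ≤ r)
    (hrank : ∀ p : PrimeSpectrum A,
      Module.finrank (Localization.AtPrime p.asIdeal) (LocalizedModule p.asIdeal.primeCompl P) = r)
    (N : ℕ) (hN : r + d ≤ N)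
    (h : ∃ g : Fin (N + 1) → P, Submodule.span A (Set.range g) = ⊤) :
    ∃ g : Fin N → P, Submodule.span A (Set.range g) = ⊤ := by
  obtain ⟨g, hg⟩ := h
  obtain ⟨σ, hσ⟩ := exists_coords g hg
  set E0 : Matrix (Fin (N + 1)) (Fin (N + 1)) A := Matrix.of fun i j => σ i (g j) with hE0
  have hE : E0 * E0 = E0 := coords_idem g σ hσ
  have hk : RankEq E0 r := rankEq_proj g σ hσ hrank
  have hk' := RankEq.compl hE hk (by rw [Fintype.card_fin]; omega)
  rw [Fintype.card_fin] at hk'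
  obtain ⟨q, hq, G, hG, hGq⟩ := hA N _ (1 - E0) (by
    rw [sub_mul, one_mul, mul_sub, mul_one, hE, sub_self, sub_zero]) hk' (by omega) (by omega)
  let π : (Fin (N + 1) → A) →ₗ[A] P := Fintype.linearCombination A g
  have hπ : ∀ x, π x = ∑ i, x i • g i := fun x => rfl
  have hπE : ∀ x, E0.mulVec x = fun i => σ i (π x) := by
    intro x; ext i
    show ∑ j, E0 i j * x j = _
    rw [hπ, map_sum]
    exact Finset.sum_congr rfl fun j _ => by rw [map_smul, smul_eq_mul, mul_comm]; rfl
  have hπq : π q = 0 := by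
    rw [Matrix.sub_mulVec, Matrix.one_mulVec, sub_eq_self, hπE] at hq
    rw [← hσ (π q)]
    refine Finset.sum_eq_zero fun i _ => ?_
    have := congrFun hq i
    simp only [Pi.zero_apply] at this
    rw [this, zero_smul]
  obtain ⟨⟨G, H, hGH, hHG⟩, rfl⟩ := hG
  simp only at hGq
  refine ⟨fun i => π (H.mulVec (Pi.single i.castSucc 1)), ?_⟩
  rw [eq_top_iff]
  rintro y -
  have hy : y = π (fun i => σ i y) := by rw [hπ, hσ]
  set x : Fin (N + 1) → A := fun i => σ i y
  have hx : x = H.mulVec (G.mulVec x) := by rw [Matrix.mulVec_mulVec, hHG, Matrix.one_mulVec]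
  have hqq : H.mulVec (Pi.single (Fin.last N) 1) = q := by
    rw [← hGq, Matrix.mulVec_mulVec, hHG, Matrix.one_mulVec]
  have hsum : ∀ z : Fin (N + 1) → A, H.mulVec z = ∑ i, z i • H.mulVec (Pi.single i 1) := by
    intro z
    conv_lhs => rw [pi_eq_sum_univ' z]
    rw [Matrix.mulVec_sum]
    refine Finset.sum_congr rfl fun i _ => ?_
    rw [Matrix.mulVec_smul]
  rw [hy, hx, hsum, Fin.sum_univ_castSucc, hqq, map_add, map_smul π _ q, hπq, smul_zero, add_zero, map_sum]
  refine Submodule.sum_mem _ fun i _ => ?_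
  rw [map_smul]
  exact Submodule.smul_mem _ _ (Submodule.subset_span ⟨i, rfl⟩)

theorem gen_final {A : Type v} [CommRing A] {P : Type w} [AddCommGroup P] [Module A P]
    [Module.Finite A P] [Module.Projective A P] {d r : ℕ} (hA : StepP A d)
    (hrank : ∀ p : PrimeSpectrum A,
      Module.finrank (Localization.AtPrime p.asIdeal) (LocalizedModule p.asIdeal.primeCompl P) = r) :
    ∃ g : Fin (r + d) → P, Submodule.span A (Set.range g) = ⊤ := by
  obtain ⟨N, g, hg⟩ := Module.Finite.exists_fin (R := A) (M := P)
  rcases Nat.eq_zero_or_pos r with rfl | hr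
  · obtain ⟨σ, hσ⟩ := exists_coords g hg
    have h0 := (rankEq_proj g σ hσ hrank).zero (coords_idem g σ hσ)
    have hz : ∀ y : P, y = 0 := by
      have hgz : ∀ j, g j = 0 := by
        intro j
        rw [← hσ (g j)]
        refine Finset.sum_eq_zero fun i _ => ?_
        have : σ i (g j) = 0 := congrFun (congrFun h0 i) j
        rw [this, zero_smul]
      intro y
      rw [← hσ y]
      exact Finset.sum_eq_zero fun i _ => by rw [hgz, smul_zero]
    refine ⟨0, ?_⟩
    rw [eq_top_iff]
    rintro y -
    rw [hz y]
    exact Submodule.zero_mem _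
  · have key : ∀ j, (∃ g : Fin (r + d + j) → P, Submodule.span A (Set.range g) = ⊤) →
        ∃ g : Fin (r + d) → P, Submodule.span A (Set.range g) = ⊤ := by
      intro j
      induction j with
      | zero => exact id
      | succ j ih => exact fun h => ih (gen_step hA hr hrank _ (by omega) h)
    refine key N ⟨fun i => if h : (i : ℕ) < N then g ⟨i, h⟩ else 0, ?_⟩
    rw [eq_top_iff, ← hg, Submodule.span_le]
    rintro _ ⟨i, rfl⟩
    refine Submodule.subset_span ⟨⟨i, by omega⟩, ?_⟩
    simp

end FinalA

section FinalB
open scoped Polynomial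
universe u v w

theorem frozen_equiv (R : Type u) [CommRing R] (m n : ℕ)
    (B : Type v) [CommRing B] [Algebra R B] [Algebra (MvPolynomial (Fin m ⊕ Fin n) R) B]
    [IsScalarTower R (MvPolynomial (Fin m ⊕ Fin n) R) B]
    [IsLocalization (Ymonoid R m n) B]
    (f : R[X])
    (A : Type w) [CommRing A] [Algebra B[X] A]
    [IsLocalization.Away (f.map (algebraMap R B)) A] : Nonempty (Acon R m n f ≃+* A) := by
  let eB := IsLocalization.algEquiv (Ymonoid R m n) (Lau R m n) B
  let eP : (Lau R m n)[X] ≃+* B[X] := Polynomial.mapEquiv eB.toRingEquiv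
  refine ⟨IsLocalization.ringEquivOfRingEquiv (M := Submonoid.powers (fL m n f))
    (T := Submonoid.powers (f.map (algebraMap R B))) (Acon R m n f) A eP ?_⟩
  rw [Submonoid.map_powers]
  congr 1
  show (f.map (algebraMap R (Lau R m n))).map eB.toRingEquiv.toRingHom = _
  rw [Polynomial.map_map]
  congr 1
  ext r
  show eB (algebraMap R (Lau R m n) r) = _
  rw [IsScalarTower.algebraMap_apply R (MvPolynomial (Fin m ⊕ Fin n) R) (Lau R m n),
    IsScalarTower.algebraMap_apply R (MvPolynomial (Fin m ⊕ Fin n) R) B, AlgEquiv.commutes]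

end FinalB
end

open MvPolynomial

/-- **Theorem.** Let `R` be Noetherian of finite Krull dimension `d`,
`B = R[X_1,…,X_m,Y_1^{±1},…,Y_n^{±1}]`, `f ∈ R[Y]` a monic polynomial, `A = B[Y, f⁻¹]`.
Then every finitely generated projective `A`-module of constant rank `r` can be generated
by `r + d` elements. -/
theorem projective_module_generated_by_rank_plus_dim
    (R : Type*) [CommRing R] [IsNoetherianRing R] (d : ℕ) (hdim : ringKrullDim R = d)
    (m n : ℕ)
    (B : Type*) [CommRing B] [Algebra R B] [Algebra (MvPolynomial (Fin m ⊕ Fin n) R) B]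
    [IsScalarTower R (MvPolynomial (Fin m ⊕ Fin n) R) B]
    [IsLocalization (Ymonoid R m n) B]
    (f : Polynomial R) (hf : f.Monic)
    (A : Type*) [CommRing A] [Algebra (Polynomial B) A]
    [IsLocalization.Away (f.map (algebraMap R B)) A]
    (P : Type*) [AddCommGroup P] [Module A P] [Module.Finite A P] [Module.Projective A P]
    (r : ℕ)
    (hrank : ∀ p : PrimeSpectrum A,
      Module.finrank (Localization.AtPrime p.asIdeal) (LocalizedModule p.asIdeal.primeCompl P)
        = r) :
    ∃ g : Fin (r + d) → P, Submodule.span A (Set.range g) = ⊤ := by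
  obtain ⟨e⟩ := frozen_equiv R m n B f A
  exact gen_final ((stepP_all hdim m n f hf).of_equiv e) hrank
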